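/- There exist functions c_1, c_0 : ℕ → ℝ such that, setting c_2(h) = (6/π²)·Σ_{d | h} 1/d, the following holds: for every ε > 0 there is C_ε > 0 such that for every real X ≥ 2 and every integer h with 1 ≤ h ≤ X^{1/2}, | Σ_{n ≤ X} τ(n)·τ(n+h) − X·( c_2(h)·(log X)² + c_1(h)·log X + c_0(h) ) | ≤ C_ε·X^{5/6+ε}. -/

import Mathlib

/-!
Write `Y = √X` and `v = X^(1/12)`, so that `X = v^12`, `Y = v^6` and the target error is
`v^10 X^ε`.

**Reduction to congruences.** Since `τ(n) = #{(c, d) : c d = n}`, the hyperbola method applied to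
the first factor turns the correlation into sums over `d ≤ Y` of `τ(m)` over `m ≡ h` modulo `d`, up
to an admissible error (`correlation_eq`). A second application of the hyperbola method leaves the
numbers of `b` in an initial interval with `a b ≡ h` modulo `d`, for `a, d ≤ Y` (`progTau_eq`).
Such a congruence is solvable only if `g = gcd (a, d)` divides `h`; sorting by `g` and dividing it
out (`sum_gcd_reindex`, `cnt_eq`), each count becomes `y / q` plus values of the sawtooth function
`{x} - 1/2` at points `y / q - l a⁻¹ / q`, where `h = g l`, `d = g q` and `a⁻¹` is the inverse
modulo `q`.

**The error term.** For each `q` the sawtooth sum over `a` is expanded in Fourier series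
(`saw_sum_le`). The resulting incomplete sums of `e(-k l a⁻¹ / q)`, twisted by the smooth phase
`e(k y / q)` with `y` proportional to `1 / a`, are completed to full Kloosterman sums
(`incomplete_kl_smooth`). Their size is controlled by Weil's bound at the primes dividing `q` exactly
once and trivially at all other primes. Individually this is weak when `q` has a large squareful
part, but such `q` are rare: writing `q = a² b³ c`, the average over `q` is as good as square root
cancellation (`kl_average`). Splitting `a` dyadically and choosing the length of the Fourier
expansion as `a / v^4` bounds everything by `v^10` times divisor functions and logarithms
(`saw_dyadic_le`, `progTau_sum_le`). The parameter `Λ` is an upper bound for `1 + log X` and for all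
divisor functions that occur; at the end it is a multiple of `X^(ε/8)`, by `divisor_bound`.

**Weil's bound.** For a field with `p^(2m)` elements, Stepanov's auxiliary polynomial bounds the
number of solutions of `Tr(x + a / x) = c` from above (`stepanov_count`); summing over `c` gives
`|K(F)| ≤ 4 p √|F| + 1` (`klField_le`). For the quadratic extension `L` of `F` one has
`K(L) = 2 |F| - K(F)²` (`kl_quadratic`): pairs `(x, y)` in `F²` with given sum and product, and
elements of `L` with given trace and norm, number two together. This relation multiplies by four
any relative excess of `|K|` over `2 √|F|`, so going up the tower of quadratic extensions contradicts
the first bound unless `|K| ≤ 2 √p` to begin with (`klField_prime`).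

**The main term.** Removing the coprimality of `a` and `q` with the Möbius function, the main terms
attached to one `g` become `X / g` times a truncated sum over `e` of `μ(e) / e²` times a quadratic
polynomial in `log (Y / (g e))`, the polynomial coming from the asymptotics of harmonic sums
(`mainM_combined`, `innerI_bound`). The full series converges fast enough to drop the truncation
(`truncated_main`), and its leading coefficient is `∑ μ(e) / e² = 6 / π²`. Summing over `g ∣ h` gives
`c2` as the leading coefficient and, as `c1` and `c0`, the sums of `coefOne g / g` and
`coefZero g / g` over `g ∣ h`.
-/

/-- `tauk k n` is the number of ordered `k`-tuples of positive integers with product `n`. -/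
def tauk (k n : ℕ) : ℕ :=
  ((Fintype.piFinset fun _ : Fin k => n.divisors).filter fun f => ∏ i, f i = n).card

/-- `c₂(h) = (6/π²)·Σ_{d | h} 1/d`. -/
noncomputable def c2 (h : ℕ) : ℝ :=
  (6 / Real.pi ^ 2) * ∑ d ∈ h.divisors, 1 / (d : ℝ)

/-! ### Stepanov's method for `Tr(x + a / x) = c` -/

open Polynomial Finset in
/-- The number of `x ≠ 0` with `Tr(x + a / x) = c` in a field with `Q ^ 2` elements, `Q = p ^ m`, is
at most `Q ^ 2 / p + 4 * Q`. The trace is written as `S + S ^ Q`. With `R = p ^ (m - 1)` and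
`U = x ^ R * S(x)`, the polynomials `x ^ i * U ^ j * x ^ (R * (p - 1 - j)) * x ^ (Q * r)`, with
`i < R`, `j < p`, have distinct degrees. At a solution `S ^ Q = c - S` and `x ^ (Q * Q) = x`, so their
`Q`-th powers agree, up to a common factor, with the values of polynomials of much smaller degree.
A nontrivial linear relation among the latter gives a nonzero polynomial that vanishes at all
solutions. -/
theorem stepanov_count {F : Type*} [Field F] [Fintype F] [DecidableEq F] (p m : ℕ)
    [Fact p.Prime] [CharP F p] (hm : 2 ≤ m) (hF : Fintype.card F = (p ^ m) ^ 2) (a c : F)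
    (ha : a ^ p = a) :
    #{x : F | x ≠ 0 ∧ (∑ i ∈ range m, (x + a * x⁻¹) ^ p ^ i) +
      (∑ i ∈ range m, (x + a * x⁻¹) ^ p ^ i) ^ p ^ m = c} ≤ p ^ (m - 1) * p ^ m + 4 * p ^ m := by
  classical
  have hp : p.Prime := Fact.out
  have hp2 : 2 ≤ p := hp.two_le
  obtain ⟨m', rfl⟩ : ∃ m', m = m' + 1 := ⟨m - 1, by omega⟩
  simp only [Nat.add_sub_cancel]
  set R := p ^ m' with hR
  set Q := p ^ (m' + 1) with hQ
  have hQR : Q = R * p := by rw [hQ, hR, pow_succ]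
  have hR1 : 1 ≤ R := Nat.one_le_pow _ _ (by omega)
  have hR2 : 2 ≤ R := by
    rw [hR]
    calc 2 ≤ p := hp2
      _ = p ^ 1 := (pow_one p).symm
      _ ≤ p ^ m' := Nat.pow_le_pow_right (by omega) (by omega)
  have hQ2 : 2 * R ≤ Q := by rw [hQR, mul_comm 2]; exact Nat.mul_le_mul_left _ hp2
  -- this choice gives the linear system below more unknowns than equations
  set M := R + 3 with hM
  set D := Q * R + Q + M with hD
  have hcard : D < R * (p * M) := by
    have : R * (p * M) = Q * M := by rw [hQR]; ring
    rw [this, hD, hM]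
    nlinarith
  -- the polynomial `x ^ R * S x`
  set U : F[X] := ∑ i ∈ range (m' + 1), (X ^ (R + p ^ i) + C a * X ^ (R - p ^ i)) with hU
  have hpi : ∀ i ∈ range (m' + 1), p ^ i ≤ R := fun i hi =>
    Nat.pow_le_pow_right (by omega) (by simpa [Nat.lt_succ_iff] using hi)
  have hUmonic : U.Monic ∧ U.natDegree = 2 * R := by
    have h1 : U = X ^ (2 * R) + (C a + ∑ i ∈ range m', (X ^ (R + p ^ i) + C a * X ^ (R - p ^ i))) := by
      rw [hU, sum_range_succ, ← hR]
      simp [two_mul]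
      ring
    have h2 : degree (C a + ∑ i ∈ range m', (X ^ (R + p ^ i) + C a * X ^ (R - p ^ i))) < ((2 * R : ℕ) : WithBot ℕ) := by
      apply lt_of_le_of_lt (degree_add_le _ _)
      rw [max_lt_iff]
      constructor
      · apply lt_of_le_of_lt degree_C_le
        exact_mod_cast (by omega : 0 < 2 * R)
      · refine (degree_sum_le _ _).trans_lt ?_
        rw [Finset.sup_lt_iff (WithBot.bot_lt_coe _)]
        intro i hi
        have hlt : p ^ i < R := Nat.pow_lt_pow_right (by omega) (by simpa using hi)
        apply lt_of_le_of_lt (degree_add_le _ _)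
        rw [max_lt_iff]
        constructor
        · rw [degree_X_pow]
          exact_mod_cast (by omega : R + p ^ i < 2 * R)
        · apply lt_of_le_of_lt (degree_C_mul_X_pow_le _ _)
          exact_mod_cast (by omega : R - p ^ i < 2 * R)
    rw [h1]
    exact ⟨monic_X_pow_add h2, by
      apply natDegree_eq_of_degree_eq_some
      rw [degree_add_eq_left_of_degree_lt] <;> rw [degree_X_pow]
      exact h2⟩
  obtain ⟨hUm, hUd⟩ := hUmonic
  let ι := Fin R × Fin p × Fin M
  let g : ι → F[X] := fun t => X ^ (t.1 : ℕ) * U ^ (t.2.1 : ℕ) * X ^ (R * (p - 1 - t.2.1)) * X ^ (Q * t.2.2)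
  let k : ι → F[X] := fun t => X ^ (Q * t.1) * (C c * X ^ R - U) ^ (t.2.1 : ℕ) *
    X ^ (R * (p - 1 - t.2.1)) * X ^ (t.2.2 : ℕ)
  have hpj : ∀ t : ι, R * (p - 1 - t.2.1) = R * p - R - R * t.2.1 := by
    intro t; rw [Nat.mul_sub, Nat.mul_sub, mul_one]
  have hRj : ∀ t : ι, R * t.2.1 + R ≤ R * p := by
    intro t
    have : (t.2.1 : ℕ) + 1 ≤ p := t.2.1.2
    nlinarith
  have hgm : ∀ t, (g t).Monic := fun t =>
    (((monic_X_pow _).mul (hUm.pow _)).mul (monic_X_pow _)).mul (monic_X_pow _)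
  have hgd : ∀ t, (g t).natDegree = (t.1 : ℕ) + R * t.2.1 + (Q - R) + Q * t.2.2 := by
    intro t
    have h1 := hpj t
    have h2 := hRj t
    simp only [g]
    rw [Monic.natDegree_mul (((monic_X_pow _).mul (hUm.pow _)).mul (monic_X_pow _)) (monic_X_pow _),
      Monic.natDegree_mul ((monic_X_pow _).mul (hUm.pow _)) (monic_X_pow _),
      Monic.natDegree_mul (monic_X_pow _) (hUm.pow _), hUm.natDegree_pow, hUd]
    simp only [natDegree_X_pow]
    rw [hQR, h1]
    have : (t.2.1 : ℕ) * (2 * R) = 2 * (R * t.2.1) := by ring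
    rw [this]
    omega
  have hkd : ∀ t, (k t).natDegree < D := by
    intro t
    have h1 := hpj t
    have h2 := hRj t
    have h3 : (C c * X ^ R - U).natDegree ≤ 2 * R := by
      refine (natDegree_sub_le _ _).trans ?_
      rw [hUd, max_le_iff]
      exact ⟨(natDegree_C_mul_X_pow_le _ _).trans (by omega), le_rfl⟩
    have h4 : ((C c * X ^ R - U) ^ (t.2.1 : ℕ)).natDegree ≤ 2 * (R * t.2.1) := by
      refine natDegree_pow_le.trans ?_
      calc (t.2.1 : ℕ) * (C c * X ^ R - U).natDegree ≤ t.2.1 * (2 * R) := Nat.mul_le_mul_left _ h3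
        _ = _ := by ring
    have h5 : (k t).natDegree ≤ Q * t.1 + 2 * (R * t.2.1) + R * (p - 1 - t.2.1) + t.2.2 := by
      refine natDegree_mul_le.trans ?_
      rw [natDegree_X_pow]
      gcongr
      refine natDegree_mul_le.trans ?_
      rw [natDegree_X_pow]
      gcongr
      refine natDegree_mul_le.trans ?_
      rw [natDegree_X_pow]
      gcongr
    have h6 : (t.1 : ℕ) + 1 ≤ R := t.1.2
    have h7 : Q * t.1 + Q ≤ Q * R := by nlinarith
    have h8 : (t.2.2 : ℕ) < M := t.2.2.2
    rw [h1] at h5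
    omega
  -- a nontrivial relation
  let Φ : (ι → F) →ₗ[F] (Fin D → F) :=
    { toFun := fun d n => (∑ t, C (d t) * k t).coeff n
      map_add' := by
        intro d e; ext n
        simp [add_mul, sum_add_distrib]
      map_smul' := by
        intro r d; ext n
        simp [mul_assoc, Finset.mul_sum] }
  have hker : LinearMap.ker Φ ≠ ⊥ := by
    apply LinearMap.ker_ne_bot_of_finrank_lt
    simp only [Module.finrank_fintype_fun_eq_card, Fintype.card_fin, ι, Fintype.card_prod]
    exact hcard
  obtain ⟨d, hd, hd0⟩ := (Submodule.ne_bot_iff _).1 hker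
  have hH : ∑ t, C (d t) * k t = 0 := by
    ext n
    by_cases hn : n < D
    · have := congrFun (LinearMap.mem_ker.1 hd) ⟨n, hn⟩
      simpa [Φ] using this
    · rw [coeff_eq_zero_of_natDegree_lt, coeff_zero]
      refine lt_of_lt_of_le ?_ (not_lt.1 hn)
      refine (natDegree_sum_le_of_forall_le (n := D - 1) _ _ ?_).trans_lt (by omega)
      intro t _
      refine (natDegree_C_mul_le _ _).trans ?_
      have := hkd t
      omega
  set G : F[X] := ∑ t, C (d t ^ Q) * g t with hG
  have hQ0 : Q ≠ 0 := by omega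
  have hG0 : G ≠ 0 := by
    intro h0
    obtain ⟨t0, ht0⟩ := Function.ne_iff.1 hd0
    have hdeg := degree_sum_eq_of_disjoint (fun t => C (d t ^ Q) * g t) univ (by
      intro s hs t ht hst
      simp only [Set.mem_ofPred_eq, mem_univ, true_and, ne_eq, mul_eq_zero, not_or] at hs ht
      simp only [Function.onFun, Function.comp]
      rw [degree_C_mul (by simpa using hs.1), degree_C_mul (by simpa using ht.1),
        degree_eq_natDegree (hgm s).ne_zero, degree_eq_natDegree (hgm t).ne_zero, hgd, hgd]
      intro heq
      apply hst
      -- the three indices are digits of the degree, to the bases `R` and `p`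
      have heq : (s.1 : ℕ) + R * s.2.1 + (Q - R) + Q * s.2.2 = (t.1 : ℕ) + R * t.2.1 + (Q - R) + Q * t.2.2 := by
        exact_mod_cast heq
      have e1 : (s.1 : ℕ) + R * (s.2.1 + p * s.2.2) = t.1 + R * (t.2.1 + p * t.2.2) := by
        rw [hQR] at heq
        have : ∀ x y : ℕ, R * (x + p * y) = R * x + R * p * y := by intros; ring
        rw [this, this]
        omega
      have hs1 := s.1.2
      have ht1 := t.1.2
      have e2 : (s.1 : ℕ) = t.1 := by
        have := congrArg (· % R) e1
        simpa [Nat.add_mul_mod_self_left, Nat.mod_eq_of_lt hs1, Nat.mod_eq_of_lt ht1] using this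
      have e3 : (s.2.1 : ℕ) + p * s.2.2 = t.2.1 + p * t.2.2 := by
        rw [e2] at e1
        exact Nat.eq_of_mul_eq_mul_left (by omega : 0 < R) (by omega)
      have e4 : (s.2.1 : ℕ) = t.2.1 := by
        have := congrArg (· % p) e3
        simpa [Nat.add_mul_mod_self_left, Nat.mod_eq_of_lt s.2.1.2, Nat.mod_eq_of_lt t.2.1.2] using this
      have e5 : (s.2.2 : ℕ) = t.2.2 := by
        rw [e4] at e3
        exact Nat.eq_of_mul_eq_mul_left (by omega : 0 < p) (by omega)
      exact Prod.ext (Fin.ext e2) (Prod.ext (Fin.ext e4) (Fin.ext e5)))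
    rw [← hG, h0, degree_zero] at hdeg
    have h1 := (Finset.sup_eq_bot_iff _ _).1 hdeg.symm t0 (mem_univ _)
    rw [degree_C_mul (pow_ne_zero _ (by simpa using ht0)), degree_eq_bot] at h1
    exact (hgm t0).ne_zero h1
  have hGd : G.natDegree ≤ R * Q + 4 * Q := by
    refine natDegree_sum_le_of_forall_le _ _ ?_
    intro t _
    refine (natDegree_C_mul_le _ _).trans ?_
    rw [hgd]
    have h2 := hRj t
    have h3 := t.1.2
    have h4 : (t.2.2 : ℕ) + 1 ≤ R + 3 := t.2.2.2
    have h5 : Q * t.2.2 + Q ≤ Q * R + 3 * Q := by nlinarith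
    have h6 : R * Q = Q * R := mul_comm _ _
    rw [← hQR] at h2
    omega
  have hroots : ∀ x ∈ ({x : F | x ≠ 0 ∧ (∑ i ∈ range (m' + 1), (x + a * x⁻¹) ^ p ^ i) +
      (∑ i ∈ range (m' + 1), (x + a * x⁻¹) ^ p ^ i) ^ Q = c} : Finset F), x ∈ G.roots.toFinset := by
    intro x hx
    simp only [mem_filter, mem_univ, true_and] at hx
    obtain ⟨hx0, hx⟩ := hx
    set S := ∑ i ∈ range (m' + 1), (x + a * x⁻¹) ^ p ^ i with hS
    rw [Multiset.mem_toFinset, mem_roots hG0, IsRoot.def]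
    have hUx : U.eval x = x ^ R * S := by
      rw [hU, eval_finsetSum, hS, Finset.mul_sum]
      refine sum_congr rfl fun i hi => ?_
      have h1 : (x + a * x⁻¹) ^ p ^ i = x ^ p ^ i + a * (x ^ p ^ i)⁻¹ := by
        rw [add_pow_char_pow, mul_pow, inv_pow]
        congr 2
        clear hi
        induction i with
        | zero => simp
        | succ i ih => rw [pow_succ, pow_mul, ih, ha]
      rw [h1]
      simp only [eval_add, eval_pow, eval_X, eval_mul, eval_C]
      rw [pow_add, pow_sub₀ x hx0 (hpi i hi)]
      ring
    have hfrob : ∀ y z : F, (y + z) ^ Q = y ^ Q + z ^ Q := fun y z => add_pow_char_pow y z p (m' + 1)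
    have hQQ : ∀ y : F, (y ^ Q) ^ Q = y := by
      intro y
      rw [← pow_mul, ← pow_two, ← hF, FiniteField.pow_card]
    have hsumpow : ∀ f : ι → F, (∑ t, f t) ^ Q = ∑ t, f t ^ Q := fun f =>
      sum_pow_char_pow p (m' + 1) univ f
    have hGQ : (G.eval x) ^ Q = x ^ (Q * (R * (p - 1))) * x⁻¹ ^ (R * (p - 1)) *  (∑ t, C (d t) * k t).eval x := by
      rw [hG, eval_finsetSum, hsumpow, eval_finsetSum, Finset.mul_sum]
      refine sum_congr rfl fun t _ => ?_
      simp only [g, k, eval_mul, eval_C, eval_pow, eval_X, eval_sub, mul_pow, hQQ, hUx]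
      have e1 : c * x ^ R - x ^ R * S = x ^ R * S ^ Q := by rw [← hx]; ring
      rw [e1]
      have e2 : R * (p - 1) = R * (p - 1 - t.2.1) + R * t.2.1 := by
        rw [← mul_add]; congr 1
        have := t.2.1.2
        omega
      rw [e2]
      simp only [mul_pow, inv_pow, ← pow_mul, pow_add, mul_add]
      have e3 : x ^ (Q * (t.2.2 : ℕ) * Q) = x ^ (t.2.2 : ℕ) := by
        rw [show Q * (t.2.2 : ℕ) * Q = t.2.2 * Q * Q by ring, pow_mul, pow_mul, hQQ]
      rw [e3]
      field_simp
      ring_nf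
    rw [hH, eval_zero, mul_zero] at hGQ
    exact pow_eq_zero_iff hQ0 |>.1 hGQ
  calc _ ≤ #G.roots.toFinset := card_le_card hroots
    _ ≤ G.roots.card := Multiset.toFinset_card_le _
    _ ≤ G.natDegree := card_roots' _
    _ ≤ _ := hGd

/-! ### Kloosterman sums and quadratic extensions -/

open Finset in
/-- A quadratic polynomial `T² - s T + t` over `F` has its two roots either in `F` or conjugate in
the quadratic extension `L`. A double root counts once on each side, as the pair `(x, x)` and as the
element `x` of `L`. -/
theorem fiber_count {F L : Type*} [Field F] [Fintype F] [DecidableEq F] [Field L] [Fintype L]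
    [DecidableEq L] [Algebra F L]
    (hodd : ringChar F ≠ 2) (hr : Module.finrank F L = 2) (s t : F) :
    #{u : F × F | (u.1 + u.2, u.1 * u.2) = (s, t)} +
      #{z : L | (Algebra.trace F L z, Algebra.norm F z) = (s, t)} = 2 := by
  classical
  set q := Fintype.card F with hq
  have hq' : Nat.card F = q := Nat.card_eq_fintype_card
  have htr : ∀ z : L, algebraMap F L (Algebra.trace F L z) = z + z ^ q := by
    intro z
    rw [FiniteField.algebraMap_trace_eq_sum_pow, hr, sum_range_succ, sum_range_one, hq']
    simp
  have hno : ∀ z : L, algebraMap F L (Algebra.norm F z) = z * z ^ q := by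
    intro z
    rw [FiniteField.algebraMap_norm_eq_prod_pow, hr, prod_range_succ, prod_range_one, hq']
    simp
  have hLc : Fintype.card L = q ^ 2 := by rw [Module.card_eq_pow_finrank (K := F), hr]
  have hinj := (algebraMap F L).injective
  have h2 : (2 : F) ≠ 0 := Ring.two_ne_zero hodd
  have h2L : (2 : L) ≠ 0 := by
    intro h; apply h2; apply hinj; rw [map_zero, ← h, map_ofNat]
  have hcharL : ringChar L ≠ 2 := by
    intro h
    apply h2L
    have : CharP L 2 := by rw [← h]; exact ringChar.charP L
    exact CharTwo.two_eq_zero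
  have hmem : ∀ z : L, z ∈ ({z : L | (Algebra.trace F L z, Algebra.norm F z) = (s, t)} : Finset L) ↔
      z + z ^ q = algebraMap F L s ∧ z * z ^ q = algebraMap F L t := by
    intro z
    rw [mem_filter, Prod.mk.injEq, ← htr, ← hno, hinj.eq_iff, hinj.eq_iff]
    simp
  have hqF : ∀ x : F, algebraMap F L x ^ q = algebraMap F L x := by
    intro x; rw [← map_pow, FiniteField.pow_card]
  have hqq : ∀ z : L, (z ^ q) ^ q = z := by
    intro z; rw [← pow_mul, ← pow_two, ← hLc, FiniteField.pow_card]
  obtain ⟨p, hpc⟩ := CharP.exists F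
  have hpp : Fact p.Prime := ⟨CharP.char_is_prime F p⟩
  have hpL : CharP L p := charP_of_injective_algebraMap hinj p
  obtain ⟨n, -, hqp⟩ := FiniteField.card F p
  have hadd : ∀ y z : L, (y + z) ^ q = y ^ q + z ^ q := by
    intro y z; rw [hq, hqp]; exact add_pow_char_pow y z p n
  have hsub : ∀ y z : L, (y - z) ^ q = y ^ q - z ^ q := by
    intro y z; rw [hq, hqp]; rw [eq_sub_iff_add_eq, ← hqp, ← hq, ← hadd, sub_add_cancel]
  set Δ := s ^ 2 - 4 * t with hΔ
  have hw : ∀ z : L, z + z ^ q = algebraMap F L s → z * z ^ q = algebraMap F L t →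
      (z - z ^ q) ^ 2 = algebraMap F L Δ ∧ (z - z ^ q) ^ q = -(z - z ^ q) := by
    intro z h h'
    constructor
    · rw [hΔ, map_sub, map_pow, map_mul, map_ofNat, ← h, ← h']; ring
    · rw [hsub, hqq]; ring
  by_cases hsq : IsSquare Δ
  · obtain ⟨d, hd⟩ := hsq
    have hA : ({u : F × F | (u.1 + u.2, u.1 * u.2) = (s, t)} : Finset (F × F)) =
        {((s + d) / 2, (s - d) / 2), ((s - d) / 2, (s + d) / 2)} := by
      ext ⟨x, y⟩
      simp only [mem_filter, mem_univ, true_and, mem_insert, mem_singleton, Prod.mk.injEq]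
      constructor
      · rintro ⟨rfl, rfl⟩
        have : (x - y - d) * (x - y + d) = 0 := by linear_combination hd
        rcases mul_eq_zero.1 this with h | h
        · left
          constructor
          · field_simp; linear_combination h
          · field_simp; linear_combination -h
        · right
          constructor
          · field_simp; linear_combination h
          · field_simp; linear_combination -h
      · have : t = (s ^ 2 - d * d) / 4 := by
          have h4 : (4 : F) ≠ 0 := by
            have : (4 : F) = 2 * 2 := by norm_num
            rw [this]; exact mul_ne_zero h2 h2
          field_simp
          linear_combination -hd
        have h4 : (4 : F) = 2 * 2 := by norm_num
        rw [this, h4]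
        rintro (⟨rfl, rfl⟩ | ⟨rfl, rfl⟩) <;> constructor <;> field_simp <;> ring
    rw [hA]
    by_cases hd0 : d = 0
    · have hB : ({z : L | (Algebra.trace F L z, Algebra.norm F z) = (s, t)} : Finset L) =
          {algebraMap F L (s / 2)} := by
        ext z
        rw [hmem, mem_singleton]
        constructor
        · rintro ⟨h, h'⟩
          have h1 := (hw z h h').1
          rw [hd, hd0, mul_zero, map_zero, sq_eq_zero_iff] at h1
          rw [map_div₀, ← h, ← sub_eq_zero.1 h1]
          rw [map_ofNat]; field_simp; ring
        · rintro rfl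
          rw [hqF, ← map_add, ← map_mul]
          constructor
          · congr 1; field_simp; ring
          · congr 1
            have h4 : (4 : F) ≠ 0 := by
              have : (4 : F) = 2 * 2 := by norm_num
              rw [this]; exact mul_ne_zero h2 h2
            rw [hd0] at hd
            field_simp
            linear_combination hd
      rw [hB, hd0]
      simp
    · have hB : ({z : L | (Algebra.trace F L z, Algebra.norm F z) = (s, t)} : Finset L) = ∅ := by
        ext z
        rw [hmem]
        simp only [notMem_empty, iff_false, not_and]
        intro h h'
        obtain ⟨h1, h3⟩ := hw z h h'
        rw [hd, map_mul] at h1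
        have : (z - z ^ q - algebraMap F L d) * (z - z ^ q + algebraMap F L d) = 0 := by
          linear_combination h1
        have h5 : (z - z ^ q) ^ q = z - z ^ q := by
          rcases mul_eq_zero.1 this with h | h
          · rw [sub_eq_zero.1 h, hqF]
          · rw [eq_neg_of_add_eq_zero_left h, ← map_neg, hqF]
        rw [h5] at h3
        have h6 : 2 * (z - z ^ q) = 0 := by linear_combination h3
        have h7 := (mul_eq_zero.1 h6).resolve_left h2L
        rw [h7] at h1
        apply hd0
        apply hinj
        rw [map_zero]
        have : algebraMap F L d * algebraMap F L d = 0 := by rw [← h1]; ring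
        simpa using this
      rw [hB, card_empty, add_zero, card_pair]
      intro h
      apply hd0
      have := (Prod.mk.inj h).1
      field_simp at this
      have h6 : 2 * d = 0 := by linear_combination this
      exact (mul_eq_zero.1 h6).resolve_left h2
  · have hΔ0 : Δ ≠ 0 := by rintro h; apply hsq; rw [h]; exact IsSquare.zero
    have hqodd : q % 2 = 1 := FiniteField.odd_card_of_char_ne_two hodd
    have hm1 : Δ ^ (q / 2) = -1 := by
      rcases FiniteField.pow_dichotomy hodd hΔ0 with h | h
      · exact absurd ((FiniteField.isSquare_iff hodd hΔ0).2 h) hsq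
      · exact h
    have hΔL : algebraMap F L Δ ≠ 0 := by simpa using hΔ0
    obtain ⟨δ, hδ⟩ : IsSquare (algebraMap F L Δ) := by
      rw [FiniteField.isSquare_iff hcharL hΔL, hLc]
      obtain ⟨r, hr⟩ : ∃ r, q = 2 * r + 1 := ⟨q / 2, by omega⟩
      have e1 : q ^ 2 / 2 = (q - 1) * (r + 1) := by
        have : q ^ 2 = 2 * ((q - 1) * (r + 1)) + 1 := by rw [hr]; simp; ring
        omega
      rw [e1, pow_mul, ← map_pow, FiniteField.pow_card_sub_one_eq_one _ hΔ0]
      simp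
    have hδq : δ ^ q = -δ := by
      have : q = 2 * (q / 2) + 1 := by omega
      rw [this, pow_succ, pow_mul, pow_two, ← hδ, ← map_pow, hm1]
      simp
    have hδ0 : δ ≠ 0 := by
      rintro rfl; simp at hδ; exact hΔ0 hδ
    have hA : ({u : F × F | (u.1 + u.2, u.1 * u.2) = (s, t)} : Finset (F × F)) = ∅ := by
      ext ⟨x, y⟩
      simp only [mem_filter, mem_univ, true_and, notMem_empty, iff_false, Prod.mk.injEq, not_and]
      rintro rfl rfl
      exact hsq ⟨x - y, by rw [hΔ]; ring⟩
    have hB : ({z : L | (Algebra.trace F L z, Algebra.norm F z) = (s, t)} : Finset L) =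
        {(algebraMap F L s + δ) / 2, (algebraMap F L s - δ) / 2} := by
      have h2q : (2 : L) ^ q = 2 := by
        have := hqF 2
        rwa [map_ofNat] at this
      ext z
      rw [hmem, mem_insert, mem_singleton]
      constructor
      · rintro ⟨h, h'⟩
        have h1 := (hw z h h').1
        rw [hδ] at h1
        have : (z - z ^ q - δ) * (z - z ^ q + δ) = 0 := by linear_combination h1
        rcases mul_eq_zero.1 this with h3 | h3
        · left; rw [← h]; field_simp; linear_combination h3
        · right; rw [← h]; field_simp; linear_combination h3
      · have h4 : (4 : L) ≠ 0 := by
          have : (4 : L) = 2 * 2 := by norm_num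
          rw [this]; exact mul_ne_zero h2L h2L
        have ht : algebraMap F L t = (algebraMap F L s ^ 2 - δ * δ) / 4 := by
          rw [← hδ, hΔ, map_sub, map_pow, map_mul, map_ofNat]; field_simp; ring
        rintro (rfl | rfl)
        · rw [div_pow, hadd, hqF, hδq, h2q, ht]
          constructor
          · field_simp; ring
          · field_simp; ring
        · rw [div_pow, hsub, hqF, hδq, h2q, ht]
          constructor
          · field_simp; ring
          · field_simp; ring
    rw [hA, hB, card_empty, zero_add, card_pair]
    intro h
    apply hδ0
    field_simp at h
    have h6 : 2 * δ = 0 := by linear_combination h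
    exact (mul_eq_zero.1 h6).resolve_left h2L

open Finset in
/-- Passing to the quadratic extension: both `K(F) ^ 2` and `K(L)` are sums of the same function of
`(s, t)`, taken at (sum, product) of pairs and at (trace, norm) of elements, so `fiber_count` evaluates
their sum. -/
theorem kl_quadratic {F L : Type*} [Field F] [Fintype F] [DecidableEq F] [Field L] [Fintype L]
    [DecidableEq L] [Algebra F L]
    (hodd : ringChar F ≠ 2) (hr : Module.finrank F L = 2) (φ : AddChar F ℂ) (hφ : φ ≠ 1) (a : F)
    (ha : a ≠ 0) :
    (∑ z : L with z ≠ 0, φ (Algebra.trace F L (z + algebraMap F L a * z⁻¹))) =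
      2 * Fintype.card F - (∑ x : F with x ≠ 0, φ (x + a * x⁻¹)) ^ 2 := by
  classical
  set q := Fintype.card F with hq
  have hq' : Nat.card F = q := Nat.card_eq_fintype_card
  have hinj := (algebraMap F L).injective
  let f : F × F → ℂ := fun u => if u.2 = 0 then 0 else φ (u.1 * (1 + a * u.2⁻¹))
  have h1 : (∑ x : F with x ≠ 0, φ (x + a * x⁻¹)) ^ 2 = ∑ u : F × F, f (u.1 + u.2, u.1 * u.2) := by
    rw [Fintype.sum_prod_type, pow_two, sum_mul_sum, sum_filter]
    refine sum_congr rfl fun x _ => ?_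
    rw [sum_filter]
    split_ifs with hx
    · refine sum_congr rfl fun y _ => ?_
      simp only [f]
      split_ifs with hy hy' hy'
      · simp_all
      · rw [← AddChar.map_add_eq_mul]
        congr 1
        field_simp
        ring
      · rfl
      · simp_all
    · rw [not_not] at hx
      simp [f, hx]
  have h2 : (∑ z : L with z ≠ 0, φ (Algebra.trace F L (z + algebraMap F L a * z⁻¹))) =
      ∑ z : L, f (Algebra.trace F L z, Algebra.norm F z) := by
    rw [sum_filter]
    refine sum_congr rfl fun z _ => ?_
    simp only [f]
    by_cases hz : z = 0
    · simp [hz]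
    · have hn : Algebra.norm F z ≠ 0 := by simpa [Algebra.norm_eq_zero_iff] using hz
      rw [if_pos hz, if_neg hn]
      congr 1
      apply hinj
      have htr : ∀ z : L, algebraMap F L (Algebra.trace F L z) = z + z ^ q := by
        intro z
        rw [FiniteField.algebraMap_trace_eq_sum_pow, hr, sum_range_succ, sum_range_one, hq']
        simp
      have hno : ∀ z : L, algebraMap F L (Algebra.norm F z) = z * z ^ q := by
        intro z
        rw [FiniteField.algebraMap_norm_eq_prod_pow, hr, prod_range_succ, prod_range_one, hq']
        simp
      have e1 : Algebra.trace F L (z + algebraMap F L a * z⁻¹) =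
          Algebra.trace F L z + a * Algebra.trace F L z⁻¹ := by
        rw [map_add, ← Algebra.smul_def, map_smul, smul_eq_mul]
      rw [e1, map_add, map_mul, map_mul, map_add, map_mul, map_inv₀ (algebraMap F L), htr, htr, hno, inv_pow, map_one]
      field_simp
      ring
  have h3 : ∑ u : F × F, f (u.1 + u.2, u.1 * u.2) + ∑ z : L, f (Algebra.trace F L z, Algebra.norm F z)
      = ∑ j : F × F, 2 * f j := by
    rw [← sum_fiberwise' univ (fun u : F × F => (u.1 + u.2, u.1 * u.2)) f,
      ← sum_fiberwise' univ (fun z : L => (Algebra.trace F L z, Algebra.norm F z)) f,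
      ← sum_add_distrib]
    refine sum_congr rfl fun j _ => ?_
    have := fiber_count (L := L) hodd hr j.1 j.2
    rw [sum_const, sum_const, ← add_smul]
    rw [show (2 : ℂ) * f j = (2 : ℕ) • f j by simp]
    congr 1
  have h4 : ∑ j : F × F, 2 * f j = 2 * q := by
    rw [← mul_sum, Fintype.sum_prod_type_right]
    congr 1
    rw [sum_eq_single (-a)]
    · simp [f, ha, hq]
    · intro t _ hta
      simp only [f]
      split_ifs with ht
      · simp
      · have hp : φ.IsPrimitive := AddChar.IsPrimitive.of_ne_one hφ
        rw [AddChar.sum_mulShift _ hp, if_neg]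
        · simp
        · intro h
          apply hta
          field_simp at h
          linear_combination h
    · simp
  rw [h1, h2, ← h4, ← h3]
  ring

/-! ### Weil's bound modulo a prime -/

/-- The Kloosterman sum `∑_{x ≠ 0} ψ(Tr(x + a / x))` over a finite extension `F` of `𝔽_p`. -/
noncomputable def klField {p : ℕ} (F : Type*) [Field F] [Fintype F] [Algebra (ZMod p) F]
    [Fact p.Prime] (ψ : AddChar (ZMod p) ℂ) (a : ZMod p) : ℂ :=
  open Classical in
  ∑ x : F with x ≠ 0, ψ (Algebra.trace (ZMod p) F (x + algebraMap (ZMod p) F a * x⁻¹))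

open Finset in
/-- The bound from `stepanov_count`. An upper bound `B` for the number of solutions `N c` of each
trace equation suffices, because `∑ c, N c * ψ c = -∑ c, (B - N c) * ψ c` has nonnegative
coefficients `B - N c` with a small total. -/
theorem klField_le {p m : ℕ} [Fact p.Prime] (F : Type*) [Field F] [Fintype F] [Algebra (ZMod p) F]
    (hm : 2 ≤ m) (hF : Fintype.card F = (p ^ m) ^ 2) (ψ : AddChar (ZMod p) ℂ) (hψ : ψ ≠ 1)
    (a : ZMod p) : ‖klField F ψ a‖ ≤ 4 * p * p ^ m + 1 := by
  classical
  have hp : p.Prime := Fact.out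
  have hinj := (algebraMap (ZMod p) F).injective
  have hch : CharP F p := charP_of_injective_algebraMap hinj p
  set aF := algebraMap (ZMod p) F a with haF
  have hfr : Module.finrank (ZMod p) F = m + m := by
    have := Module.card_eq_pow_finrank (K := ZMod p) (V := F)
    rw [hF, ZMod.card, ← pow_mul, mul_two] at this
    exact (Nat.pow_right_injective hp.two_le this).symm
  have htr : ∀ w : F, algebraMap (ZMod p) F (Algebra.trace (ZMod p) F w) =
      (∑ i ∈ range m, w ^ p ^ i) + (∑ i ∈ range m, w ^ p ^ i) ^ p ^ m := by
    intro w
    rw [FiniteField.algebraMap_trace_eq_sum_pow, hfr, sum_range_add, Nat.card_zmod]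
    congr 1
    rw [sum_pow_char_pow]
    refine sum_congr rfl fun i _ => ?_
    rw [← pow_mul, pow_add, mul_comm]
  let N : ZMod p → ℕ := fun c =>
    #{x ∈ ({x : F | x ≠ 0} : Finset F) | Algebra.trace (ZMod p) F (x + aF * x⁻¹) = c}
  have hsum : klField F ψ a = ∑ c, (N c : ℂ) * ψ c := by
    rw [klField, ← sum_fiberwise' _ (fun x : F => Algebra.trace (ZMod p) F (x + aF * x⁻¹)) ψ]
    refine sum_congr rfl fun c _ => ?_
    rw [sum_const, nsmul_eq_mul]
  have hNtot : ∑ c, N c = Fintype.card F - 1 := by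
    rw [← card_eq_sum_card_fiberwise (fun x _ => mem_univ _)]
    rw [filter_ne', card_erase_of_mem (mem_univ _), card_univ]
  set B : ℕ := p ^ (m - 1) * p ^ m + 4 * p ^ m with hB
  have hN : ∀ c, N c ≤ B := by
    intro c
    refine le_trans (le_of_eq ?_) (stepanov_count (F := F) p m hm hF aF (algebraMap (ZMod p) F c) ?_)
    · simp only [N]
      rw [filter_filter]
      congr 1
      ext x
      simp only [mem_filter, mem_univ, true_and]
      rw [← htr, hinj.eq_iff]
    · rw [haF, ← map_pow, ZMod.pow_card]
  have hpB : p * B = (p ^ m) ^ 2 + 4 * p * p ^ m := by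
    obtain ⟨m', rfl⟩ : ∃ m', m = m' + 1 := ⟨m - 1, by omega⟩
    rw [hB]; simp; ring
  have h1 : klField F ψ a = -∑ c, ((B : ℂ) - N c) * ψ c := by
    simp_rw [sub_mul]
    rw [sum_sub_distrib, ← mul_sum, AddChar.sum_eq_zero_of_ne_one hψ, hsum]
    ring
  rw [h1, norm_neg]
  calc ‖∑ c, ((B : ℂ) - N c) * ψ c‖ ≤ ∑ c, ‖((B : ℂ) - N c) * ψ c‖ := norm_sum_le _ _
    _ = ∑ c, ((B : ℝ) - N c) := by
      refine sum_congr rfl fun c _ => ?_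
      rw [norm_mul, AddChar.norm_apply, mul_one]
      rw [show ((B : ℂ) - N c) = (((B : ℝ) - N c : ℝ) : ℂ) by push_cast; rfl, Complex.norm_real,
        Real.norm_of_nonneg]
      have : (N c : ℝ) ≤ B := by exact_mod_cast hN c
      linarith
    _ = p * B - (Fintype.card F - 1) := by
      rw [sum_sub_distrib, sum_const, card_univ, ZMod.card, nsmul_eq_mul, ← Nat.cast_sum, hNtot,
        Nat.cast_sub Fintype.card_pos]
      simp
    _ = 4 * p * p ^ m + 1 := by
      rw [hF]
      have : (p : ℝ) * B = (p ^ m) ^ 2 + 4 * p * p ^ m := by exact_mod_cast hpB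
      rw [this]; push_cast; ring

/-- Passing to the quadratic extension replaces `K` by `2 q - K ^ 2`. -/
theorem klField_extension {p : ℕ} [Fact p.Prime] (hp2 : p ≠ 2) (F : Type) [Field F] [Fintype F]
    [Algebra (ZMod p) F] (ψ : AddChar (ZMod p) ℂ) (hψ : ψ ≠ 1) (a : ZMod p) (ha : a ≠ 0) :
    ∃ (L : Type) (_ : Field L) (_ : Fintype L) (_ : Algebra (ZMod p) L),
      Fintype.card L = Fintype.card F ^ 2 ∧
      klField L ψ a = 2 * Fintype.card F - klField F ψ a ^ 2 := by
  classical
  have hinj := (algebraMap (ZMod p) F).injective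
  have hch : CharP F p := charP_of_injective_algebraMap hinj p
  let L := FiniteField.Extension F p 2
  have hfin : Fintype L := Fintype.ofFinite L
  refine ⟨L, inferInstance, hfin, inferInstance, ?_, ?_⟩
  · rw [← Nat.card_eq_fintype_card, ← Nat.card_eq_fintype_card]
    exact FiniteField.natCard_extension F p 2
  · let φ : AddChar F ℂ := ψ.compAddMonoidHom (Algebra.trace (ZMod p) F).toAddMonoidHom
    have hφ : φ ≠ 1 := by
      intro h
      apply hψ
      ext c
      obtain ⟨x, rfl⟩ := Algebra.trace_surjective (ZMod p) F c
      have := DFunLike.congr_fun h x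
      simpa [φ] using this
    have hr : Module.finrank F L = 2 := FiniteField.finrank_extension F p 2
    have hodd : ringChar F ≠ 2 := by
      rw [ringChar.eq F p]; exact hp2
    have ha' : algebraMap (ZMod p) F a ≠ 0 := by simpa using ha
    have := kl_quadratic (L := L) hodd hr φ hφ (algebraMap (ZMod p) F a) ha'
    rw [klField, klField]
    have e1 : ∀ y : L, ψ (Algebra.trace (ZMod p) L y) = φ (Algebra.trace F L y) := by
      intro y
      simp only [φ, AddChar.compAddMonoidHom_apply]
      congr 1
      exact (Algebra.trace_trace (R := ZMod p) (S := F) _).symm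
    simp only [e1]
    rw [IsScalarTower.algebraMap_apply (ZMod p) F L]
    exact this

/-- Weil's bound over the prime field. If `|K| = (2 + x) * √p` with `x > 0`, then after `k`
quadratic extensions `|K| ≥ (2 + 4 ^ k * x) * √|F|`, which contradicts `klField_le` for large `k`. -/
theorem klField_prime {p : ℕ} [Fact p.Prime] (hp2 : p ≠ 2)
    (ψ : AddChar (ZMod p) ℂ) (hψ : ψ ≠ 1) (a : ZMod p) (ha : a ≠ 0) :
    ‖klField (ZMod p) ψ a‖ ≤ 2 * √p := by
  by_contra! hcon
  have hp : p.Prime := Fact.out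
  have hp0 : (0 : ℝ) < p := by exact_mod_cast hp.pos
  have hs0 : 0 < √(p : ℝ) := Real.sqrt_pos.2 hp0
  obtain ⟨x, hx, hx'⟩ : ∃ x : ℝ, 0 < x ∧ ‖klField (ZMod p) ψ a‖ = (2 + x) * √p := by
    refine ⟨‖klField (ZMod p) ψ a‖ / √p - 2, ?_, ?_⟩
    · rw [sub_pos, lt_div_iff₀ hs0]; exact hcon
    · field_simp; ring
  have key : ∀ k : ℕ, ∃ (L : Type) (_ : Field L) (_ : Fintype L) (_ : Algebra (ZMod p) L),
      Fintype.card L = p ^ 2 ^ k ∧ (2 + 4 ^ k * x) * √(p ^ 2 ^ k : ℝ) ≤ ‖klField L ψ a‖ := by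
    intro k
    induction k with
    | zero => exact ⟨ZMod p, inferInstance, inferInstance, inferInstance, by simp [ZMod.card], by simp [hx']⟩
    | succ k ih =>
      obtain ⟨F, _, _, _, hc, hle⟩ := ih
      obtain ⟨L, i1, i2, i3, hc', hK⟩ := klField_extension hp2 F ψ hψ a ha
      refine ⟨L, i1, i2, i3, ?_, ?_⟩
      · rw [hc', hc, ← pow_mul, pow_succ]
      · rw [hK]
        set K := klField F ψ a
        have h1 : ‖K‖ ^ 2 - 2 * (Fintype.card F : ℝ) ≤ ‖2 * (Fintype.card F : ℂ) - K ^ 2‖ := by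
          have := norm_sub_norm_le (K ^ 2) (2 * (Fintype.card F : ℂ))
          rw [norm_sub_rev, norm_pow] at this
          simpa using this
        refine le_trans ?_ h1
        have h2 : √((p : ℝ) ^ 2 ^ (k + 1)) = (p : ℝ) ^ 2 ^ k := by
          rw [pow_succ, pow_mul, Real.sqrt_sq (by positivity)]
        rw [h2, hc]
        push_cast
        have h3 : ((2 + 4 ^ k * x) * √(p ^ 2 ^ k : ℝ)) ^ 2 ≤ ‖K‖ ^ 2 := by
          gcongr
        rw [mul_pow, Real.sq_sqrt (by positivity)] at h3
        have h4 : 0 < (p : ℝ) ^ 2 ^ k := by positivity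
        have h5 : (0 : ℝ) ≤ (4 ^ k * x) ^ 2 * (p : ℝ) ^ 2 ^ k := by positivity
        rw [pow_succ]
        nlinarith
  obtain ⟨k, hk⟩ := pow_unbounded_of_one_lt ((4 * p + 1) / x) (by norm_num : (1 : ℝ) < 4)
  obtain ⟨L, i1, i2, i3, hc, hle⟩ := key (k + 2)
  have h6 : Fintype.card L = (p ^ 2 ^ (k + 1)) ^ 2 := by
    rw [hc, ← pow_mul]; congr 1
  have h7 := klField_le L (Nat.le_self_pow (by omega) 2 : 2 ≤ 2 ^ (k + 1)) h6 ψ hψ a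
  have h8 : √((p : ℝ) ^ 2 ^ (k + 2)) = (p : ℝ) ^ 2 ^ (k + 1) := by
    rw [pow_succ 2 (k + 1), pow_mul, Real.sqrt_sq (by positivity)]
  rw [h8] at hle
  have h9 : (1 : ℝ) ≤ (p : ℝ) ^ 2 ^ (k + 1) := one_le_pow₀ (by exact_mod_cast hp.one_le)
  have h10 : (2 + 4 ^ (k + 2) * x) * (p : ℝ) ^ 2 ^ (k + 1) ≤ (4 * p + 1) * p ^ 2 ^ (k + 1) := by
    refine (hle.trans h7).trans ?_
    nlinarith
  have h11 := le_of_mul_le_mul_right h10 (by linarith)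
  rw [div_lt_iff₀ hx] at hk
  have h12 : (4 : ℝ) ^ k * x ≤ 4 ^ (k + 2) * x := by
    have : (4 : ℝ) ^ k ≤ 4 ^ (k + 2) := pow_le_pow_right₀ (by norm_num) (by omega)
    gcongr
  linarith

/-- Weil's bound for Kloosterman sums modulo a prime, the second character being arbitrary. -/
theorem kloosterman_prime {p : ℕ} [Fact p.Prime] (ψ₁ ψ₂ : AddChar (ZMod p) ℂ) (h₁ : ψ₁ ≠ 1) :
    ‖∑ u : (ZMod p)ˣ, ψ₁ u * ψ₂ (u⁻¹ : (ZMod p)ˣ)‖ ≤ 2 * √p := by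
  classical
  have hp : p.Prime := Fact.out
  have hs1 : 1 ≤ √(p : ℝ) := Real.one_le_sqrt.2 (by exact_mod_cast hp.one_le)
  have hprim : ψ₁.IsPrimitive := AddChar.IsPrimitive.of_ne_one h₁
  have hunits : ∀ f : ZMod p → ℂ, ∑ u : (ZMod p)ˣ, f u = ∑ x : ZMod p with x ≠ 0, f x := by
    intro f
    refine Finset.sum_bij (fun u _ => (u : ZMod p)) ?_ ?_ ?_ ?_
    · intro u _
      simp only [Finset.mem_filter, Finset.mem_univ, true_and]
      exact u.ne_zero
    · intro u _ v _ h
      exact Units.ext h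
    · intro x hx
      exact ⟨Units.mk0 x (by simpa using hx), Finset.mem_univ _, rfl⟩
    · intro u _
      rfl
  by_cases hp2 : p = 2
  · subst hp2
    refine (norm_sum_le _ _).trans ?_
    have : Fintype.card (ZMod 2)ˣ = 1 := by rw [ZMod.card_units_eq_totient]; rfl
    have h1 : ∀ u : (ZMod 2)ˣ, ‖ψ₁ u * ψ₂ (u⁻¹ : (ZMod 2)ˣ)‖ = 1 := fun u => by
      rw [norm_mul, AddChar.norm_apply, AddChar.norm_apply, one_mul]
    rw [Finset.sum_congr rfl fun u _ => h1 u, Finset.sum_const, Finset.card_univ, this]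
    rw [one_smul]
    linarith
  · obtain ⟨a, rfl⟩ : ∃ a, ψ₂ = AddChar.mulShift ψ₁ a := by
      have := (Fintype.bijective_iff_injective_and_card (AddChar.mulShift ψ₁)).2
        ⟨AddChar.to_mulShift_inj_of_isPrimitive hprim, by rw [AddChar.card_eq]⟩
      obtain ⟨a, ha⟩ := this.2 ψ₂
      exact ⟨a, ha.symm⟩
    by_cases ha : a = 0
    · subst ha
      simp only [AddChar.mulShift_zero, AddChar.one_apply, mul_one]
      rw [hunits ψ₁, Finset.filter_ne', Finset.sum_erase_eq_sub (Finset.mem_univ _),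
        AddChar.sum_eq_zero_of_ne_one h₁]
      simp; linarith
    · refine le_trans (le_of_eq ?_) (klField_prime hp2 ψ₁ h₁ a ha)
      rw [klField]
      congr 1
      have := hunits (fun x => ψ₁ x * ψ₁ (a * x⁻¹))
      simp only [AddChar.mulShift_apply]
      simp only [Units.val_inv_eq_inv_val]
      rw [this]
      refine Finset.sum_congr (by congr) fun x _ => ?_
      rw [← AddChar.map_add_eq_mul]
      simp [Algebra.trace_self]

/-! ### Kloosterman sums for composite moduli -/

/-- The Kloosterman sum over the units of a finite commutative ring. -/
noncomputable def klUnits {R : Type*} [CommRing R] [Fintype Rˣ] (ψ₁ ψ₂ : AddChar R ℂ) : ℂ :=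
  ∑ u : Rˣ, ψ₁ u * ψ₂ (u⁻¹ : Rˣ)

theorem klUnits_equiv {R S : Type*} [CommRing R] [Fintype Rˣ] [CommRing S] [Fintype Sˣ]
    (e : R ≃+* S) (ψ₁ ψ₂ : AddChar S ℂ) :
    klUnits (ψ₁.compAddMonoidHom e.toRingHom.toAddMonoidHom)
      (ψ₂.compAddMonoidHom e.toRingHom.toAddMonoidHom) = klUnits ψ₁ ψ₂ := by
  unfold klUnits
  refine Fintype.sum_equiv (Units.mapEquiv e.toMulEquiv).toEquiv _ _ fun u => ?_
  rfl

/-- Twisted multiplicativity of Kloosterman sums. Allowing arbitrary additive characters removes the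
twists by inverses of the complementary modulus. -/
theorem klUnits_prod {R S : Type*} [CommRing R] [Fintype Rˣ] [CommRing S] [Fintype Sˣ]
    [Fintype (R × S)ˣ] (ψ₁ ψ₂ : AddChar (R × S) ℂ) :
    klUnits ψ₁ ψ₂ =
      klUnits (ψ₁.compAddMonoidHom (AddMonoidHom.inl R S))
        (ψ₂.compAddMonoidHom (AddMonoidHom.inl R S)) *
      klUnits (ψ₁.compAddMonoidHom (AddMonoidHom.inr R S))
        (ψ₂.compAddMonoidHom (AddMonoidHom.inr R S)) := by
  unfold klUnits
  rw [Finset.sum_mul_sum, ← Fintype.sum_prod_type' (fun (u : Rˣ) (v : Sˣ) =>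
    ((ψ₁.compAddMonoidHom (AddMonoidHom.inl R S)) u * (ψ₂.compAddMonoidHom (AddMonoidHom.inl R S)) (u⁻¹ : Rˣ)) *
    ((ψ₁.compAddMonoidHom (AddMonoidHom.inr R S)) v * (ψ₂.compAddMonoidHom (AddMonoidHom.inr R S)) (v⁻¹ : Sˣ)))]
  refine Fintype.sum_equiv MulEquiv.prodUnits.toEquiv _ _ fun u => ?_
  have h : ∀ (ψ : AddChar (R × S) ℂ) (x : R × S), ψ x = ψ (x.1, 0) * ψ (0, x.2) := by
    intro ψ x
    rw [← AddChar.map_add_eq_mul]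
    simp
  rw [h ψ₁ u, h ψ₂]
  simp [MulEquiv.prodUnits]
  ring

theorem klUnits_norm_le {R : Type*} [CommRing R] [Fintype R] [Fintype Rˣ] (ψ₁ ψ₂ : AddChar R ℂ) :
    ‖klUnits ψ₁ ψ₂‖ ≤ Fintype.card R := by
  refine (norm_sum_le _ _).trans ?_
  have h1 : ∀ u : Rˣ, ‖ψ₁ u * ψ₂ (u⁻¹ : Rˣ)‖ = 1 := fun u => by
    rw [norm_mul, AddChar.norm_apply, AddChar.norm_apply, one_mul]
  rw [Finset.sum_congr rfl fun u _ => h1 u, Finset.sum_const, Finset.card_univ, nsmul_eq_mul, mul_one]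
  exact_mod_cast Fintype.card_le_of_injective _ Units.val_injective

/-- A bound for Kloosterman sums modulo `q = a ^ 2 * b ^ 3 * c`, obtained by using Weil's bound at
the primes dividing `q` exactly once and the trivial bound at the other prime powers. The number `m`
collects the primes at which `ψ₁` is degenerate. -/
theorem kloosterman_composite (q : ℕ) (hq : 0 < q) : ∃ a b c : ℕ, q = a ^ 2 * b ^ 3 * c ∧
    ∀ (m : ℕ) [NeZero q] (ψ₁ ψ₂ : AddChar (ZMod q) ℂ),
      (∀ p : ℕ, p.Prime → p ∣ q → ψ₁ ^ (q / p) = 1 → p ∣ m) →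
      ‖klUnits ψ₁ ψ₂‖ ≤ q.divisors.card * ((a : ℝ) ^ 2 * b ^ 3) * (√c * √(m.gcd c)) := by
  induction q using Nat.recOnPosPrimePosCoprime with
  | zero => omega
  | one =>
    refine ⟨1, 1, 1, by norm_num, fun m _ ψ₁ ψ₂ _ => ?_⟩
    refine (klUnits_norm_le _ _).trans ?_
    simp [ZMod.card]
  | prime_pow p j hp hj =>
    have : Fact p.Prime := ⟨hp⟩
    have hdiv : (2 : ℝ) ≤ (p ^ j).divisors.card := by
      rw [Nat.divisors_prime_pow hp]
      simp
      have : (1 : ℝ) ≤ j := by exact_mod_cast hj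
      linarith
    have htriv : ∀ [NeZero (p ^ j)] (ψ₁ ψ₂ : AddChar (ZMod (p ^ j)) ℂ),
        ‖klUnits ψ₁ ψ₂‖ ≤ (p : ℝ) ^ j := by
      intro _ ψ₁ ψ₂
      refine (klUnits_norm_le _ _).trans ?_
      simp [ZMod.card]
    have hpj : (0 : ℝ) ≤ (p : ℝ) ^ j := by positivity
    rcases Nat.even_or_odd j with ⟨i, rfl⟩ | ⟨i, rfl⟩
    · refine ⟨p ^ i, 1, 1, by ring, fun m _ ψ₁ ψ₂ _ => ?_⟩
      refine (htriv _ _).trans ?_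
      simp only [Nat.cast_pow, Nat.cast_one, one_pow, mul_one, Real.sqrt_one, Nat.gcd_one_right]
      rw [← pow_mul, mul_two]
      nlinarith
    · obtain rfl | hi := Nat.eq_zero_or_pos i
      · refine ⟨1, 1, p, by ring, fun m _ ψ₁ ψ₂ h => ?_⟩
        simp only [mul_zero, zero_add] at *
        by_cases hm : p ∣ m
        · refine (htriv _ _).trans ?_
          rw [Nat.gcd_eq_right hm, Real.mul_self_sqrt (by positivity)]
          simp only [Nat.cast_one, one_pow, mul_one, pow_one] at *
          nlinarith
        · have h1 : ψ₁ ≠ 1 := by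
            intro h1
            exact hm (h p hp (by simp) (by rw [h1, one_pow]))
          have key : ∀ q : ℕ, q = p → ∀ [NeZero q] (ψ₁ ψ₂ : AddChar (ZMod q) ℂ), ψ₁ ≠ 1 →
              ‖klUnits ψ₁ ψ₂‖ ≤ 2 * √p := by
            rintro q rfl _ ψ₁ ψ₂ h1
            refine le_trans (le_of_eq ?_) (kloosterman_prime ψ₁ ψ₂ h1)
            unfold klUnits
            congr!
          refine (key _ (pow_one p) _ _ h1).trans ?_
          have hg : (1 : ℝ) ≤ √(m.gcd p) := by
            rw [Real.one_le_sqrt]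
            exact_mod_cast Nat.gcd_pos_of_pos_right _ hp.pos
          simp only [Nat.cast_one, one_pow, mul_one]
          gcongr
          exact le_mul_of_one_le_right (by positivity) hg
      · obtain ⟨i, rfl⟩ : ∃ k, i = k + 1 := ⟨i - 1, by omega⟩
        refine ⟨p ^ i, p, 1, by ring, fun m _ ψ₁ ψ₂ _ => ?_⟩
        refine (htriv _ _).trans ?_
        simp only [Nat.cast_pow, Nat.cast_one, mul_one, Real.sqrt_one, Nat.gcd_one_right]
        rw [show ((p : ℝ) ^ i) ^ 2 * p ^ 3 = p ^ (2 * (i + 1) + 1) by ring]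
        nlinarith
  | coprime q₁ q₂ h₁ h₂ hcop ih₁ ih₂ =>
    obtain ⟨a₁, b₁, c₁, hq₁, ih₁⟩ := ih₁ (by omega)
    obtain ⟨a₂, b₂, c₂, hq₂, ih₂⟩ := ih₂ (by omega)
    refine ⟨a₁ * a₂, b₁ * b₂, c₁ * c₂, by rw [hq₁, hq₂]; ring, fun m _ ψ₁ ψ₂ h => ?_⟩
    have i1 : NeZero q₁ := ⟨by omega⟩
    have i2 : NeZero q₂ := ⟨by omega⟩
    let e := ZMod.chineseRemainder hcop
    obtain ⟨φ₁, rfl⟩ : ∃ φ : AddChar (ZMod q₁ × ZMod q₂) ℂ,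
        ψ₁ = φ.compAddMonoidHom e.toRingHom.toAddMonoidHom :=
      ⟨ψ₁.compAddMonoidHom e.symm.toRingHom.toAddMonoidHom, by
        ext x; simp⟩
    obtain ⟨φ₂, rfl⟩ : ∃ φ : AddChar (ZMod q₁ × ZMod q₂) ℂ,
        ψ₂ = φ.compAddMonoidHom e.toRingHom.toAddMonoidHom :=
      ⟨ψ₂.compAddMonoidHom e.symm.toRingHom.toAddMonoidHom, by
        ext x; simp⟩
    classical
    rw [klUnits_equiv, klUnits_prod, norm_mul]
    have hsplit : ∀ (ψ : AddChar (ZMod q₁ × ZMod q₂) ℂ) x, ψ x = ψ (x.1, 0) * ψ (0, x.2) := by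
      intro ψ x
      rw [← AddChar.map_add_eq_mul]
      simp
    have H1 := ih₁ m (φ₁.compAddMonoidHom (AddMonoidHom.inl _ _))
      (φ₂.compAddMonoidHom (AddMonoidHom.inl _ _)) (by
        intro p hp hpq h1
        refine h p hp (hpq.mul_right _) ?_
        ext x
        rw [AddChar.pow_apply, AddChar.compAddMonoidHom_apply, hsplit, mul_pow]
        have h2 : ∀ y, φ₁ (0, y) ^ q₂ = 1 := by
          intro y
          rw [← AddChar.map_nsmul_eq_pow]
          simp [← Prod.zero_eq_mk]
        have h3 : ∀ y, φ₁ (y, 0) ^ (q₁ / p) = 1 := by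
          intro y
          simpa using DFunLike.congr_fun h1 y
        rw [Nat.mul_div_right_comm hpq, pow_mul, h3, mul_comm (q₁ / p), pow_mul _ q₂, h2]
        simp)
    have H2 := ih₂ m (φ₁.compAddMonoidHom (AddMonoidHom.inr _ _))
      (φ₂.compAddMonoidHom (AddMonoidHom.inr _ _)) (by
        intro p hp hpq h1
        refine h p hp (hpq.mul_left _) ?_
        ext x
        rw [AddChar.pow_apply, AddChar.compAddMonoidHom_apply, hsplit, mul_pow]
        have h2 : ∀ y, φ₁ (y, 0) ^ q₁ = 1 := by
          intro y
          rw [← AddChar.map_nsmul_eq_pow]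
          simp [← Prod.zero_eq_mk]
        have h3 : ∀ y, φ₁ (0, y) ^ (q₂ / p) = 1 := by
          intro y
          simpa using DFunLike.congr_fun h1 y
        rw [Nat.mul_div_assoc _ hpq, pow_mul _ q₁, h2, mul_comm q₁ (q₂ / p), pow_mul, h3]
        simp)
    have hc : c₁.Coprime c₂ := by
      refine Nat.Coprime.coprime_dvd_left ?_ (Nat.Coprime.coprime_dvd_right ?_ hcop)
      · rw [hq₁]; exact Dvd.intro_left _ rfl
      · rw [hq₂]; exact Dvd.intro_left _ rfl
    rw [Nat.Coprime.card_divisors_mul hcop, hc.gcd_mul]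
    refine (mul_le_mul H1 H2 (norm_nonneg _) (by positivity)).trans (le_of_eq ?_)
    push_cast
    rw [Real.sqrt_mul (by positivity), Real.sqrt_mul (by positivity)]
    ring

/-! ### The divisor bound -/

open Finset in
/-- `τ(n) ≪ n ^ ε`, proved prime power by prime power: only the primes below `2 ^ (1 / ε)` cost a
constant factor. -/
theorem divisor_bound (ε : ℝ) (hε : 0 < ε) :
    ∃ C : ℝ, 1 ≤ C ∧ ∀ n : ℕ, 0 < n → (n.divisors.card : ℝ) ≤ C * (n : ℝ) ^ ε := by
  have hl2 : 0 < Real.log 2 := Real.log_pos (by norm_num)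
  set P : ℕ := ⌈(2 : ℝ) ^ (1 / ε)⌉₊ with hP
  set C₀ : ℝ := 1 + 1 / (ε * Real.log 2) with hC₀
  have hC₀1 : 1 ≤ C₀ := by
    have : 0 ≤ 1 / (ε * Real.log 2) := by positivity
    linarith
  have hloc : ∀ p a : ℕ, p.Prime →
      ((a + 1 : ℕ) : ℝ) ≤ (if p < P then C₀ else 1) * ((p ^ a : ℕ) : ℝ) ^ ε := by
    intro p a hp
    have h2p : (2 : ℝ) ≤ p := by exact_mod_cast hp.two_le
    push_cast
    rw [← Real.rpow_natCast, ← Real.rpow_mul (by positivity), mul_comm (a : ℝ) ε,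
      Real.rpow_mul (by positivity), Real.rpow_natCast]
    split_ifs with h
    · have h1 : (1 + a * (ε * Real.log 2)) ≤ ((p : ℝ) ^ ε) ^ a := by
        have h2 : 1 + ε * Real.log 2 ≤ (p : ℝ) ^ ε := by
          have : Real.exp (ε * Real.log 2) ≤ (p : ℝ) ^ ε := by
            rw [mul_comm, Real.exp_mul, Real.exp_log (by norm_num)]
            gcongr
          have := Real.add_one_le_exp (ε * Real.log 2)
          linarith
        calc _ ≤ (1 + ε * Real.log 2) ^ a :=
              one_add_mul_le_pow (by nlinarith [mul_pos hε hl2]) a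
          _ ≤ _ := by gcongr
      refine le_trans ?_ (mul_le_mul_of_nonneg_left h1 (by linarith))
      rw [hC₀]
      have h3 : (1 + 1 / (ε * Real.log 2)) * (1 + a * (ε * Real.log 2)) =
          1 + a + a * (ε * Real.log 2) + 1 / (ε * Real.log 2) := by
        field_simp; ring
      rw [h3]
      have : 0 ≤ a * (ε * Real.log 2) := by positivity
      have : 0 ≤ 1 / (ε * Real.log 2) := by positivity
      linarith
    · have h2 : (2 : ℝ) ≤ (p : ℝ) ^ ε := by
        have h3 : (2 : ℝ) ^ (1 / ε) ≤ p := (Nat.le_ceil _).trans (by exact_mod_cast not_lt.1 h)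
        calc (2 : ℝ) = ((2 : ℝ) ^ (1 / ε)) ^ ε := by
              rw [← Real.rpow_mul (by norm_num), one_div, inv_mul_cancel₀ hε.ne', Real.rpow_one]
          _ ≤ _ := by gcongr
      rw [one_mul]
      calc (a : ℝ) + 1 ≤ 2 ^ a := by exact_mod_cast Nat.lt_two_pow_self
        _ ≤ _ := by gcongr
  refine ⟨C₀ ^ P, one_le_pow₀ hC₀1, fun n hn => ?_⟩
  rw [Nat.card_divisors hn.ne']
  push_cast
  calc ∏ p ∈ n.primeFactors, ((n.factorization p : ℝ) + 1)
      ≤ ∏ p ∈ n.primeFactors, ((if p < P then C₀ else 1) * ((p ^ n.factorization p : ℕ) : ℝ) ^ ε) := by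
        refine prod_le_prod (fun _ _ => by positivity) fun p hp => ?_
        have := hloc p (n.factorization p) (Nat.prime_of_mem_primeFactors hp)
        push_cast at this ⊢
        exact this
    _ = (∏ p ∈ n.primeFactors, (if p < P then C₀ else 1)) * (n : ℝ) ^ ε := by
        rw [prod_mul_distrib, Real.finset_prod_rpow _ _ (fun _ _ => by positivity)]
        congr 2
        rw [← Nat.cast_prod]
        congr 1
        exact Nat.prod_factorization_pow_eq_self hn.ne'
    _ ≤ C₀ ^ P * (n : ℝ) ^ ε := by
        gcongr
        rw [prod_ite, prod_const, prod_const_one, mul_one]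
        refine pow_le_pow_right₀ hC₀1 ?_
        refine (card_le_card (t := range P) fun x hx => ?_).trans (by simp)
        simp at hx ⊢
        exact hx.2

/-! ### The sawtooth function and a truncated Fourier expansion -/

/-- `ee x = exp (2 π i x)`. -/
noncomputable def ee (x : ℝ) : ℂ := Complex.exp (2 * Real.pi * x * Complex.I)

theorem ee_add (x y : ℝ) : ee (x + y) = ee x * ee y := by
  rw [ee, ee, ee, ← Complex.exp_add]; congr 1; push_cast; ring

theorem ee_zero : ee 0 = 1 := by simp [ee]

theorem norm_ee (x : ℝ) : ‖ee x‖ = 1 := by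
  rw [ee, show 2 * (Real.pi : ℂ) * x * Complex.I = ((2 * Real.pi * x : ℝ) : ℂ) * Complex.I by
    push_cast; ring, Complex.norm_exp_ofReal_mul_I]

theorem ee_int (n : ℤ) : ee n = 1 := by
  rw [ee, Complex.exp_eq_one_iff]
  exact ⟨n, by push_cast; ring⟩

theorem ee_add_int (x : ℝ) (n : ℤ) : ee (x + n) = ee x := by rw [ee_add, ee_int, mul_one]

theorem ee_natCast_mul_add (k : ℕ) (x : ℝ) (n : ℤ) : ee (k * (x + n)) = ee (k * x) := by
  rw [mul_add, show (k : ℝ) * n = ((k * n : ℤ) : ℝ) by push_cast; ring, ee_add_int]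

theorem ee_re (x : ℝ) : (ee x).re = Real.cos (2 * Real.pi * x) := by
  rw [ee, show 2 * (Real.pi : ℂ) * x * Complex.I = ((2 * Real.pi * x : ℝ) : ℂ) * Complex.I by
    push_cast; ring, Complex.exp_ofReal_mul_I_re]

theorem norm_ee_sub_one_le (x : ℝ) : ‖ee x - 1‖ ≤ 2 * Real.pi * |x| := by
  rw [ee, show 2 * (Real.pi : ℂ) * x * Complex.I = Complex.I * ((2 * Real.pi * x : ℝ) : ℂ) by
    push_cast; ring]
  refine Real.norm_exp_I_mul_ofReal_sub_one_le.trans (le_of_eq ?_)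
  rw [Real.norm_eq_abs, abs_mul, abs_of_pos (by positivity)]

theorem norm_ee_sub_le (x y : ℝ) : ‖ee x - ee y‖ ≤ 2 * Real.pi * |x - y| := by
  have : ee x - ee y = ee y * (ee (x - y) - 1) := by
    rw [mul_sub, ← ee_add]; simp
  rw [this, norm_mul, norm_ee, one_mul]
  exact norm_ee_sub_one_le _

/-- The sawtooth function. -/
noncomputable def saw (x : ℝ) : ℝ := Int.fract x - 1 / 2

theorem abs_saw_le (x : ℝ) : |saw x| ≤ 1 / 2 := by
  rw [saw, abs_le]
  have := Int.fract_nonneg x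
  have := Int.fract_lt_one x
  constructor <;> linarith

/-- The periodic antiderivative of the sawtooth function. -/
noncomputable def sawInt (x : ℝ) : ℝ := (Int.fract x ^ 2 - Int.fract x + 1 / 6) / 2

theorem sawInt_hasSum (x : ℝ) :
    HasSum (fun n : ℕ => 1 / (n : ℝ) ^ 2 * (ee (n * x)).re) (2 * Real.pi ^ 2 * sawInt x) := by
  have h := hasSum_one_div_nat_pow_mul_cos one_ne_zero (x := Int.fract x)
    ⟨Int.fract_nonneg x, (Int.fract_lt_one x).le⟩
  have e : 2 * Real.pi ^ 2 * sawInt x = (-1) ^ (1 + 1) * (2 * Real.pi) ^ (2 * 1) / 2 /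
      ((2 * 1).factorial : ℝ) * Polynomial.eval (Int.fract x)
        (Polynomial.map (algebraMap ℚ ℝ) (Polynomial.bernoulli (2 * 1))) := by
    simp [Polynomial.bernoulli, Finset.sum_range_succ, _root_.bernoulli, sawInt]
    ring
  rw [e]
  refine (congrArg (HasSum · _) (funext fun n => ?_)).mpr h
  have hx : ee (n * x) = ee (n * Int.fract x) := by
    conv_lhs => rw [← Int.fract_add_floor x]
    exact ee_natCast_mul_add _ _ _
  rw [hx, ee_re, mul_one, mul_assoc (2 * Real.pi)]

/-- The sawtooth function has slope one and only downward jumps, so it exceeds, up to `δ / 2`, its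
mean over `[x, x + δ]`, which is a difference quotient of `sawInt`. -/
theorem saw_ge (x δ : ℝ) (h0 : 0 < δ) (h1 : δ ≤ 1) :
    (sawInt (x + δ) - sawInt x) / δ - δ / 2 ≤ saw x := by
  have hf0 := Int.fract_nonneg x
  have hf1 := Int.fract_lt_one x
  have hx := Int.fract_add_floor x
  rw [sub_le_iff_le_add, div_le_iff₀ h0, saw]
  by_cases hc : Int.fract x + δ < 1
  · have : Int.fract (x + δ) = Int.fract x + δ := by
      rw [Int.fract_eq_iff]
      exact ⟨by linarith, hc, ⌊x⌋, by linarith⟩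
    rw [sawInt, sawInt, this]
    nlinarith
  · have : Int.fract (x + δ) = Int.fract x + δ - 1 := by
      rw [Int.fract_eq_iff]
      exact ⟨by linarith, by linarith, ⌊x⌋ + 1, by push_cast; linarith⟩
    rw [sawInt, sawInt, this]
    nlinarith

theorem saw_le (x δ : ℝ) (h0 : 0 < δ) (h1 : δ ≤ 1) :
    saw x ≤ (sawInt x - sawInt (x - δ)) / δ + δ / 2 := by
  have hf0 := Int.fract_nonneg x
  have hf1 := Int.fract_lt_one x
  have hx := Int.fract_add_floor x
  rw [← sub_le_iff_le_add, le_div_iff₀ h0, saw]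
  by_cases hc : 0 ≤ Int.fract x - δ
  · have : Int.fract (x - δ) = Int.fract x - δ := by
      rw [Int.fract_eq_iff]
      exact ⟨by linarith, by linarith, ⌊x⌋, by linarith⟩
    rw [sawInt, sawInt, this]
    nlinarith
  · have : Int.fract (x - δ) = Int.fract x - δ + 1 := by
      rw [Int.fract_eq_iff]
      exact ⟨by linarith, by linarith, ⌊x⌋ - 1, by push_cast; linarith⟩
    rw [sawInt, sawInt, this]
    nlinarith

open Finset in
/-- The Fourier series of the increments of `sawInt`; the terms beyond `J ^ 2` are bounded trivially
and give `#s / J`. -/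
theorem sawInt_sum_le {ι : Type*} (s : Finset ι) (x : ι → ℝ) (δ : ℝ) (J : ℕ) (hJ : 0 < J)
    (hδ : |δ| = 1 / J) :
    |∑ i ∈ s, (sawInt (x i + δ) - sawInt (x i))| * J ≤
      #s / J + ∑ k ∈ Icc 1 (J ^ 2), min (1 / (k : ℝ)) (J / (k : ℝ) ^ 2) * ‖∑ i ∈ s, ee (k * x i)‖ := by
  have hJ0 : (0 : ℝ) < J := by exact_mod_cast hJ
  have hJ1 : (1 : ℝ) ≤ J := by exact_mod_cast hJ
  have hpi := Real.pi_gt_three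
  let S : ℕ → ℂ := fun k => ∑ i ∈ s, ee (k * x i)
  have hSN : ∀ k, ‖S k‖ ≤ #s := fun k => by
    refine (norm_sum_le _ _).trans ?_
    simp [norm_ee]
  have hsum : HasSum (fun n : ℕ => 1 / (n : ℝ) ^ 2 * ((ee (n * δ) - 1) * S n).re)
      (2 * Real.pi ^ 2 * ∑ i ∈ s, (sawInt (x i + δ) - sawInt (x i))) := by
    rw [mul_sum]
    have := hasSum_sum (s := s) fun i _ => (sawInt_hasSum (x i + δ)).sub (sawInt_hasSum (x i))
    simp_rw [← mul_sub, ← mul_sum] at this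
    rw [mul_sum] at this
    refine (congrArg (HasSum · _) (funext fun n => ?_)).mpr this
    congr 1
    simp only [S]
    rw [mul_sum, Complex.re_sum]
    refine sum_congr rfl fun i _ => ?_
    rw [← Complex.sub_re, mul_add, ee_add]
    congr 1
    ring
  set b : ℕ → ℝ := fun k => min (1 / (k : ℝ)) (J / (k : ℝ) ^ 2) with hb
  have hb0 : ∀ k, 0 ≤ b k := fun k => by simp only [b]; positivity
  have hterm : ∀ n : ℕ, |1 / (n : ℝ) ^ 2 * ((ee (n * δ) - 1) * S n).re| ≤
      2 * Real.pi ^ 2 / J * (b n * ‖S n‖) := by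
    intro n
    rcases Nat.eq_zero_or_pos n with rfl | hn
    · simp [b]
    have hn0 : (0 : ℝ) < n := by exact_mod_cast hn
    have h1 : |((ee (n * δ) - 1) * S n).re| ≤ ‖ee (n * δ) - 1‖ * ‖S n‖ := by
      rw [← norm_mul]; exact Complex.abs_re_le_norm _
    rw [abs_mul, abs_of_nonneg (by positivity : (0 : ℝ) ≤ 1 / (n : ℝ) ^ 2)]
    have h2 : ‖ee (n * δ) - 1‖ ≤ 2 := by
      refine (norm_sub_le _ _).trans ?_
      rw [norm_ee]; norm_num
    have h3 : ‖ee (n * δ) - 1‖ ≤ 2 * Real.pi * (n * (1 / J)) := by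
      refine (norm_ee_sub_one_le _).trans ?_
      rw [abs_mul, hδ, Nat.abs_cast]
    have h4 : 1 / (n : ℝ) ^ 2 * ‖ee (n * δ) - 1‖ ≤ 2 * Real.pi ^ 2 / J * b n := by
      have e1 : 1 / (n : ℝ) ^ 2 * ‖ee (n * δ) - 1‖ ≤ 2 * Real.pi ^ 2 / J * (1 / n) := by
        calc _ ≤ 1 / (n : ℝ) ^ 2 * (2 * Real.pi * (n * (1 / J))) := by gcongr
          _ = 2 * Real.pi / J * (1 / n) := by field_simp
          _ ≤ _ := by gcongr; nlinarith
      have e2 : 1 / (n : ℝ) ^ 2 * ‖ee (n * δ) - 1‖ ≤ 2 * Real.pi ^ 2 / J * (J / n ^ 2) := by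
        calc _ ≤ 1 / (n : ℝ) ^ 2 * 2 := by gcongr
          _ = 2 / J * (J / n ^ 2) := by field_simp
          _ ≤ _ := by gcongr; nlinarith
      simp only [b]
      rcases min_choice (1 / (n : ℝ)) (J / (n : ℝ) ^ 2) with h | h <;> rw [h] <;> assumption
    calc _ ≤ 1 / (n : ℝ) ^ 2 * (‖ee (n * δ) - 1‖ * ‖S n‖) := by gcongr
      _ = (1 / (n : ℝ) ^ 2 * ‖ee (n * δ) - 1‖) * ‖S n‖ := by ring
      _ ≤ _ := by rw [← mul_assoc]; gcongr
  have hpart : ∀ n : ℕ, |∑ k ∈ range n, 1 / (k : ℝ) ^ 2 * ((ee (k * δ) - 1) * S k).re| ≤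
      2 * Real.pi ^ 2 / J * (#s / J + ∑ k ∈ Icc 1 (J ^ 2), b k * ‖S k‖) := by
    intro n
    refine (abs_sum_le_sum_abs _ _).trans ?_
    refine (sum_le_sum fun k _ => hterm k).trans ?_
    rw [← mul_sum]
    gcongr
    have hsub : range n ⊆ insert 0 (Icc 1 (J ^ 2) ∪ Ioc (J ^ 2) (J ^ 2 + n)) := by
      intro k hk
      simp at hk ⊢
      omega
    refine (sum_le_sum_of_subset_of_nonneg hsub fun k _ _ => mul_nonneg (hb0 k) (norm_nonneg _)).trans ?_
    rw [sum_insert (by simp), sum_union (by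
      rw [disjoint_left]; intro k; simp; omega)]
    have hz : b 0 * ‖S 0‖ = 0 := by simp [b]
    rw [hz, zero_add, add_comm]
    gcongr
    calc ∑ k ∈ Ioc (J ^ 2) (J ^ 2 + n), b k * ‖S k‖
        ≤ ∑ k ∈ Ioc (J ^ 2) (J ^ 2 + n), J * #s * ((k : ℝ) ^ 2)⁻¹ := by
          refine sum_le_sum fun k _ => ?_
          calc b k * ‖S k‖ ≤ (J / (k : ℝ) ^ 2) * #s :=
                mul_le_mul (min_le_right _ _) (hSN k) (norm_nonneg _) (by positivity)
            _ = _ := by ring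
      _ ≤ J * #s * (((J ^ 2 : ℕ) : ℝ)⁻¹ - ((J ^ 2 + n : ℕ) : ℝ)⁻¹) := by
          rw [← mul_sum]
          gcongr
          exact sum_Ioc_inv_sq_le_sub (by positivity) (by omega)
      _ ≤ J * #s * ((J ^ 2 : ℕ) : ℝ)⁻¹ := by
          gcongr
          have : 0 ≤ ((J ^ 2 + n : ℕ) : ℝ)⁻¹ := by positivity
          linarith
      _ = _ := by push_cast; field_simp
  have hlim := le_of_tendsto (hsum.tendsto_sum_nat.abs) (Filter.Eventually.of_forall hpart)
  rw [abs_mul, abs_of_pos (by positivity)] at hlim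
  have h5 : 2 * Real.pi ^ 2 / J * (|∑ i ∈ s, (sawInt (x i + δ) - sawInt (x i))| * J) ≤
      2 * Real.pi ^ 2 / J * (#s / J + ∑ k ∈ Icc 1 (J ^ 2), b k * ‖S k‖) := by
    refine le_trans (le_of_eq ?_) hlim
    field_simp
  exact le_of_mul_le_mul_left h5 (by positivity)

open Finset in
/-- A form of the Erdős–Turán inequality, proved from the Fourier series of the antiderivative of
the sawtooth function. -/
theorem saw_sum_le {ι : Type*} (s : Finset ι) (x : ι → ℝ) (J : ℕ) (hJ : 0 < J) :
    |∑ i ∈ s, saw (x i)| ≤ 2 * #s / J +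
      ∑ k ∈ Icc 1 (J ^ 2), min (1 / (k : ℝ)) (J / (k : ℝ) ^ 2) * ‖∑ i ∈ s, ee (k * x i)‖ := by
  have hJ0 : (0 : ℝ) < J := by exact_mod_cast hJ
  have hJ1 : (1 : ℝ) ≤ J := by exact_mod_cast hJ
  have hδ1 : 1 / (J : ℝ) ≤ 1 := by rw [div_le_one hJ0]; exact hJ1
  have hN : (0 : ℝ) ≤ #s / J := by positivity
  have e : (2 * #s / J : ℝ) = 2 * (#s / J) := by ring
  have u := sawInt_sum_le s x (1 / J) J hJ (abs_of_pos (by positivity))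
  have l := sawInt_sum_le s x (-(1 / J)) J hJ (by rw [abs_neg]; exact abs_of_pos (by positivity))
  rw [abs_le]
  constructor
  · have h1 := sum_le_sum fun i (_ : i ∈ s) => saw_ge (x i) (1 / J) (by positivity) hδ1
    rw [sum_sub_distrib, ← sum_div, sum_const, nsmul_eq_mul, div_div_eq_mul_div, div_one] at h1
    have h2 := (neg_le_neg u).trans ((neg_mul _ _).symm.le.trans (mul_le_mul_of_nonneg_right (neg_abs_le _) hJ0.le))
    have h3 : (#s : ℝ) * (1 / J / 2) = #s / J / 2 := by ring
    rw [h3] at h1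
    rw [e]
    linarith
  · have h1 := sum_le_sum fun i (_ : i ∈ s) => saw_le (x i) (1 / J) (by positivity) hδ1
    rw [sum_add_distrib, ← sum_div, sum_const, nsmul_eq_mul, div_div_eq_mul_div, div_one] at h1
    have h2 := (neg_le_neg l).trans ((neg_mul _ _).symm.le.trans (mul_le_mul_of_nonneg_right (neg_abs_le _) hJ0.le))
    have h3 : (#s : ℝ) * (1 / J / 2) = #s / J / 2 := by ring
    rw [h3] at h1
    have h4 : (∑ i ∈ s, (sawInt (x i + -(1 / (J : ℝ))) - sawInt (x i))) =
      - ∑ i ∈ s, (sawInt (x i) - sawInt (x i - 1 / J)) := by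
      rw [← sum_neg_distrib]
      refine sum_congr rfl fun i _ => ?_
      rw [← sub_eq_add_neg]; ring
    rw [h4] at h2
    rw [e]
    linarith

/-! ### The `L¹` norm of a discrete Fourier transform -/

open Finset in
/-- Every absolute least residue is attained at most twice. -/
theorem zmod_sum_natAbs_le (q : ℕ) [NeZero q] (f : ℕ → ℝ) (hf : Antitone f) (hf0 : ∀ j, 0 ≤ f j) :
    ∑ v : ZMod q, f v.valMinAbs.natAbs ≤ 2 * ∑ j ∈ range q, f j := by
  have hval : ∀ g : ℕ → ℝ, ∑ v : ZMod q, g v.val = ∑ j ∈ range q, g j := by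
    intro g
    obtain ⟨n, rfl⟩ : ∃ n, q = n + 1 := ⟨q - 1, by have := NeZero.pos q; omega⟩
    exact Fin.sum_univ_eq_sum_range g (n + 1)
  have h1 : ∀ v : ZMod q, f v.valMinAbs.natAbs ≤ f v.val + f (q - 1 - v.val) := by
    intro v
    rw [ZMod.valMinAbs_natAbs_eq_min]
    rcases min_choice v.val (q - v.val) with h | h <;> rw [h]
    · exact le_add_of_nonneg_right (hf0 _)
    · exact (hf (by omega)).trans (le_add_of_nonneg_left (hf0 _))
  refine (sum_le_sum fun v _ => h1 v).trans ?_
  rw [sum_add_distrib, hval, hval (fun j => f (q - 1 - j)), sum_range_reflect, two_mul]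

/-- The chord bound `|e(v / q) - 1| ≥ 4 * ‖v / q‖`, with `‖·‖` the distance to the nearest
integer. -/
theorem stdAddChar_sub_one_ge (q : ℕ) [NeZero q] (v : ZMod q) :
    4 * (v.valMinAbs.natAbs : ℝ) ≤ q * ‖ZMod.stdAddChar v - 1‖ := by
  have hq : (0 : ℝ) < q := by exact_mod_cast NeZero.pos q
  set n := v.valMinAbs with hn
  have hv : (n : ZMod q) = v := ZMod.coe_valMinAbs v
  have hle : (n.natAbs : ℝ) ≤ q / 2 := by
    have h1 : n.natAbs ≤ q / 2 := ZMod.natAbs_valMinAbs_le v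
    have h2 : n.natAbs * 2 ≤ q := by omega
    have h3 : (n.natAbs : ℝ) * 2 ≤ q := by exact_mod_cast h2
    linarith
  rw [← hv, ZMod.stdAddChar_coe, show 2 * (Real.pi : ℂ) * Complex.I * n / q =
    Complex.I * ((2 * Real.pi * n / q : ℝ) : ℂ) by push_cast; ring,
    Complex.norm_exp_I_mul_ofReal_sub_one, Real.norm_eq_abs, abs_mul]
  have hpi := Real.pi_pos
  have h4 : |Real.sin (2 * Real.pi * n / q / 2)| = Real.sin (Real.pi * n.natAbs / q) := by
    have e : |2 * Real.pi * n / q / 2| = Real.pi * n.natAbs / q := by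
      rw [Nat.cast_natAbs, Int.cast_abs]
      rw [show 2 * Real.pi * n / q / 2 = Real.pi * n / q by ring, abs_div, abs_mul,
        abs_of_pos hpi, abs_of_pos hq]
    have hle' : Real.pi * n.natAbs / q ≤ Real.pi := by
      rw [div_le_iff₀ hq]; nlinarith
    rw [Real.abs_sin_eq_sin_abs_of_abs_le_pi (by rw [e]; exact hle'), e]
  rw [h4, abs_two]
  have h5 := Real.mul_le_sin (x := Real.pi * n.natAbs / q) (by positivity) (by
    rw [div_le_iff₀ hq]; nlinarith)
  have h6 : 2 / Real.pi * (Real.pi * n.natAbs / q) = 2 * n.natAbs / q := by field_simp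
  rw [h6, div_le_iff₀ hq] at h5
  nlinarith

open Finset ComplexConjugate in
theorem zmod_parseval (q : ℕ) [NeZero q] (s : Finset ℕ)
    (hs : Set.InjOn (fun a : ℕ => (a : ZMod q)) s) (G : ℕ → ℂ) :
    ∑ v : ZMod q, ‖∑ a ∈ s, G a * ZMod.stdAddChar (v * (a : ZMod q))‖ ^ 2 = q * ∑ a ∈ s, ‖G a‖ ^ 2 := by
  classical
  have h : (∑ v : ZMod q, ((‖∑ a ∈ s, G a * ZMod.stdAddChar (v * (a : ZMod q))‖ ^ 2 : ℝ) : ℂ)) =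
      q * ∑ a ∈ s, ((‖G a‖ ^ 2 : ℝ) : ℂ) := by
    have e : ∀ v : ZMod q, ((‖∑ a ∈ s, G a * ZMod.stdAddChar (v * (a : ZMod q))‖ ^ 2 : ℝ) : ℂ) =
        ∑ a ∈ s, ∑ b ∈ s, G a * conj (G b) * ZMod.stdAddChar (v * ((a : ZMod q) - (b : ZMod q))) := by
      intro v
      rw [Complex.ofReal_pow, ← Complex.mul_conj', map_sum, sum_mul_sum]
      refine sum_congr rfl fun a _ => sum_congr rfl fun b _ => ?_
      rw [map_mul (starRingEnd ℂ), ← AddChar.map_neg_eq_conj, mul_sub, sub_eq_add_neg, AddChar.map_add_eq_mul]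
      ring
    rw [sum_congr rfl fun v _ => e v, sum_comm, mul_sum]
    refine sum_congr rfl fun a ha => ?_
    rw [sum_comm, sum_eq_single a]
    · rw [← mul_sum, AddChar.sum_mulShift _ (ZMod.isPrimitive_stdAddChar q)]
      simp [ZMod.card, Complex.mul_conj', mul_comm]
    · intro b hb hba
      rw [← mul_sum, AddChar.sum_mulShift _ (ZMod.isPrimitive_stdAddChar q), if_neg]
      · simp
      · intro h0
        exact hba (hs hb ha (sub_eq_zero.1 h0).symm)
    · intro h; exact absurd ha h
  exact_mod_cast h

open Finset in
/-- Summation by parts: the transform of `F` at `v`, multiplied by `e(v / q) - 1`, is the negative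
of the transform of the differences of `F`, plus boundary terms. -/
theorem summation_by_parts_char (q : ℕ) [NeZero q] (v : ZMod q) (F : ℕ → ℂ) (n m : ℕ) (h : n ≤ m) :
    (ZMod.stdAddChar v - 1) * ∑ a ∈ Ico n (m + 1), F a * ZMod.stdAddChar (v * (a : ZMod q)) =
      F m * ZMod.stdAddChar (v * ((m + 1 : ℕ) : ZMod q)) - F n * ZMod.stdAddChar (v * (n : ZMod q)) -
      ∑ a ∈ Ico (n + 1) (m + 1), (F a - F (a - 1)) * ZMod.stdAddChar (v * (a : ZMod q)) := by
  have hs : ∀ a : ℕ, ZMod.stdAddChar (v * ((a + 1 : ℕ) : ZMod q)) = ZMod.stdAddChar v * ZMod.stdAddChar (v * (a : ZMod q)) := by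
    intro a
    rw [← AddChar.map_add_eq_mul]
    congr 1; push_cast; ring
  induction m, h using Nat.le_induction with
  | base => rw [hs n]; simp; ring
  | succ m hm ih =>
    rw [sum_Ico_succ_top (by omega : n ≤ m + 1), sum_Ico_succ_top (by omega : n + 1 ≤ m + 1), mul_add,
      ih, hs (m + 1)]
    simp only [Nat.add_sub_cancel]
    ring

open Finset in
/-- An `L¹` bound for the discrete Fourier transform of a slowly varying function on an interval. -/
theorem completion_l1 (q : ℕ) [NeZero q] (n m : ℕ) (F : ℕ → ℂ) (L η : ℝ) (hL : ((m - n : ℕ) : ℝ) ≤ L)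
    (hq : m - n ≤ q) (hη : 0 ≤ η) (hF : ∀ a ∈ Ico n m, ‖F a‖ ≤ 1)
    (hF' : ∀ a ∈ Ico (n + 1) m, ‖F a - F (a - 1)‖ ≤ η) :
    ∑ v : ZMod q, ‖∑ a ∈ Ico n m, F a * ZMod.stdAddChar (v * (a : ZMod q))‖ ≤
      3 * √(η * q + 1) * √(q * L) + q * (1 + Real.log q) := by
  have hq0 : (0 : ℝ) < q := by exact_mod_cast NeZero.pos q
  have hq1 : (1 : ℝ) ≤ q := by exact_mod_cast NeZero.pos q
  have hlog : 0 ≤ Real.log q := Real.log_nonneg hq1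
  rcases Nat.lt_or_ge n m with hnm | hnm
  swap
  · rw [Ico_eq_empty (by omega)]
    simp only [sum_empty, norm_zero, sum_const_zero]
    positivity
  obtain ⟨m, rfl⟩ : ∃ k, m = k + 1 := ⟨m - 1, by omega⟩
  have hL0 : 0 ≤ L := le_trans (by positivity) hL
  set T : ℝ := η * q + 1 with hT
  have hT1 : 1 ≤ T := by have : 0 ≤ η * q := by positivity
                         linarith
  have hT0 : 0 < T := by linarith
  let Fh : ZMod q → ℂ := fun v => ∑ a ∈ Ico n (m + 1), F a * ZMod.stdAddChar (v * (a : ZMod q))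
  let Gh : ZMod q → ℂ := fun v => ∑ a ∈ Ico (n + 1) (m + 1), (F a - F (a - 1)) * ZMod.stdAddChar (v * (a : ZMod q))
  have hinj : Set.InjOn (fun a : ℕ => (a : ZMod q)) (Ico n (m + 1)) := by
    intro a ha b hb hab
    simp only [coe_Ico, Set.mem_Ico] at ha hb
    have h1 : (a : ZMod q) = b := hab
    rw [ZMod.natCast_eq_natCast_iff] at h1
    rcases le_total a b with h | h
    · have h2 := (Nat.modEq_iff_dvd' h).1 h1
      have := Nat.eq_zero_of_dvd_of_lt h2 (by omega)
      omega
    · have h2 := (Nat.modEq_iff_dvd' h).1 h1.symm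
      have := Nat.eq_zero_of_dvd_of_lt h2 (by omega)
      omega
  have hcard : (#(Ico n (m + 1)) : ℝ) ≤ L := by rw [Nat.card_Ico]; exact hL
  have hPF : ∑ v, ‖Fh v‖ ^ 2 ≤ q * L := by
    rw [zmod_parseval q _ hinj]
    gcongr
    refine le_trans (sum_le_card_nsmul _ _ 1 fun a ha => ?_) (by simpa using hcard)
    have := hF a ha
    exact pow_le_one₀ (norm_nonneg _) this
  have hPG : ∑ v, ‖Gh v‖ ^ 2 ≤ q * L * η ^ 2 := by
    have hsub : Ico (n + 1) (m + 1) ⊆ Ico n (m + 1) := Ico_subset_Ico (by omega) le_rfl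
    rw [zmod_parseval q _ (hinj.mono (by exact_mod_cast hsub)) (fun a => F a - F (a - 1)), mul_assoc]
    gcongr
    refine le_trans (sum_le_card_nsmul _ _ (η ^ 2) fun a ha => ?_) ?_
    · have := hF' a ha
      gcongr
    · rw [nsmul_eq_mul]
      gcongr
      exact le_trans (by exact_mod_cast card_le_card hsub) hcard
  let x : ZMod q → ℝ := fun v => v.valMinAbs.natAbs
  have hx0 : ∀ v, 0 ≤ x v := fun v => Nat.cast_nonneg _
  have hparts : ∀ v, 4 * x v * ‖Fh v‖ ≤ q * (2 + ‖Gh v‖) := by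
    intro v
    have h1 := stdAddChar_sub_one_ge q v
    have h2 : ‖ZMod.stdAddChar v - 1‖ * ‖Fh v‖ ≤ 2 + ‖Gh v‖ := by
      rw [← norm_mul, summation_by_parts_char q v F n m (by omega)]
      refine (norm_sub_le _ _).trans ?_
      gcongr
      refine (norm_sub_le _ _).trans ?_
      rw [norm_mul, norm_mul, AddChar.norm_apply, AddChar.norm_apply]
      have := hF m (by simp; omega)
      have := hF n (by simp; omega)
      linarith
    calc 4 * x v * ‖Fh v‖ ≤ (q * ‖ZMod.stdAddChar v - 1‖) * ‖Fh v‖ := by gcongr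
      _ = q * (‖ZMod.stdAddChar v - 1‖ * ‖Fh v‖) := by ring
      _ ≤ _ := by gcongr
  -- the weight `T / (T + x v)` balances the trivial bound and the one from summation by parts
  have hpt : ∀ v, ‖Fh v‖ ≤ T / (T + x v) * ‖Fh v‖ + q / (4 * T) * (T / (T + x v) * ‖Gh v‖) +
      q / 2 * (1 / (T + x v)) := by
    intro v
    have h1 := hparts v
    have h2 := hx0 v
    have h3 : 0 < T + x v := by linarith
    have e : T / (T + x v) * ‖Fh v‖ + q / (4 * T) * (T / (T + x v) * ‖Gh v‖) +
      q / 2 * (1 / (T + x v)) = (T * ‖Fh v‖ + q * (2 + ‖Gh v‖) / 4) / (T + x v) := by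
      field_simp; ring
    rw [e, le_div_iff₀ h3]
    nlinarith
  have hw2 : ∑ v, (T / (T + x v)) ^ 2 ≤ 4 * T := by
    refine (zmod_sum_natAbs_le q (fun j => (T / (T + j)) ^ 2) ?_ (fun j => by positivity)).trans ?_
    · intro i j hij
      simp only
      have : (i : ℝ) ≤ j := by exact_mod_cast hij
      gcongr
    · have h1 : ∀ k : ℕ, ∑ j ∈ range (k + 1), (T / (T + j)) ^ 2 ≤ 1 + T - T ^ 2 / (T + k) := by
        intro k
        induction k with
        | zero =>
          simp
          field_simp
          nlinarith
        | succ k ih =>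
          rw [sum_range_succ]
          have h2 : (T / (T + (k + 1 : ℕ))) ^ 2 ≤ T ^ 2 / (T + k) - T ^ 2 / (T + (k + 1 : ℕ)) := by
            push_cast
            have hk : (0 : ℝ) ≤ k := by positivity
            rw [div_pow, div_sub_div _ _ (by positivity) (by positivity), div_le_div_iff₀ (by positivity) (by positivity)]
            have : T ^ 2 * (T + (k + 1)) - (T + k) * T ^ 2 = T ^ 2 := by ring
            rw [this]
            have : (T + k) * (T + (k + 1)) ≤ (T + (k + 1)) ^ 2 := by nlinarith
            gcongr
          linarith
      have h2 := h1 (q - 1)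
      rw [Nat.sub_add_cancel (NeZero.pos q)] at h2
      have h3 : 0 ≤ T ^ 2 / (T + (q - 1 : ℕ)) := by positivity
      linarith
  have hw1 : ∑ v, 1 / (T + x v) ≤ 2 * (1 + Real.log q) := by
    refine (zmod_sum_natAbs_le q (fun j => 1 / (T + j)) ?_ (fun j => by positivity)).trans ?_
    · intro i j hij
      simp only
      have : (i : ℝ) ≤ j := by exact_mod_cast hij
      gcongr
    · gcongr
      refine le_trans ?_ (harmonic_le_one_add_log q)
      rw [harmonic]
      push_cast
      refine sum_le_sum fun j _ => ?_
      rw [← one_div]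
      gcongr 1 / ?_
      linarith
  have hcs : ∀ H : ZMod q → ℂ, ∀ B : ℝ, ∑ v, ‖H v‖ ^ 2 ≤ B →
      ∑ v, T / (T + x v) * ‖H v‖ ≤ 2 * √T * √B := by
    intro H B hB
    refine (Real.sum_mul_le_sqrt_mul_sqrt _ _ _).trans ?_
    have : √(4 * T) = 2 * √T := by
      rw [Real.sqrt_mul (by norm_num), show (4 : ℝ) = 2 ^ 2 by norm_num, Real.sqrt_sq (by norm_num)]
    rw [← this]
    gcongr
  calc ∑ v, ‖Fh v‖ ≤ ∑ v, (T / (T + x v) * ‖Fh v‖ + q / (4 * T) * (T / (T + x v) * ‖Gh v‖) +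
      q / 2 * (1 / (T + x v))) := sum_le_sum fun v _ => hpt v
    _ = ∑ v, T / (T + x v) * ‖Fh v‖ + q / (4 * T) * ∑ v, T / (T + x v) * ‖Gh v‖ +
      q / 2 * ∑ v, 1 / (T + x v) := by
        rw [sum_add_distrib, sum_add_distrib, mul_sum, mul_sum]
    _ ≤ 2 * √T * √(q * L) + q / (4 * T) * (2 * √T * √(q * L * η ^ 2)) + q / 2 * (2 * (1 + Real.log q)) := by
        gcongr
        · exact hcs _ _ hPF
        · exact hcs _ _ hPG
    _ = (2 * √T * √(q * L)) * (1 + (η * q) / (4 * T)) + q * (1 + Real.log q) := by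
        rw [Real.sqrt_mul (by positivity) (η ^ 2), Real.sqrt_sq hη]
        field_simp
    _ ≤ (2 * √T * √(q * L)) * (3 / 2) + q * (1 + Real.log q) := by
        gcongr
        have : η * q / (4 * T) ≤ 1 / 4 := by
          rw [div_le_iff₀ (by positivity)]
          linarith
        linarith
    _ = _ := by ring

/-! ### Incomplete Kloosterman sums -/

open Finset in
/-- Completion: an incomplete sum with an arbitrary weight `F` is bounded by the complete Kloosterman
sums times the `L¹` norm of the discrete Fourier transform of `F`. -/
theorem incomplete_kl (q : ℕ) [NeZero q] (κ : ℝ) (φ : AddChar (ZMod q) ℂ)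
    (hκ : ∀ ψ₂ : AddChar (ZMod q) ℂ, ‖klUnits φ ψ₂‖ ≤ κ) (s : Finset ℕ) (F : ℕ → ℂ) :
    q * ‖∑ a ∈ s with a.Coprime q, F a * φ (a : ZMod q)⁻¹‖ ≤
      κ * ∑ v : ZMod q, ‖∑ a ∈ s, F a * ZMod.stdAddChar (v * (a : ZMod q))‖ := by
  classical
  let K : ZMod q → ℂ := fun v => klUnits φ (ZMod.stdAddChar.mulShift (-v))
  have hK : ∀ v, K v = ∑ u : (ZMod q)ˣ, φ (u⁻¹ : (ZMod q)ˣ) * ZMod.stdAddChar (-(v * (u : ZMod q))) := by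
    intro v
    simp only [K, klUnits]
    refine Fintype.sum_equiv (Equiv.inv _) _ _ fun u => ?_
    simp [AddChar.mulShift_apply]
  have hpt : ∀ a : ℕ, ∑ v : ZMod q, ZMod.stdAddChar (v * (a : ZMod q)) * K v =
      q * (if a.Coprime q then φ (a : ZMod q)⁻¹ else 0) := by
    intro a
    have h1 : ∀ u : (ZMod q)ˣ, ∑ v : ZMod q, ZMod.stdAddChar (v * (a : ZMod q)) *
        (φ (u⁻¹ : (ZMod q)ˣ) * ZMod.stdAddChar (-(v * (u : ZMod q)))) =
        if (a : ZMod q) = u then q * φ (u⁻¹ : (ZMod q)ˣ) else 0 := by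
      intro u
      have h2 : ∀ v : ZMod q, ZMod.stdAddChar (v * (a : ZMod q)) *
        (φ (u⁻¹ : (ZMod q)ˣ) * ZMod.stdAddChar (-(v * (u : ZMod q)))) =
        φ (u⁻¹ : (ZMod q)ˣ) * ZMod.stdAddChar (v * ((a : ZMod q) - (u : ZMod q))) := by
        intro v
        rw [mul_sub, sub_eq_add_neg, AddChar.map_add_eq_mul]; ring
      rw [sum_congr rfl fun v _ => h2 v, ← mul_sum,
        AddChar.sum_mulShift _ (ZMod.isPrimitive_stdAddChar q)]
      simp only [sub_eq_zero, ZMod.card]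
      split_ifs <;> simp [mul_comm]
    simp_rw [hK, mul_sum]
    rw [sum_comm, sum_congr rfl fun u _ => h1 u]
    split_ifs with hc
    · rw [sum_eq_single (ZMod.unitOfCoprime a hc)]
      · rw [if_pos (by simp)]
        rw [← ZMod.inv_coe_unit]
        simp
      · intro u _ hu
        rw [if_neg]
        intro h
        apply hu
        ext
        simp [h]
      · simp
    · rw [mul_zero]
      refine sum_eq_zero fun u _ => if_neg ?_
      intro h
      exact hc ((ZMod.isUnit_iff_coprime a q).1 (h ▸ u.isUnit))
  have h : (q : ℂ) * ∑ a ∈ s with a.Coprime q, F a * φ (a : ZMod q)⁻¹ =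
      ∑ v : ZMod q, K v * ∑ a ∈ s, F a * ZMod.stdAddChar (v * (a : ZMod q)) := by
    simp_rw [mul_sum]
    rw [sum_comm, sum_filter]
    refine sum_congr rfl fun a _ => ?_
    have := hpt a
    calc _ = F a * (q * (if a.Coprime q then φ (a : ZMod q)⁻¹ else 0)) := by
          split_ifs <;> ring
      _ = _ := by
          rw [← this, mul_sum]
          refine sum_congr rfl fun v _ => by ring
  have h3 : ‖(q : ℂ) * ∑ a ∈ s with a.Coprime q, F a * φ (a : ZMod q)⁻¹‖ =
    q * ‖∑ a ∈ s with a.Coprime q, F a * φ (a : ZMod q)⁻¹‖ := by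
    rw [norm_mul]; simp
  rw [← h3, h, mul_sum]
  refine (norm_sum_le _ _).trans (sum_le_sum fun v _ => ?_)
  rw [norm_mul]
  gcongr
  exact hκ _

open Finset in
/-- A bound on all intervals of length at most `q` extends to intervals of length at most `N * q`. -/
theorem chunk_sum_le (f : ℕ → ℂ) (q : ℕ) (B : ℝ) (hB : 0 ≤ B) (N : ℕ) : ∀ n m : ℕ, m - n ≤ N * q →
    (∀ n' m', n ≤ n' → m' ≤ m → m' - n' ≤ q → ‖∑ a ∈ Ico n' m', f a‖ ≤ B) →
    ‖∑ a ∈ Ico n m, f a‖ ≤ N * B := by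
  induction N with
  | zero =>
    intro n m h _
    rw [Ico_eq_empty (by omega)]
    simp
  | succ N ih =>
    intro n m h hb
    rw [Nat.succ_mul] at h
    by_cases hc : m - n ≤ q
    · refine (hb n m le_rfl le_rfl hc).trans ?_
      have : (0 : ℝ) ≤ N * B := by positivity
      push_cast; linarith
    · rw [← sum_Ico_consecutive f (by omega : n ≤ n + q) (by omega : n + q ≤ m)]
      refine (norm_add_le _ _).trans ?_
      have h1 := hb n (n + q) le_rfl (by omega) (by omega)
      have h2 := ih (n + q) m (by omega) (fun n' m' h1 h2 h3 => hb n' m' (by omega) h2 h3)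
      push_cast; linarith

open Finset in
/-- Incomplete Kloosterman sums over a subinterval of `[A, 2 * A)` with the phase `e(k * (t / a + s))`,
cut into intervals of length at most `q` so that completion applies to each. -/
theorem incomplete_kl_smooth (q : ℕ) [NeZero q] (κ : ℝ) (φ : AddChar (ZMod q) ℂ)
    (hκ : ∀ ψ₂ : AddChar (ZMod q) ℂ, ‖klUnits φ ψ₂‖ ≤ κ) (A n m k : ℕ) (hA : 0 < A)
    (hn : A ≤ n) (hm : m ≤ 2 * A) (t s Z : ℝ) (ht : 0 ≤ t) (hZ : t * q ≤ Z) :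
    q * ‖∑ a ∈ Ico n m with a.Coprime q, ee (k * (t / a + s)) * φ (a : ZMod q)⁻¹‖ ≤
      κ * (9 * (√(k * Z) * (1 + √(q / A)) + (q + A) * (1 + Real.log q))) := by
  have hκ0 : 0 ≤ κ := le_trans (norm_nonneg _) (hκ 1)
  have hq0 : (0 : ℝ) < q := by exact_mod_cast NeZero.pos q
  have hq1 : (1 : ℝ) ≤ q := by exact_mod_cast NeZero.pos q
  have hlog : 0 ≤ Real.log q := Real.log_nonneg hq1
  have hA0 : (0 : ℝ) < A := by exact_mod_cast hA
  have hpi := Real.pi_pos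
  set η : ℝ := 2 * Real.pi * k * t / A ^ 2 with hη
  have hη0 : 0 ≤ η := by positivity
  set L : ℝ := min q A with hLdef
  set F : ℕ → ℂ := fun a => ee (k * (t / a + s)) with hF
  set B : ℝ := κ * (3 * √(η * q + 1) * √(q * L) + q * (1 + Real.log q)) with hB
  have hB0 : 0 ≤ B := by positivity
  have hchunk : ∀ n' m', n ≤ n' → m' ≤ m → m' - n' ≤ q →
      q * ‖∑ a ∈ Ico n' m' with a.Coprime q, F a * φ (a : ZMod q)⁻¹‖ ≤ B := by
    intro n' m' h1 h2 h3
    refine (incomplete_kl q κ φ hκ _ F).trans ?_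
    rw [hB]
    gcongr
    refine completion_l1 q n' m' F L η ?_ h3 hη0 (fun a _ => (norm_ee _).le) ?_
    · rw [hLdef, le_min_iff]
      refine ⟨by exact_mod_cast h3, by exact_mod_cast (by omega : m' - n' ≤ A)⟩
    · intro a ha
      simp only [mem_Ico] at ha
      refine (norm_ee_sub_le _ _).trans ?_
      obtain ⟨b, rfl⟩ : ∃ b, a = b + 1 := ⟨a - 1, by omega⟩
      simp only [Nat.add_sub_cancel]
      have hb : (A : ℝ) ≤ b := by exact_mod_cast (by omega : A ≤ b)
      have hb0 : (0 : ℝ) < b := by linarith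
      have e : (k : ℝ) * (t / (b + 1 : ℕ) + s) - k * (t / b + s) = -(k * t / (b * (b + 1))) := by
        push_cast; field_simp; ring
      rw [e, abs_neg, abs_of_nonneg (by positivity), hη]
      rw [show 2 * Real.pi * k * t / A ^ 2 = 2 * Real.pi * (k * t / A ^ 2) by ring]
      gcongr
      nlinarith
  set N : ℕ := A / q + 1 with hN
  have hNq : m - n ≤ N * q := by
    have : A < (A / q + 1) * q := by
      have := Nat.lt_div_mul_add (a := A) (NeZero.pos q)
      linarith
    rw [hN]; omega
  have hmain := chunk_sum_le (fun a => if a.Coprime q then F a * φ (a : ZMod q)⁻¹ else 0) q (B / q)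
    (by positivity) N n m hNq (fun n' m' h1 h2 h3 => by
      rw [← sum_filter, le_div_iff₀ hq0, mul_comm]
      exact hchunk n' m' h1 h2 h3)
  rw [← sum_filter] at hmain
  have hNle : (N : ℝ) ≤ A / q + 1 := by
    rw [hN]; push_cast
    gcongr
    exact Nat.cast_div_le
  have h1 : (N : ℝ) * √(q * L) ≤ A + √(q * A) := by
    calc (N : ℝ) * √(q * L) ≤ (A / q + 1) * √(q * L) := by gcongr
      _ = A / q * √(q * L) + √(q * L) := by ring
      _ ≤ A / q * √(q * q) + √(q * A) := by
        gcongr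
        · exact min_le_left _ _
        · exact min_le_right _ _
      _ = _ := by
        rw [Real.sqrt_mul_self hq0.le]
        field_simp
  have hZ0 : 0 ≤ Z := le_trans (by positivity) hZ
  have h2 : √(η * q + 1) ≤ 3 * (√(k * Z) / A) + 1 := by
    have hT : η * q + 1 ≤ (3 * (√(k * Z) / A) + 1) ^ 2 := by
      have e1 : η * q = 2 * Real.pi * (k * (t * q)) / A ^ 2 := by rw [hη]; ring
      have e2 : (√(k * Z) / A) ^ 2 = k * Z / A ^ 2 := by
        rw [div_pow, Real.sq_sqrt (by positivity)]
      have e3 : 2 * Real.pi * (k * (t * q)) / A ^ 2 ≤ 9 * (k * Z / A ^ 2) := by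
        rw [← mul_div_assoc]
        gcongr
        have := Real.pi_lt_d2
        linarith
      have e4 : 0 ≤ √(k * Z) / A := by positivity
      rw [e1]
      nlinarith
    calc √(η * q + 1) ≤ √((3 * (√(k * Z) / A) + 1) ^ 2) := by gcongr
      _ = _ := Real.sqrt_sq (by positivity)
  have h3 : √((q : ℝ) * A) ≤ (q + A) / 2 := by
    rw [Real.sqrt_le_left (by positivity)]
    nlinarith [sq_nonneg ((q : ℝ) - A)]
  have h4 : √((q : ℝ) * A) / A = √(q / A) := by
    rw [Real.sqrt_div hq0.le, Real.sqrt_mul hq0.le, div_eq_div_iff hA0.ne' (Real.sqrt_pos.2 hA0).ne',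
      mul_assoc, Real.mul_self_sqrt hA0.le]
  calc q * ‖∑ a ∈ Ico n m with a.Coprime q, F a * φ (a : ZMod q)⁻¹‖ ≤ q * (N * (B / q)) := by gcongr
    _ = κ * (3 * √(η * q + 1) * (N * √(q * L)) + N * q * (1 + Real.log q)) := by
      rw [hB]; field_simp
    _ ≤ κ * (3 * (3 * (√(k * Z) / A) + 1) * (A + √(q * A)) + (A / q + 1) * q * (1 + Real.log q)) := by
      gcongr
    _ = κ * (9 * (√(k * Z) * (1 + √(q * A) / A)) + 3 * (A + √(q * A)) + (A + q) * (1 + Real.log q)) := by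
      congr 1
      field_simp
      ring
    _ ≤ _ := by
      rw [h4]
      gcongr
      have : (0 : ℝ) ≤ (q + A) * Real.log q := by positivity
      nlinarith

/-! ### Averages of Kloosterman bounds over the modulus -/

open Finset in
theorem sum_inv_sqrt_le (N : ℕ) : ∑ c ∈ Icc 1 N, 1 / √(c : ℝ) ≤ 2 * √N := by
  induction N with
  | zero => simp
  | succ N ih =>
    rw [sum_Icc_succ_top (by omega)]
    have h1 : 1 / √((N + 1 : ℕ) : ℝ) ≤ 2 * √((N + 1 : ℕ) : ℝ) - 2 * √N := by
      have hp : 0 < √((N + 1 : ℕ) : ℝ) := Real.sqrt_pos.2 (by positivity)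
      rw [div_le_iff₀ hp]
      have e1 := Real.sq_sqrt (by positivity : (0 : ℝ) ≤ ((N + 1 : ℕ) : ℝ))
      have e2 := Real.sq_sqrt (by positivity : (0 : ℝ) ≤ (N : ℝ))
      push_cast at *
      nlinarith [sq_nonneg (√((N : ℝ) + 1) - √N)]
    linarith

open Finset in
/-- Bounding the term of the gcd by the sum over all common divisors `g`, each `g` leaves
`∑ 1 / √c'` over `c' ≤ N / g`. -/
theorem sum_sqrt_gcd_le (m N : ℕ) (hm : 0 < m) :
    ∑ c ∈ Icc 1 N, √(m.gcd c : ℝ) / √(c : ℝ) ≤ 2 * m.divisors.card * √N := by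
  calc ∑ c ∈ Icc 1 N, √(m.gcd c : ℝ) / √(c : ℝ)
      ≤ ∑ c ∈ Icc 1 N, ∑ g ∈ m.divisors with g ∣ c, √(g : ℝ) / √(c : ℝ) := by
        refine sum_le_sum fun c _ => ?_
        exact single_le_sum (f := fun g : ℕ => √(g : ℝ) / √(c : ℝ)) (fun g _ => by positivity)
          (by simp [Nat.gcd_dvd_left, Nat.gcd_dvd_right, hm.ne'])
    _ = ∑ g ∈ m.divisors, ∑ c ∈ Icc 1 N with g ∣ c, √(g : ℝ) / √(c : ℝ) := by
        simp_rw [sum_filter]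
        rw [sum_comm]
    _ ≤ ∑ g ∈ m.divisors, 2 * √(N : ℝ) := by
        refine sum_le_sum fun g hg => ?_
        have hg0 : 0 < g := Nat.pos_of_mem_divisors hg
        have e : ∑ c ∈ Icc 1 N with g ∣ c, √(g : ℝ) / √(c : ℝ) = ∑ c ∈ Icc 1 (N / g), 1 / √(c : ℝ) := by
          symm
          refine sum_bij (fun c _ => g * c) ?_ ?_ ?_ ?_
          · intro c hc
            simp only [mem_Icc, mem_filter] at hc ⊢
            refine ⟨⟨Nat.mul_pos hg0 hc.1, ?_⟩, dvd_mul_right _ _⟩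
            rw [mul_comm]
            exact (Nat.le_div_iff_mul_le hg0).1 hc.2
          · intro a _ b _ h
            exact Nat.eq_of_mul_eq_mul_left hg0 h
          · intro c hc
            simp only [mem_Icc, mem_filter] at hc
            obtain ⟨d, rfl⟩ := hc.2
            refine ⟨d, ?_, rfl⟩
            simp only [mem_Icc]
            refine ⟨Nat.pos_of_mul_pos_left hc.1.1, ?_⟩
            rw [Nat.le_div_iff_mul_le hg0, mul_comm]
            exact hc.1.2
          · intro c _
            push_cast
            rw [Real.sqrt_mul (by positivity)]
            have : 0 < √(g : ℝ) := Real.sqrt_pos.2 (by exact_mod_cast hg0)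
            field_simp
        rw [e]
        refine (sum_inv_sqrt_le _).trans ?_
        gcongr
        exact Nat.div_le_self _ _
    _ = _ := by rw [sum_const, nsmul_eq_mul]; ring

theorem sum_Icc_inv_le (Q : ℕ) : ∑ a ∈ Finset.Icc 1 Q, 1 / (a : ℝ) ≤ 1 + Real.log Q := by
  have := harmonic_le_one_add_log Q
  rw [harmonic_eq_sum_Icc] at this
  push_cast at this
  simpa using this

open Finset in
/-- The average over `q` of the bounds for the Kloosterman sums with numerator `m`. -/
theorem kl_average (Q m : ℕ) (hm : 0 < m) (Λ : ℝ) (hΛ : ∀ q ∈ Icc 1 Q, (q.divisors.card : ℝ) ≤ Λ) :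
    ∃ κ : ℕ → ℝ, (∀ q [NeZero q] (ψ₂ : AddChar (ZMod q) ℂ),
      ‖klUnits (ZMod.stdAddChar.mulShift (-(m : ZMod q))) ψ₂‖ ≤ κ q) ∧ (∀ q, 0 ≤ κ q) ∧
      ∑ q ∈ Icc 1 Q, κ q / q ≤ 2 * Λ * m.divisors.card * √Q * (1 + Real.log Q) ^ 2 := by
  classical
  choose! a b c habc hK using kloosterman_composite
  let κ : ℕ → ℝ := fun q => q.divisors.card * ((a q : ℝ) ^ 2 * b q ^ 3) * (√(c q) * √(m.gcd (c q)))
  refine ⟨κ, ?_, fun q => by positivity, ?_⟩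
  · intro q _ ψ₂
    refine hK q (NeZero.pos q) m _ ψ₂ ?_
    intro p hp hpq h
    have h1 := DFunLike.congr_fun h (1 : ZMod q)
    rw [AddChar.pow_apply, AddChar.mulShift_apply, ← AddChar.map_nsmul_eq_pow, AddChar.one_apply,
      ← AddChar.map_zero_eq_one (ZMod.stdAddChar (N := q))] at h1
    have h2 := ZMod.injective_stdAddChar h1
    rw [mul_one, smul_neg, neg_eq_zero, nsmul_eq_mul, ← Nat.cast_mul, ZMod.natCast_eq_zero_iff] at h2
    obtain ⟨r, rfl⟩ := hpq
    rw [Nat.mul_div_cancel_left _ hp.pos, mul_comm p, mul_comm r m] at h2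
    have hr : 0 < r := Nat.pos_of_ne_zero fun h0 => NeZero.ne (p * r) (by rw [h0, mul_zero])
    rw [mul_comm m] at h2
    exact Nat.dvd_of_mul_dvd_mul_left hr h2
  clear hK
  have hΛ0 : ∀ q ∈ Icc 1 Q, 0 ≤ Λ := fun q hq => le_trans (by positivity) (hΛ q hq)
  rcases Nat.eq_zero_or_pos Q with rfl | hQ
  · simp
  have hΛ0 : 0 ≤ Λ := hΛ0 1 (by simp; omega)
  have hpos : ∀ q, 0 < q → 0 < a q ∧ 0 < b q ∧ 0 < c q := by
    intro q hq
    have h := habc q hq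
    refine ⟨Nat.pos_of_ne_zero ?_, Nat.pos_of_ne_zero ?_, Nat.pos_of_ne_zero ?_⟩ <;>
    · intro h0
      rw [h0] at h
      simp at h
      omega
  have h1 : ∀ q ∈ Icc 1 Q, κ q / q ≤ Λ * (√(m.gcd (c q)) / √(c q)) := by
    intro q hq
    have hq' := mem_Icc.1 hq
    obtain ⟨ha, hb, hc⟩ := hpos q hq'.1
    have e : κ q / q = q.divisors.card * (√(m.gcd (c q)) / √(c q)) := by
      have e2 : (q : ℝ) = a q ^ 2 * b q ^ 3 * c q := by exact_mod_cast habc q hq'.1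
      have ha' : (0 : ℝ) < a q := by exact_mod_cast ha
      have hb' : (0 : ℝ) < b q := by exact_mod_cast hb
      have hc' : (0 : ℝ) < c q := by exact_mod_cast hc
      have hs : 0 < √(c q : ℝ) := Real.sqrt_pos.2 hc'
      have hs2 := Real.mul_self_sqrt hc'.le
      simp only [κ]
      have h : √(m.gcd (c q) : ℝ) / √(c q) * c q = √(m.gcd (c q) : ℝ) * √(c q) := by
        rw [div_mul_eq_mul_div, div_eq_iff hs.ne', mul_assoc, hs2]
      rw [e2, div_eq_iff (by positivity)]
      linear_combination -((q.divisors.card : ℝ) * a q ^ 2 * b q ^ 3) * h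
    rw [e]
    gcongr
    exact hΛ q hq
  refine (sum_le_sum h1).trans ?_
  rw [← mul_sum]
  have h2 : ∑ q ∈ Icc 1 Q, √(m.gcd (c q)) / √(c q) ≤
      ∑ x ∈ Icc 1 Q ×ˢ Icc 1 Q, ∑ e ∈ Icc 1 (Q / (x.1 ^ 2 * x.2 ^ 3)), √(m.gcd e : ℝ) / √(e : ℝ) := by
    rw [sum_sigma']
    have hinj : Set.InjOn (fun q => (⟨(a q, b q), c q⟩ : (_ : ℕ × ℕ) × ℕ)) (Icc 1 Q) := by
      intro q hq r hr h
      simp only [coe_Icc, Set.mem_Icc] at hq hr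
      simp only [Sigma.mk.injEq, Prod.mk.injEq, heq_eq_eq] at h
      rw [habc q (by omega), habc r (by omega), h.1.1, h.1.2, h.2]
    rw [← sum_image (s := Icc 1 Q) (g := fun q => (⟨(a q, b q), c q⟩ : (_ : ℕ × ℕ) × ℕ))
      (f := fun x : (_ : ℕ × ℕ) × ℕ => √(m.gcd x.2 : ℝ) / √(x.2 : ℝ)) hinj]
    refine sum_le_sum_of_subset_of_nonneg ?_ fun _ _ _ => by positivity
    intro x hx
    obtain ⟨q, hq, rfl⟩ := mem_image.1 hx
    rw [mem_Icc] at hq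
    obtain ⟨ha, hb, hc⟩ := hpos q hq.1
    have e := habc q hq.1
    simp only [mem_sigma, mem_product, mem_Icc]
    have hle : a q ^ 2 * b q ^ 3 * c q ≤ Q := by rw [← e]; exact hq.2
    refine ⟨⟨⟨ha, ?_⟩, hb, ?_⟩, hc, ?_⟩
    · calc a q ≤ a q ^ 2 := Nat.le_self_pow (by norm_num) _
        _ ≤ a q ^ 2 * (b q ^ 3 * c q) := Nat.le_mul_of_pos_right _ (by positivity)
        _ ≤ Q := by rw [← mul_assoc]; exact hle
    · calc b q ≤ b q ^ 3 := Nat.le_self_pow (by norm_num) _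
        _ ≤ b q ^ 3 * (a q ^ 2 * c q) := Nat.le_mul_of_pos_right _ (by positivity)
        _ ≤ Q := by rw [show b q ^ 3 * (a q ^ 2 * c q) = a q ^ 2 * b q ^ 3 * c q by ring]; exact hle
    · rw [Nat.le_div_iff_mul_le (by positivity), mul_comm]
      exact hle
  have h3 : ∀ x ∈ Icc 1 Q ×ˢ Icc 1 Q, ∑ e ∈ Icc 1 (Q / (x.1 ^ 2 * x.2 ^ 3)), √(m.gcd e : ℝ) / √(e : ℝ) ≤
      2 * m.divisors.card * √Q * (1 / (x.1 : ℝ) * (1 / (x.2 : ℝ))) := by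
    intro x hx
    obtain ⟨hx1', hx2'⟩ := mem_product.1 hx
    rw [mem_Icc] at hx1' hx2'
    refine (sum_sqrt_gcd_le m _ hm).trans ?_
    rw [mul_assoc _ √(Q : ℝ)]
    refine mul_le_mul_of_nonneg_left ?_ (mul_nonneg zero_le_two (Nat.cast_nonneg _))
    have hx1 : (1 : ℝ) ≤ x.1 := by exact_mod_cast hx1'.1
    have hx2 : (1 : ℝ) ≤ x.2 := by exact_mod_cast hx2'.1
    have h4 : ((Q / (x.1 ^ 2 * x.2 ^ 3) : ℕ) : ℝ) ≤ Q / (x.1 * x.2) ^ 2 := by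
      refine Nat.cast_div_le.trans ?_
      push_cast
      rw [mul_pow]
      gcongr
      norm_num
    refine (Real.sqrt_le_sqrt h4).trans (le_of_eq ?_)
    rw [Real.sqrt_div (by positivity), Real.sqrt_sq (by positivity)]
    field_simp
  refine (mul_le_mul_of_nonneg_left (h2.trans (sum_le_sum h3)) hΛ0).trans ?_
  rw [← mul_sum, sum_product]
  simp only []
  rw [← sum_mul_sum, ← sq]
  have h5 := sum_Icc_inv_le Q
  have h6 : 0 ≤ ∑ a ∈ Icc 1 Q, 1 / (a : ℝ) := sum_nonneg fun _ _ => by positivity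
  calc Λ * (2 * m.divisors.card * √Q * (∑ a ∈ Icc 1 Q, 1 / (a : ℝ)) ^ 2)
      ≤ Λ * (2 * m.divisors.card * √Q * (1 + Real.log Q) ^ 2) :=
        mul_le_mul_of_nonneg_left (mul_le_mul_of_nonneg_left (pow_le_pow_left₀ h6 h5 2)
          (mul_nonneg (mul_nonneg zero_le_two (Nat.cast_nonneg _)) (Real.sqrt_nonneg _))) hΛ0
    _ = _ := by ring

/-! ### Sawtooth sums over all moduli -/

open Finset in
/-- The Fourier modes of the sawtooth argument, expressed through an additive character of
`ZMod q`. -/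
theorem ee_mul_sub_val (q : ℕ) [NeZero q] (k l : ℕ) (y : ℝ) (b : ZMod q) :
    ee (k * (y - (((l : ZMod q) * b : ZMod q).val : ℝ) / q)) =
      ee (k * y) * ZMod.stdAddChar.mulShift (-((k * l : ℕ) : ZMod q)) b := by
  rw [mul_sub, sub_eq_add_neg, ee_add]
  congr 1
  have h : -((k * l : ℕ) : ZMod q) * b = ((-(k * ((l : ZMod q) * b).val : ℕ) : ℤ) : ZMod q) := by
    push_cast
    rw [ZMod.natCast_zmod_val]
    ring
  rw [AddChar.mulShift_apply, h, ZMod.stdAddChar_coe, ee]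
  congr 1
  push_cast
  ring

theorem min_mul_sqrt_le (J k : ℕ) (hk : 0 < k) :
    min (1 / (k : ℝ)) (J / (k : ℝ) ^ 2) * √k ≤ √J * (1 / k) := by
  have hk' : (0 : ℝ) < k := by exact_mod_cast hk
  have hs : 0 < √(k : ℝ) := Real.sqrt_pos.2 hk'
  have hs2 := Real.mul_self_sqrt hk'.le
  have hj2 := Real.mul_self_sqrt (Nat.cast_nonneg (α := ℝ) J)
  rcases le_total k J with h | h
  · calc min (1 / (k : ℝ)) (J / (k : ℝ) ^ 2) * √k ≤ 1 / k * √J := by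
          gcongr
          exact min_le_left _ _
      _ = _ := by ring
  · have h1 : √(J : ℝ) ≤ √k := Real.sqrt_le_sqrt (by exact_mod_cast h)
    calc min (1 / (k : ℝ)) (J / (k : ℝ) ^ 2) * √k ≤ J / (k : ℝ) ^ 2 * √k := by
          gcongr
          exact min_le_right _ _
      _ = √J * (1 / k) * (√J * √k / k) := by
          linear_combination (-(√(k : ℝ) / (k : ℝ) ^ 2)) * hj2
      _ ≤ √J * (1 / k) * 1 := by
          gcongr
          rw [div_le_one hk']
          exact (mul_le_mul_of_nonneg_right h1 hs.le).trans hs2.le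
      _ = _ := mul_one _

open Finset in
/-- One Kloosterman modulus: the sawtooth sum is bounded through the Fourier side. -/
theorem saw_modulus_le (q : ℕ) [NeZero q] (κ : ℕ → ℝ) (l J : ℕ) (hJ : 0 < J)
    (hκ : ∀ k ∈ Icc 1 (J ^ 2), ∀ ψ₂ : AddChar (ZMod q) ℂ,
      ‖klUnits (ZMod.stdAddChar.mulShift (-((k * l : ℕ) : ZMod q))) ψ₂‖ ≤ κ k)
    (A n m : ℕ) (hA : 0 < A) (hn : A ≤ n) (hm : m ≤ 2 * A) (t s Z : ℝ) (ht : 0 ≤ t)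
    (hZ : t * q ≤ Z) :
    |∑ a ∈ Ico n m with a.Coprime q,
        saw (t / a + s - (((l : ZMod q) * (a : ZMod q)⁻¹ : ZMod q).val : ℝ) / q)| ≤
      2 * A / J + ∑ k ∈ Icc 1 (J ^ 2), min (1 / (k : ℝ)) (J / (k : ℝ) ^ 2) *
        (κ k / q * (9 * (√(k * Z) * (1 + √(q / A)) + (q + A) * (1 + Real.log q)))) := by
  have hq : (0 : ℝ) < q := by exact_mod_cast NeZero.pos q
  refine (saw_sum_le _ _ J hJ).trans (add_le_add ?_ (sum_le_sum fun k hk => ?_))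
  · gcongr
    refine (card_filter_le _ _).trans ?_
    rw [Nat.card_Ico]
    omega
  · refine mul_le_mul_of_nonneg_left ?_ (by positivity)
    rw [div_mul_eq_mul_div, le_div_iff₀ hq, mul_comm]
    simp only [ee_mul_sub_val]
    exact incomplete_kl_smooth q (κ k) _ (hκ k hk) A n m k hA hn hm t s Z ht hZ

open Finset in
/-- The sawtooth sums over all moduli `q ≤ Q`, for `a` in a dyadic range. Here `v = X^(1/12)`. -/
theorem saw_dyadic_le (v Λ : ℝ) (hv : 1 ≤ v) (hΛ1 : 1 + 12 * Real.log v ≤ Λ)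
    (hΛ : ∀ n : ℕ, 0 < n → (n : ℝ) ≤ 100 * v ^ 36 → (n.divisors.card : ℝ) ≤ Λ)
    (Q l A : ℕ) (hQ : (Q : ℝ) ≤ v ^ 6) (hl : 0 < l) (hlv : (l : ℝ) ≤ v ^ 12) (hA : 0 < A)
    (hAv : (A : ℝ) ≤ 2 * v ^ 6) (n m : ℕ → ℕ) (t s : ℕ → ℝ)
    (hn : ∀ q ∈ Icc 1 Q, A ≤ n q) (hm : ∀ q ∈ Icc 1 Q, m q ≤ 2 * A)
    (ht : ∀ q ∈ Icc 1 Q, 0 ≤ t q) (hZ : ∀ q ∈ Icc 1 Q, t q * q ≤ 2 * v ^ 12) :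
    ∑ q ∈ Icc 1 Q, |∑ a ∈ Ico (n q) (m q) with a.Coprime q,
        saw (t q / a + s q - (((l : ZMod q) * (a : ZMod q)⁻¹ : ZMod q).val : ℝ) / q)| ≤
      700 * Λ ^ 6 * v ^ 10 := by
  have hv0 : 0 < v := by linarith
  have hlv0 : 0 ≤ Real.log v := Real.log_nonneg hv
  have hΛ1' : 1 ≤ Λ := by linarith
  rcases le_total (A : ℝ) (v ^ 4) with hsmall | hbig
  · have h1 : ∀ q ∈ Icc 1 Q, |∑ a ∈ Ico (n q) (m q) with a.Coprime q,
        saw (t q / a + s q - (((l : ZMod q) * (a : ZMod q)⁻¹ : ZMod q).val : ℝ) / q)| ≤ v ^ 4 := by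
      intro q hq
      refine (abs_sum_le_sum_abs _ _).trans ((sum_le_card_nsmul _ _ 1 fun a _ =>
        (abs_saw_le _).trans (by norm_num)).trans ?_)
      rw [nsmul_one]
      refine le_trans ?_ hsmall
      have := hn q hq
      have := hm q hq
      exact_mod_cast (card_filter_le _ _).trans (by rw [Nat.card_Ico]; omega)
    refine (sum_le_sum h1).trans ?_
    rw [sum_const, Nat.card_Icc, nsmul_eq_mul, Nat.add_sub_cancel]
    calc (Q : ℝ) * v ^ 4 ≤ v ^ 6 * v ^ 4 := by gcongr
      _ = 1 * 1 ^ 6 * v ^ 10 := by ring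
      _ ≤ 700 * Λ ^ 6 * v ^ 10 := by gcongr; norm_num
  -- `J` balances the trivial loss `A / J` against the length of the Fourier expansion
  obtain ⟨J, hJ⟩ : ∃ J : ℕ, J = ⌈(A : ℝ) / v ^ 4⌉₊ := ⟨_, rfl⟩
  have hv4 : 0 < v ^ 4 := by positivity
  have hone : 1 ≤ (A : ℝ) / v ^ 4 := by rwa [one_le_div hv4]
  have hJlo : (A : ℝ) / v ^ 4 ≤ J := by rw [hJ]; exact Nat.le_ceil _
  have hJhi : (J : ℝ) ≤ 2 * (A / v ^ 4) := by
    have := Nat.ceil_lt_add_one (zero_le_one.trans hone)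
    rw [hJ]
    linarith
  have hJ1 : (1 : ℝ) ≤ J := hone.trans hJlo
  have hJ0 : 0 < J := by exact_mod_cast (zero_lt_one.trans_le hJ1)
  have hJv : (J : ℝ) ≤ 4 * v ^ 2 := by
    refine hJhi.trans ?_
    rw [mul_div_assoc', div_le_iff₀ hv4]
    linarith [show 4 * v ^ 2 * v ^ 4 = 4 * v ^ 6 by ring]
  have hJ2 : ((J ^ 2 : ℕ) : ℝ) ≤ 16 * v ^ 4 := by
    push_cast
    calc (J : ℝ) ^ 2 ≤ (4 * v ^ 2) ^ 2 := by gcongr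
      _ = _ := by ring
  have hkl : ∀ k ∈ Icc 1 (J ^ 2), 0 < k * l ∧ ((k * l : ℕ) : ℝ) ≤ 100 * v ^ 36 := by
    intro k hk
    rw [mem_Icc] at hk
    refine ⟨Nat.mul_pos hk.1 hl, ?_⟩
    have : (k : ℝ) ≤ 16 * v ^ 4 := le_trans (by exact_mod_cast hk.2) hJ2
    push_cast
    calc (k : ℝ) * l ≤ 16 * v ^ 4 * v ^ 12 := by gcongr
      _ = 16 * v ^ 16 := by ring
      _ ≤ 100 * v ^ 36 := by gcongr <;> norm_num
  have hQΛ : ∀ q ∈ Icc 1 Q, (q.divisors.card : ℝ) ≤ Λ := by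
    intro q hq
    rw [mem_Icc] at hq
    refine hΛ q hq.1 ?_
    calc (q : ℝ) ≤ Q := by exact_mod_cast hq.2
      _ ≤ 1 * v ^ 6 := by rw [one_mul]; exact hQ
      _ ≤ 100 * v ^ 36 := by gcongr <;> norm_num
  rcases Nat.eq_zero_or_pos Q with rfl | hQ0
  · rw [Icc_eq_empty (by norm_num), sum_empty]
    positivity
  have hlogq : ∀ q ∈ Icc 1 Q, 1 + Real.log q ≤ Λ := by
    intro q hq
    rw [mem_Icc] at hq
    have : Real.log q ≤ Real.log (v ^ 6) := Real.log_le_log (by exact_mod_cast hq.1)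
      (le_trans (by exact_mod_cast hq.2) hQ)
    rw [Real.log_pow] at this
    push_cast at this
    linarith
  have hex : ∀ k : ℕ, ∃ κ : ℕ → ℝ, k ∈ Icc 1 (J ^ 2) →
      (∀ q [NeZero q] (ψ₂ : AddChar (ZMod q) ℂ),
      ‖klUnits (ZMod.stdAddChar.mulShift (-((k * l : ℕ) : ZMod q))) ψ₂‖ ≤ κ q) ∧ (∀ q, 0 ≤ κ q) ∧
      ∑ q ∈ Icc 1 Q, κ q / q ≤ 2 * Λ * Λ * √Q * Λ ^ 2 := by
    intro k
    by_cases hk : k ∈ Icc 1 (J ^ 2)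
    · obtain ⟨κ, h1, h2, h3⟩ := kl_average Q (k * l) (hkl k hk).1 Λ hQΛ
      refine ⟨κ, fun _ => ⟨h1, h2, h3.trans ?_⟩⟩
      have h4 := hlogq Q (by rw [mem_Icc]; omega)
      have h5 : 0 ≤ 1 + Real.log Q := by
        have := Real.log_natCast_nonneg Q
        linarith
      have h6 := hΛ _ (hkl k hk).1 (hkl k hk).2
      have h7 : (0 : ℝ) ≤ (k * l).divisors.card := Nat.cast_nonneg _
      generalize ((k * l).divisors.card : ℝ) = τ at h6 h7
      gcongr
    · exact ⟨0, fun h => absurd h hk⟩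
  choose κ hκ using hex
  obtain ⟨M, hM⟩ : ∃ M : ℝ, M = √(2 * v ^ 12) * (1 + √(Q / A)) := ⟨_, rfl⟩
  have hM0 : 0 ≤ M := by rw [hM]; positivity
  have hA0 : (0 : ℝ) < A := by exact_mod_cast hA
  have hper : ∀ q ∈ Icc 1 Q, |∑ a ∈ Ico (n q) (m q) with a.Coprime q,
        saw (t q / a + s q - (((l : ZMod q) * (a : ZMod q)⁻¹ : ZMod q).val : ℝ) / q)| ≤
      2 * A / J + ∑ k ∈ Icc 1 (J ^ 2), min (1 / (k : ℝ)) (J / (k : ℝ) ^ 2) *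
        (κ k q / q * (9 * (√k * M + (Q + A) * Λ))) := by
    intro q hq
    have hq' := mem_Icc.1 hq
    haveI : NeZero q := ⟨by omega⟩
    refine (saw_modulus_le q (fun k => κ k q) l J hJ0 (fun k hk ψ₂ => (hκ k hk).1 q ψ₂) A (n q) (m q)
      hA (hn q hq) (hm q hq) (t q) (s q) (2 * v ^ 12) (ht q hq) (hZ q hq)).trans ?_
    refine add_le_add le_rfl (sum_le_sum fun k hk => ?_)
    have h1 : (q : ℝ) ≤ Q := by exact_mod_cast hq'.2
    have h2 : 0 ≤ κ k q / q := div_nonneg ((hκ k hk).2.1 q) (Nat.cast_nonneg _)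
    have h3 := hlogq q hq
    have h4 : √(k * (2 * v ^ 12)) * (1 + √((q : ℝ) / A)) ≤ √k * M := by
      rw [Real.sqrt_mul (Nat.cast_nonneg _), mul_assoc, hM]
      gcongr
    have h5 : ((q : ℝ) + A) * (1 + Real.log q) ≤ (Q + A) * Λ := by
      gcongr
    refine mul_le_mul_of_nonneg_left (mul_le_mul_of_nonneg_left ?_ h2) (by positivity)
    linarith
  refine (sum_le_sum hper).trans ?_
  rw [sum_add_distrib, sum_const, Nat.card_Icc, nsmul_eq_mul, Nat.add_sub_cancel, sum_comm]
  have hin : ∀ k ∈ Icc 1 (J ^ 2), ∑ q ∈ Icc 1 Q, min (1 / (k : ℝ)) (J / (k : ℝ) ^ 2) *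
        (κ k q / q * (9 * (√k * M + (Q + A) * Λ))) ≤
      18 * Λ ^ 4 * √Q * (√J * M + (Q + A) * Λ) * (1 / k) := by
    intro k hk
    have hk0 : 0 < k := (mem_Icc.1 hk).1
    rw [← mul_sum, ← sum_mul]
    have h1 := min_mul_sqrt_le J k hk0
    have h2 : min (1 / (k : ℝ)) (J / (k : ℝ) ^ 2) ≤ 1 / k := min_le_left _ _
    have h3 : 0 ≤ min (1 / (k : ℝ)) (J / (k : ℝ) ^ 2) := by positivity
    generalize min (1 / (k : ℝ)) (J / (k : ℝ) ^ 2) = b at h1 h2 h3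
    calc b * ((∑ q ∈ Icc 1 Q, κ k q / q) * (9 * (√k * M + (Q + A) * Λ)))
        ≤ b * ((2 * Λ * Λ * √Q * Λ ^ 2) * (9 * (√k * M + (Q + A) * Λ))) := by
          refine mul_le_mul_of_nonneg_left (mul_le_mul_of_nonneg_right (hκ k hk).2.2 ?_) h3
          positivity
      _ = 18 * Λ ^ 4 * √Q * ((b * √k) * M + b * ((Q + A) * Λ)) := by ring
      _ ≤ 18 * Λ ^ 4 * √Q * ((√J * (1 / k)) * M + 1 / k * ((Q + A) * Λ)) := by gcongr
      _ = _ := by ring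
  refine (add_le_add le_rfl (sum_le_sum hin)).trans ?_
  rw [← mul_sum]
  have hharm : ∑ k ∈ Icc 1 (J ^ 2), 1 / (k : ℝ) ≤ 4 * Λ := by
    refine (sum_Icc_inv_le _).trans ?_
    have h1 : Real.log ((J ^ 2 : ℕ) : ℝ) ≤ Real.log (16 * v ^ 4) :=
      Real.log_le_log (by positivity) hJ2
    rw [Real.log_mul (by norm_num) (by positivity), Real.log_pow, show (16 : ℝ) = 2 ^ 4 by norm_num,
      Real.log_pow] at h1
    push_cast at h1 ⊢
    linarith [Real.log_two_lt_d9]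
  have hsQ : √(Q : ℝ) ≤ v ^ 3 := Real.sqrt_le_iff.2 ⟨by positivity, by
    rw [← pow_mul]; exact hQ⟩
  -- the two square-root terms
  have e1 : √(Q : ℝ) * (√J * M) ≤ (2 * 2 + 2) * v ^ 10 := by
    have hsA : √(A : ℝ) ≤ 2 * v ^ 3 := Real.sqrt_le_iff.2 ⟨by positivity, by nlinarith [pow_pos hv0 6]⟩
    have hsA0 : 0 < √(A : ℝ) := Real.sqrt_pos.2 hA0
    have h1 : √(J : ℝ) * √(2 * v ^ 12) ≤ 2 * v ^ 4 * √A := by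
      rw [← Real.sqrt_mul (Nat.cast_nonneg _)]
      refine Real.sqrt_le_iff.2 ⟨by positivity, ?_⟩
      rw [mul_pow, Real.sq_sqrt hA0.le]
      calc (J : ℝ) * (2 * v ^ 12) ≤ 2 * (A / v ^ 4) * (2 * v ^ 12) := by gcongr
        _ = _ := by field_simp
    calc √(Q : ℝ) * (√J * M) = √(Q : ℝ) * ((√J * √(2 * v ^ 12)) * (1 + √Q / √A)) := by
          rw [hM, Real.sqrt_div (Nat.cast_nonneg _)]; ring
      _ ≤ v ^ 3 * ((2 * v ^ 4 * √A) * (1 + v ^ 3 / √A)) := by gcongr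
      _ = 2 * v ^ 7 * √A + 2 * v ^ 10 := by field_simp
      _ ≤ 2 * v ^ 7 * (2 * v ^ 3) + 2 * v ^ 10 := by gcongr
      _ = _ := by ring
  have e2 : √(Q : ℝ) * ((Q + A) * Λ) ≤ 3 * Λ * v ^ 10 := by
    calc √(Q : ℝ) * ((Q + A) * Λ) ≤ v ^ 3 * ((v ^ 6 + 2 * v ^ 6) * Λ) := by gcongr
      _ = 3 * Λ * v ^ 9 := by ring
      _ ≤ 3 * Λ * v ^ 10 := by gcongr <;> norm_num
  have e3 : (Q : ℝ) * (2 * A / J) ≤ 2 * v ^ 10 := by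
    have : 2 * (A : ℝ) / J ≤ 2 * v ^ 4 := by
      rw [div_le_iff₀ (by linarith)]
      rw [div_le_iff₀ hv4] at hJlo
      linarith
    calc (Q : ℝ) * (2 * A / J) ≤ v ^ 6 * (2 * v ^ 4) := by gcongr
      _ = _ := by ring
  calc (Q : ℝ) * (2 * A / J) + 18 * Λ ^ 4 * √Q * (√J * M + (Q + A) * Λ) *
        ∑ k ∈ Icc 1 (J ^ 2), 1 / (k : ℝ)
      ≤ 2 * v ^ 10 + 18 * Λ ^ 4 * √Q * (√J * M + (Q + A) * Λ) * (4 * Λ) := by gcongr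
    _ = 2 * v ^ 10 + 72 * Λ ^ 5 * (√Q * (√J * M) + √Q * ((Q + A) * Λ)) := by ring
    _ ≤ 2 * v ^ 10 + 72 * Λ ^ 5 * ((2 * 2 + 2) * v ^ 10 + 3 * Λ * v ^ 10) := by gcongr
    _ = (2 * 1 ^ 6 + 72 * (6 * (Λ ^ 5 * 1) + 3 * Λ ^ 6)) * v ^ 10 := by ring
    _ ≤ (2 * Λ ^ 6 + 72 * (6 * (Λ ^ 5 * Λ) + 3 * Λ ^ 6)) * v ^ 10 := by gcongr
    _ ≤ 700 * Λ ^ 6 * v ^ 10 := by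
      have : 0 < Λ ^ 6 * v ^ 10 := by positivity
      linarith [show (2 * Λ ^ 6 + 72 * (6 * (Λ ^ 5 * Λ) + 3 * Λ ^ 6)) * v ^ 10 = 650 * (Λ ^ 6 * v ^ 10) by ring]

open Finset in
theorem sum_dyadic (f : ℕ → ℝ) (V r : ℕ) :
    ∑ a ∈ Ico 1 (min (2 ^ r) (V + 1)), f a =
      ∑ j ∈ range r, ∑ a ∈ Ico (2 ^ j) (min (2 ^ (j + 1)) (V + 1)), f a := by
  induction r with
  | zero => simp
  | succ r ih =>
    rw [sum_range_succ, ← ih]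
    have h2 : 1 ≤ 2 ^ r := Nat.one_le_two_pow
    rcases le_total (V + 1) (2 ^ r) with h | h
    · rw [min_eq_right h, min_eq_right (by rw [pow_succ]; omega), Ico_eq_empty (a := 2 ^ r) (by omega), sum_empty,
        add_zero]
    · rw [min_eq_left h, sum_Ico_consecutive _ h2 (by rw [pow_succ]; omega)]

open Finset in
/-- The sawtooth sums over all moduli `q ≤ Q`, for `a` in an initial range. Here `v = X^(1/12)`. -/
theorem saw_initial_le (v Λ : ℝ) (hv : 1 ≤ v) (hΛ1 : 1 + 12 * Real.log v ≤ Λ)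
    (hΛ : ∀ n : ℕ, 0 < n → (n : ℝ) ≤ 100 * v ^ 36 → (n.divisors.card : ℝ) ≤ Λ)
    (Q l : ℕ) (hQ : (Q : ℝ) ≤ v ^ 6) (hl : 0 < l) (hlv : (l : ℝ) ≤ v ^ 12)
    (V : ℕ → ℕ) (t s : ℕ → ℝ) (hV : ∀ q ∈ Icc 1 Q, (V q : ℝ) ≤ 2 * v ^ 6)
    (ht : ∀ q ∈ Icc 1 Q, 0 ≤ t q) (hZ : ∀ q ∈ Icc 1 Q, t q * q ≤ 2 * v ^ 12) :
    ∑ q ∈ Icc 1 Q, |∑ a ∈ Icc 1 (V q) with a.Coprime q,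
        saw (t q / a + s q - (((l : ZMod q) * (a : ZMod q)⁻¹ : ZMod q).val : ℝ) / q)| ≤
      1400 * Λ ^ 7 * v ^ 10 := by
  have hv0 : 0 < v := by linarith
  have hlv0 : 0 ≤ Real.log v := Real.log_nonneg hv
  have hW : (1 : ℝ) ≤ 2 * v ^ 6 := by nlinarith [one_le_pow₀ hv (n := 6)]
  obtain ⟨W, hWd⟩ : ∃ W : ℕ, W = ⌊2 * v ^ 6⌋₊ := ⟨_, rfl⟩
  have hW0 : W ≠ 0 := by rw [hWd]; exact (Nat.floor_pos.2 hW).ne'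
  have hWle : (W : ℝ) ≤ 2 * v ^ 6 := by rw [hWd]; exact Nat.floor_le (by positivity)
  obtain ⟨r, hr⟩ : ∃ r : ℕ, r = Nat.log 2 W + 1 := ⟨_, rfl⟩
  have hWr : W < 2 ^ r := by rw [hr]; exact Nat.lt_pow_succ_log_self (by norm_num) W
  have hrlow : 2 ^ (r - 1) ≤ W := by rw [hr, Nat.add_sub_cancel]; exact Nat.pow_log_le_self 2 hW0
  have hr2 : (r : ℝ) ≤ 2 * Λ := by
    have h1 : Real.log ((2 : ℝ) ^ (r - 1)) ≤ Real.log (2 * v ^ 6) :=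
      Real.log_le_log (by positivity) (le_trans (by exact_mod_cast hrlow) hWle)
    rw [Real.log_mul (by norm_num) (by positivity), Real.log_pow, Real.log_pow] at h1
    have h2 : ((r - 1 : ℕ) : ℝ) = r - 1 := by rw [Nat.cast_sub (by omega)]; simp
    rw [h2] at h1
    push_cast at h1
    have h3 := Real.log_two_gt_d9
    by_contra! h
    have h4 : 1 + 24 * Real.log v ≤ (r : ℝ) - 1 := by linarith
    have h5 : (1 + 24 * Real.log v) * Real.log 2 ≤ Real.log 2 + 6 * Real.log v :=
      (mul_le_mul_of_nonneg_right h4 (by linarith)).trans h1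
    have h6 : Real.log v ≤ 0 := by nlinarith
    have h7 : Real.log v = 0 := le_antisymm h6 hlv0
    rw [h7] at h1 hΛ1
    nlinarith
  have hsplit : ∀ q ∈ Icc 1 Q, |∑ a ∈ Icc 1 (V q) with a.Coprime q,
        saw (t q / a + s q - (((l : ZMod q) * (a : ZMod q)⁻¹ : ZMod q).val : ℝ) / q)| ≤
      ∑ j ∈ range r, |∑ a ∈ Ico (2 ^ j) (min (2 ^ (j + 1)) (V q + 1)) with a.Coprime q,
        saw (t q / a + s q - (((l : ZMod q) * (a : ZMod q)⁻¹ : ZMod q).val : ℝ) / q)| := by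
    intro q hq
    refine le_trans (le_of_eq ?_) (abs_sum_le_sum_abs _ _)
    congr 1
    simp only [sum_filter]
    rw [← sum_dyadic, min_eq_right]
    · rfl
    · have : V q ≤ W := by rw [hWd]; exact Nat.le_floor (hV q hq)
      omega
  refine (sum_le_sum hsplit).trans ?_
  rw [sum_comm]
  refine (sum_le_card_nsmul _ _ (700 * Λ ^ 6 * v ^ 10) fun j hj => ?_).trans ?_
  · rw [mem_range] at hj
    refine saw_dyadic_le v Λ hv hΛ1 hΛ Q l (2 ^ j) hQ hl hlv (by positivity) ?_ (fun _ => 2 ^ j)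
      (fun q => min (2 ^ (j + 1)) (V q + 1)) t s (fun _ _ => le_rfl) (fun q _ => ?_) ht hZ
    · refine le_trans ?_ hWle
      exact_mod_cast (Nat.pow_le_pow_right (by norm_num) (by omega)).trans hrlow
    · rw [← pow_succ']
      exact min_le_left _ _
  · rw [card_range, nsmul_eq_mul]
    calc (r : ℝ) * (700 * Λ ^ 6 * v ^ 10) ≤ 2 * Λ * (700 * Λ ^ 6 * v ^ 10) := by
          have : 0 ≤ Λ := by linarith
          gcongr
      _ = _ := by ring

/-! ### Asymptotics of the truncated inner sum -/

open Finset in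
theorem harmonic_real_bound (x : ℝ) (hx : 0 < x) :
    |∑ f ∈ Icc 1 ⌊x⌋₊, 1 / (f : ℝ) - (Real.log x + Real.eulerMascheroniConstant)| ≤ 2 / x := by
  have hγ1 := Real.one_half_lt_eulerMascheroniConstant
  have hγ2 := Real.eulerMascheroniConstant_lt_two_thirds
  rcases lt_or_ge x 1 with h | h
  · rw [Nat.floor_eq_zero.2 h]
    have h1 := Real.one_sub_inv_le_log_of_pos hx
    have h2 := Real.log_nonpos hx.le h.le
    have h3 : 1 < x⁻¹ := (one_lt_inv₀ hx).2 h
    rw [Icc_eq_empty (by norm_num), sum_empty, div_eq_mul_inv]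
    rw [abs_le]
    constructor <;> linarith
  · obtain ⟨n, hn⟩ : ∃ n : ℕ, n = ⌊x⌋₊ := ⟨_, rfl⟩
    have hn1 : 1 ≤ n := by rw [hn]; exact Nat.floor_pos.2 h
    have hnx : (n : ℝ) ≤ x := by rw [hn]; exact Nat.floor_le hx.le
    have hxn : x < n + 1 := by rw [hn]; exact Nat.lt_floor_add_one x
    have hn0 : (1 : ℝ) ≤ n := by exact_mod_cast hn1
    rw [← hn]
    have e : ∑ f ∈ Icc 1 n, 1 / (f : ℝ) = (harmonic n : ℝ) := by
      rw [harmonic_eq_sum_Icc]; push_cast; simp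
    rw [e]
    have h1 := Real.eulerMascheroniSeq_lt_eulerMascheroniConstant n
    have h2 := Real.eulerMascheroniConstant_lt_eulerMascheroniSeq' n
    rw [Real.eulerMascheroniSeq] at h1
    rw [Real.eulerMascheroniSeq', if_neg (by omega)] at h2
    have h3 : Real.log n ≤ Real.log x := Real.log_le_log (by linarith) hnx
    have h4 : Real.log x ≤ Real.log (n + 1) := Real.log_le_log hx hxn.le
    have h5 : Real.log (n + 1) - Real.log n ≤ 1 / n := by
      rw [← Real.log_div (by linarith) (by linarith)]
      refine (Real.log_le_sub_one_of_pos (by positivity)).trans (le_of_eq ?_)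
      field_simp; ring
    have h6 : 1 / (n : ℝ) ≤ 2 / x := by
      rw [div_le_div_iff₀ (by linarith) hx]; linarith
    rw [abs_le]
    constructor <;> linarith

/-- For fixed `U`, the function `n * log n - n - n * log U` is smallest at `n = U`. -/
theorem sub_le_mul_log (n U : ℝ) (hn : 0 < n) (hU : 0 < U) :
    n * Real.log U - U ≤ n * Real.log n - n := by
  have h := Real.log_le_sub_one_of_pos (div_pos hU hn)
  rw [Real.log_div hU.ne' hn.ne'] at h
  have h2 := mul_le_mul_of_nonneg_left h hn.le
  have e : n * (U / n - 1) = U - n := by field_simp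
  linarith

open Finset in
theorem sum_log_bounds (n : ℕ) (hn : 1 ≤ n) :
    n * Real.log n - n ≤ ∑ f ∈ Icc 1 n, Real.log f ∧
      ∑ f ∈ Icc 1 n, Real.log f ≤ n * Real.log n - n + 1 + Real.log n := by
  induction n, hn using Nat.le_induction with
  | base => simp
  | succ n hn ih =>
    have hn0 : (1 : ℝ) ≤ n := by exact_mod_cast hn
    rw [Finset.sum_Icc_succ_top (by omega)]
    have h1 := sub_le_mul_log n (n + 1) (by linarith) (by linarith)
    have h2 := sub_le_mul_log (n + 1) n (by linarith) (by linarith)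
    push_cast
    constructor <;> linarith

open Finset in
theorem sum_log_real (U : ℝ) (hU : 1 ≤ U) :
    |∑ f ∈ Icc 1 ⌊U⌋₊, Real.log f - (U * Real.log U - U)| ≤ 1 + Real.log U := by
  obtain ⟨n, hn⟩ : ∃ n : ℕ, n = ⌊U⌋₊ := ⟨_, rfl⟩
  have hn1 : 1 ≤ n := by rw [hn]; exact Nat.floor_pos.2 hU
  have hnx : (n : ℝ) ≤ U := by rw [hn]; exact Nat.floor_le (by linarith)
  have hxn : U < n + 1 := by rw [hn]; exact Nat.lt_floor_add_one U
  have hn0 : (1 : ℝ) ≤ n := by exact_mod_cast hn1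
  rw [← hn]
  obtain ⟨h1, h2⟩ := sum_log_bounds n hn1
  have h3 := sub_le_mul_log n U (by linarith) (by linarith)
  have h4 := sub_le_mul_log U n (by linarith) (by linarith)
  have h5 : Real.log n ≤ Real.log U := Real.log_le_log (by linarith) hnx
  have h6 : 0 ≤ Real.log n := Real.log_nonneg hn0
  have h7 : (U - n) * Real.log U ≤ 1 * Real.log U := by
    have := h6.trans h5
    gcongr
    linarith
  have h8 : 0 ≤ (U - n) * Real.log n := mul_nonneg (by linarith) h6
  rw [abs_le]
  constructor <;> linarith

/-- The quadratic polynomial `(ℓ + 2γ - 1)² + 1` of the main term. -/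
noncomputable def mainP (l : ℝ) : ℝ := (l + 2 * Real.eulerMascheroniConstant - 1) ^ 2 + 1

open Finset in
/-- The truncated inner sum of the main term; it vanishes for `U < 1`. -/
noncomputable def innerI (U : ℝ) : ℝ :=
  2 * ((2 * Real.log U + (2 * Real.eulerMascheroniConstant - 1)) * ∑ f ∈ Icc 1 ⌊U⌋₊, 1 / (f : ℝ)) -
    1 / U * ∑ f ∈ Icc 1 ⌊U⌋₊, (Real.log U + Real.log f + (2 * Real.eulerMascheroniConstant - 1))

open Finset in
/-- For `U ≥ 1` the asymptotics of harmonic and logarithmic sums apply; for `U < 1` the sum is empty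
and the polynomial is itself small compared with `1 / √U`. -/
theorem innerI_bound (U : ℝ) (hU : 0 < U) : |innerI U - mainP (2 * Real.log U)| ≤ 200 / √U := by
  have hγ1 := Real.one_half_lt_eulerMascheroniConstant
  have hγ2 := Real.eulerMascheroniConstant_lt_two_thirds
  have hs : 0 < √U := Real.sqrt_pos.2 hU
  rcases lt_or_ge U 1 with h | h
  · have e : innerI U = 0 := by
      rw [innerI, Nat.floor_eq_zero.2 h]
      simp
    rw [e, zero_sub, abs_neg, mainP, abs_of_nonneg (by positivity)]
    -- `|log U| ≤ 4 U^(-1/4)`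
    obtain ⟨u, hu⟩ : ∃ u : ℝ, u = √(√U) := ⟨_, rfl⟩
    have hu0 : 0 < u := by rw [hu]; exact Real.sqrt_pos.2 hs
    have hu2 : √U = u ^ 2 := by rw [hu, Real.sq_sqrt hs.le]
    have hu4 : U = u ^ 4 := by rw [← Real.sq_sqrt hU.le, hu2]; ring
    have hlog : Real.log U = 4 * Real.log u := by rw [hu4, Real.log_pow]; norm_num
    have hl1 : Real.log U ≤ 0 := Real.log_nonpos hU.le h.le
    have hl2 := Real.one_sub_inv_le_log_of_pos hu0
    have hu1 : u ≤ 1 := by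
      by_contra! h1
      have := Real.log_pos h1
      linarith
    have hi : 1 ≤ u⁻¹ := (one_le_inv₀ hu0).2 hu1
    rw [hu2, div_eq_mul_inv, ← inv_pow]
    generalize u⁻¹ = w at *
    have h5 : |2 * Real.log U + 2 * Real.eulerMascheroniConstant - 1| ≤ 9 * w := by
      rw [abs_le]; constructor <;> linarith
    have h6 := sq_le_sq' (abs_le.1 h5).1 (abs_le.1 h5).2
    nlinarith
  · obtain ⟨γ, hγ⟩ : ∃ γ, γ = Real.eulerMascheroniConstant := ⟨_, rfl⟩
    have hH := harmonic_real_bound U hU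
    have hL := sum_log_real U h
    rw [innerI, mainP]
    rw [sum_add_distrib, sum_add_distrib, sum_const, sum_const, nsmul_eq_mul, nsmul_eq_mul, Nat.card_Icc,
      Nat.add_sub_cancel]
    rw [← hγ] at hγ1 hγ2 hH ⊢
    have hn1 : (⌊U⌋₊ : ℝ) ≤ U := Nat.floor_le hU.le
    have hn2 : U < ⌊U⌋₊ + 1 := Nat.lt_floor_add_one U
    generalize ∑ f ∈ Icc 1 ⌊U⌋₊, 1 / (f : ℝ) = H at *
    generalize ∑ f ∈ Icc 1 ⌊U⌋₊, Real.log (f : ℝ) = S at *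
    generalize (⌊U⌋₊ : ℝ) = n at *
    have hl0 := Real.log_nonneg h
    have hl1 : Real.log U ≤ 2 * √U := by
      have h1 := Real.log_le_sub_one_of_pos hs
      rw [Real.log_sqrt hU.le] at h1
      linarith
    have hsU := Real.mul_self_sqrt hU.le
    have hs1 : 1 ≤ √U := Real.one_le_sqrt.2 h
    generalize Real.log U = x at *
    have e : 2 * ((2 * x + (2 * γ - 1)) * H) - 1 / U * (n * x + S + n * (2 * γ - 1)) -
        ((2 * x + 2 * γ - 1) ^ 2 + 1) =
        2 * ((2 * x + (2 * γ - 1)) * (H - (x + γ))) +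
        1 / U * ((U - n) * (x + (2 * γ - 1)) - (S - (U * x - U))) := by
      field_simp
      ring
    rw [e]
    have a1 : |2 * x + (2 * γ - 1)| ≤ 2 * x + 1 := by rw [abs_le]; constructor <;> linarith
    have a2 : |x + (2 * γ - 1)| ≤ x + 1 := by rw [abs_le]; constructor <;> linarith
    have a3 : |U - n| ≤ 1 := by rw [abs_le]; constructor <;> linarith
    calc _ ≤ |2 * ((2 * x + (2 * γ - 1)) * (H - (x + γ)))| +
          |1 / U * ((U - n) * (x + (2 * γ - 1)) - (S - (U * x - U)))| := abs_add_le _ _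
      _ ≤ 2 * ((2 * x + 1) * (2 / U)) + 1 / U * (1 * (x + 1) + (1 + x)) := by
          rw [abs_mul, abs_mul, abs_mul (1 / U), abs_of_pos (by positivity : 0 < 1 / U), abs_two]
          gcongr
          refine (abs_sub _ _).trans (add_le_add ?_ hL)
          rw [abs_mul]
          gcongr
      _ = (10 * x + 6) / U := by field_simp; ring
      _ ≤ 200 / √U := by
          rw [div_le_div_iff₀ hU hs]
          nlinarith

/-! ### The main term of one divisor of the shift -/

open ArithmeticFunction.Moebius in
/-- `∑ μ(e) / e² = 1 / ζ(2)`. -/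
theorem hasSum_moebius_sq : HasSum (fun e : ℕ => (μ e : ℝ) / (e : ℝ) ^ 2) (6 / Real.pi ^ 2) := by
  have h2 : (1 : ℝ) < (2 : ℂ).re := by norm_num
  have hsum : LSeriesSummable (fun n => ((μ n : ℤ) : ℂ)) 2 := ArithmeticFunction.LSeriesSummable_moebius_iff.2 h2
  have h := ArithmeticFunction.LSeries_zeta_mul_Lseries_moebius h2
  rw [ArithmeticFunction.LSeries_zeta_eq_riemannZeta h2, riemannZeta_two] at h
  have hs := hsum.hasSum
  have e : ∑' n, LSeries.term (fun n => ((μ n : ℤ) : ℂ)) 2 n = ((6 / Real.pi ^ 2 : ℝ) : ℂ) := by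
    have hpi : (Real.pi : ℂ) ≠ 0 := by exact_mod_cast Real.pi_ne_zero
    change (Real.pi : ℂ) ^ 2 / 6 * ∑' n, LSeries.term (fun n => ((μ n : ℤ) : ℂ)) 2 n = 1 at h
    push_cast
    rw [eq_div_iff (by positivity)]
    linear_combination 6 * h
  rw [e] at hs
  have ht : ∀ n : ℕ, LSeries.term (fun n => ((μ n : ℤ) : ℂ)) 2 n = (((μ n : ℝ) / (n : ℝ) ^ 2 : ℝ) : ℂ) := by
    intro n
    rw [LSeries.term_def]
    split_ifs with h0
    · simp [h0]
    · push_cast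
      norm_cast
  rw [show LSeries.term (fun n => ((μ n : ℤ) : ℂ)) 2 = _ from funext ht] at hs
  exact Complex.hasSum_ofReal.1 hs

theorem summable_rpow_three_halves : Summable (fun e : ℕ => 1 / (e : ℝ) ^ ((3 : ℝ) / 2)) :=
  Real.summable_one_div_nat_rpow.2 (by norm_num)

theorem sqrt_div_sq (e : ℕ) (he : 0 < e) : √(e : ℝ) / (e : ℝ) ^ 2 = 1 / (e : ℝ) ^ ((3 : ℝ) / 2) := by
  have he' : (0 : ℝ) < e := by exact_mod_cast he
  rw [div_eq_div_iff (by positivity) (by positivity), Real.sqrt_eq_rpow, ← Real.rpow_add he', one_mul]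
  rw [← Real.rpow_natCast]
  norm_num

open ArithmeticFunction.Moebius in
/-- Weights of size `√e` are harmless against `μ(e) / e²`. This covers both powers of `log e` and the
error terms in `innerI_bound`. -/
theorem moebius_weighted_summable (F : ℕ → ℝ) (K : ℝ) (hF : ∀ e : ℕ, 0 < e → |F e| ≤ K * √e) :
    Summable (fun e : ℕ => (μ e : ℝ) / (e : ℝ) ^ 2 * F e) ∧
      |∑' e : ℕ, (μ e : ℝ) / (e : ℝ) ^ 2 * F e| ≤ K * ∑' e : ℕ, 1 / (e : ℝ) ^ ((3 : ℝ) / 2) := by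
  have hb : ∀ e : ℕ, ‖(μ e : ℝ) / (e : ℝ) ^ 2 * F e‖ ≤ K * (1 / (e : ℝ) ^ ((3 : ℝ) / 2)) := by
    intro e
    rcases Nat.eq_zero_or_pos e with rfl | he
    · simp
    · rw [← sqrt_div_sq e he, Real.norm_eq_abs, abs_mul, abs_div]
      have h1 : |(μ e : ℝ)| ≤ 1 := by exact_mod_cast ArithmeticFunction.abs_moebius_le_one
      rw [abs_of_nonneg (by positivity : (0 : ℝ) ≤ (e : ℝ) ^ 2)]
      calc |(μ e : ℝ)| / (e : ℝ) ^ 2 * |F e| ≤ 1 / (e : ℝ) ^ 2 * (K * √e) := by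
            gcongr
            exact hF e he
        _ = _ := by ring
  have hs := summable_rpow_three_halves.mul_left K
  refine ⟨Summable.of_norm_bounded hs hb, ?_⟩
  rw [← tsum_mul_left]
  exact (tsum_of_norm_bounded hs.hasSum hb)

/-- The linear shift `2γ - 1 - 2 log (g e)` of `log X` in the main term. -/
noncomputable def shiftA (g e : ℕ) : ℝ :=
  2 * Real.eulerMascheroniConstant - 1 - 2 * Real.log (g * e)

theorem shiftA_abs_le (g : ℕ) (hg : 0 < g) : ∃ K : ℝ, 0 ≤ K ∧ ∀ e : ℕ, 0 < e →
    |shiftA g e| ≤ K * √e ∧ shiftA g e ^ 2 ≤ K * √e := by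
  have hγ1 := Real.one_half_lt_eulerMascheroniConstant
  have hγ2 := Real.eulerMascheroniConstant_lt_two_thirds
  have hl : 0 ≤ Real.log g := Real.log_natCast_nonneg g
  refine ⟨(9 + 2 * Real.log g) ^ 2, by positivity, fun e he => ?_⟩
  have he1 : (1 : ℝ) ≤ e := by exact_mod_cast he
  have hg1 : (1 : ℝ) ≤ g := by exact_mod_cast hg
  obtain ⟨u, hu⟩ : ∃ u : ℝ, u = √(√e) := ⟨_, rfl⟩
  have hu1 : 1 ≤ u := by rw [hu, Real.one_le_sqrt, Real.one_le_sqrt]; exact he1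
  have hu2 : √(e : ℝ) = u ^ 2 := by rw [hu, Real.sq_sqrt (Real.sqrt_nonneg _)]
  have hu4 : (e : ℝ) = u ^ 4 := by rw [← Real.sq_sqrt (Nat.cast_nonneg e), hu2]; ring
  have hle : Real.log e = 4 * Real.log u := by rw [hu4, Real.log_pow]; norm_num
  have hlu := Real.log_le_sub_one_of_pos (by linarith : 0 < u)
  have hlu0 := Real.log_nonneg hu1
  rw [hu2, shiftA, Real.log_mul (by linarith) (by linarith), hle]
  generalize Real.log g = x at *
  have h1 : |2 * Real.eulerMascheroniConstant - 1 - 2 * (x + 4 * Real.log u)| ≤ (9 + 2 * x) * u := by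
    rw [abs_le]
    constructor <;> nlinarith
  have h2 := sq_le_sq' (abs_le.1 h1).1 (abs_le.1 h1).2
  refine ⟨h1.trans ?_, h2.trans (by rw [mul_pow])⟩
  rw [← mul_pow, sq]
  have : 1 ≤ (9 + 2 * x) * u := by nlinarith
  nlinarith

/-- The coefficient of `log X` contributed by the divisor `g` of `h`. -/
noncomputable def coefOne (g : ℕ) : ℝ :=
  ∑' e : ℕ, (ArithmeticFunction.moebius e : ℝ) / (e : ℝ) ^ 2 * (2 * shiftA g e)

/-- The constant coefficient contributed by the divisor `g` of `h`. -/
noncomputable def coefZero (g : ℕ) : ℝ :=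
  ∑' e : ℕ, (ArithmeticFunction.moebius e : ℝ) / (e : ℝ) ^ 2 * (shiftA g e ^ 2 + 1)

open ArithmeticFunction.Moebius in
/-- The full series of the main term, expanded as a quadratic polynomial in `2 * log Y = log X`. -/
theorem mainP_hasSum (g : ℕ) (hg : 0 < g) (Y : ℝ) (hY : 0 < Y) :
    HasSum (fun e : ℕ => (μ e : ℝ) / (e : ℝ) ^ 2 * mainP (2 * Real.log (Y / (g * e))))
      (6 / Real.pi ^ 2 * (2 * Real.log Y) ^ 2 + coefOne g * (2 * Real.log Y) + coefZero g) := by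
  obtain ⟨K, hK0, hK⟩ := shiftA_abs_le g hg
  have h1 := (moebius_weighted_summable (fun e => 2 * shiftA g e) (2 * K) (fun e he => by
    rw [abs_mul, abs_two, mul_assoc]
    exact mul_le_mul_of_nonneg_left (hK e he).1 zero_le_two)).1.hasSum
  have h0 := (moebius_weighted_summable (fun e => shiftA g e ^ 2 + 1) (K + 1) (fun e he => by
    rw [abs_of_nonneg (by positivity)]
    have : 1 ≤ √(e : ℝ) := Real.one_le_sqrt.2 (by exact_mod_cast he)
    have := (hK e he).2
    linarith)).1.hasSum
  have h2 := hasSum_moebius_sq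
  have h := ((h2.mul_right ((2 * Real.log Y) ^ 2)).add (h1.mul_right (2 * Real.log Y))).add h0
  refine (congrArg (HasSum · _) (funext fun e => ?_)).mpr h
  rcases Nat.eq_zero_or_pos e with rfl | he
  · simp
  have he1 : (0 : ℝ) < e := by exact_mod_cast he
  have hg1 : (0 : ℝ) < g := by exact_mod_cast hg
  rw [mainP, shiftA, Real.log_div hY.ne' (by positivity)]
  ring

open Finset ArithmeticFunction.Moebius in
/-- Replacing the truncated inner sums by the full polynomial main term. -/
theorem truncated_main : ∃ C : ℝ, 0 ≤ C ∧ ∀ (g : ℕ) (_ : 0 < g) (Y : ℝ) (_ : 0 < Y) (N : ℕ)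
    (_ : N = ⌊Y / g⌋₊),
    |∑ e ∈ Icc 1 N, (μ e : ℝ) / (e : ℝ) ^ 2 * innerI (Y / (g * e)) -
      (6 / Real.pi ^ 2 * (2 * Real.log Y) ^ 2 + coefOne g * (2 * Real.log Y) + coefZero g)| ≤
      C * √(g / Y) := by
  refine ⟨200 * ∑' e : ℕ, 1 / (e : ℝ) ^ ((3 : ℝ) / 2), by positivity, ?_⟩
  intro g hg Y hY N hN
  have hg1 : (0 : ℝ) < g := by exact_mod_cast hg
  have h1 := mainP_hasSum g hg Y hY
  have h2 : HasSum (fun e : ℕ => (μ e : ℝ) / (e : ℝ) ^ 2 * innerI (Y / (g * e)))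
      (∑ e ∈ Icc 1 N, (μ e : ℝ) / (e : ℝ) ^ 2 * innerI (Y / (g * e))) := by
    refine hasSum_sum_of_ne_finset_zero fun e he => ?_
    rcases Nat.eq_zero_or_pos e with rfl | he0
    · simp
    have he1 : (0 : ℝ) < e := by exact_mod_cast he0
    have : ⌊Y / (g * e)⌋₊ = 0 := by
      rw [Nat.floor_eq_zero, div_lt_one (by positivity)]
      by_contra! h
      apply he
      rw [mem_Icc, hN]
      refine ⟨he0, Nat.le_floor ?_⟩
      rw [le_div_iff₀ hg1]
      linarith
    rw [innerI, this]
    simp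
  have h3 := (h2.sub h1)
  have h4 : ∀ e : ℕ, 0 < e → |innerI (Y / (g * e)) - mainP (2 * Real.log (Y / (g * e)))| ≤
      (200 * √(g / Y)) * √e := by
    intro e he
    have he1 : (0 : ℝ) < e := by exact_mod_cast he
    refine (innerI_bound _ (by positivity)).trans (le_of_eq ?_)
    rw [mul_assoc, ← Real.sqrt_mul (by positivity), div_eq_mul_inv, ← Real.sqrt_inv, inv_div]
    congr 2
    ring
  have h5 := (moebius_weighted_summable _ _ h4).2
  simp only [← mul_sub] at h3
  rw [h3.tsum_eq] at h5
  refine h5.trans (le_of_eq (by ring))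

/-! ### The hyperbola method -/

open Finset in
/-- Dirichlet's hyperbola method for a symmetric function. -/
theorem hyperbola (f : ℕ → ℕ → ℝ) (hf : ∀ a b, f a b = f b a) (N s : ℕ) (h1 : s * s ≤ N)
    (h2 : N < (s + 1) * (s + 1)) :
    ∑ n ∈ Icc 1 N, ∑ x ∈ n.divisorsAntidiagonal, f x.1 x.2 =
      2 * ∑ a ∈ Icc 1 s, ∑ b ∈ Icc 1 (N / a), f a b - ∑ a ∈ Icc 1 s, ∑ b ∈ Icc 1 s, f a b := by
  have hsN : s ≤ N := (Nat.le_mul_self s).trans h1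
  have e1 : ∑ n ∈ Icc 1 N, ∑ x ∈ n.divisorsAntidiagonal, f x.1 x.2 =
      ∑ x ∈ Icc 1 N ×ˢ Icc 1 N, if x.1 * x.2 ≤ N then f x.1 x.2 else 0 := by
    rw [← sum_filter, ← sum_fiberwise_of_maps_to (s := {x ∈ Icc 1 N ×ˢ Icc 1 N | x.1 * x.2 ≤ N})
      (t := Icc 1 N) (g := fun x => x.1 * x.2)]
    · refine sum_congr rfl fun n hn => sum_congr ?_ fun _ _ => rfl
      rw [mem_Icc] at hn
      ext ⟨a, b⟩
      simp only [Nat.mem_divisorsAntidiagonal, mem_filter, mem_product, mem_Icc]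
      constructor
      · rintro ⟨rfl, h0⟩
        have ha : 0 < a := Nat.pos_of_ne_zero fun h => h0 (by rw [h, zero_mul])
        have hb : 0 < b := Nat.pos_of_ne_zero fun h => h0 (by rw [h, mul_zero])
        refine ⟨⟨⟨⟨ha, ?_⟩, hb, ?_⟩, hn.2⟩, rfl⟩
        · exact (Nat.le_mul_of_pos_right a hb).trans hn.2
        · exact (Nat.le_mul_of_pos_left b ha).trans hn.2
      · rintro ⟨⟨-, -⟩, rfl⟩
        exact ⟨rfl, by omega⟩
    · intro x hx
      simp only [mem_filter, mem_product, mem_Icc] at hx ⊢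
      exact ⟨Nat.mul_pos hx.1.1.1 hx.1.2.1, hx.2⟩
  have e2 : ∀ x ∈ Icc 1 N ×ˢ Icc 1 N, (if x.1 * x.2 ≤ N then f x.1 x.2 else 0) =
      (if x.1 ≤ s then (if x.2 ≤ N / x.1 then f x.1 x.2 else 0) else 0) +
      (if x.2 ≤ s then (if x.1 ≤ N / x.2 then f x.2 x.1 else 0) else 0) -
      (if x.1 ≤ s then (if x.2 ≤ s then f x.1 x.2 else 0) else 0) := by
    rintro ⟨a, b⟩ hx
    simp only [mem_product, mem_Icc] at hx ⊢
    have h3 : b ≤ N / a ↔ a * b ≤ N := by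
      rw [Nat.le_div_iff_mul_le hx.1.1, mul_comm]
    have h4 : a ≤ N / b ↔ a * b ≤ N := by
      rw [Nat.le_div_iff_mul_le hx.2.1]
    simp only [h3, h4, hf b a]
    by_cases ha : a ≤ s
    · by_cases hb : b ≤ s
      · have : a * b ≤ N := (Nat.mul_le_mul ha hb).trans h1
        simp [ha, hb, this]
      · simp [ha, hb]
    · by_cases hb : b ≤ s
      · simp [ha, hb]
      · have : ¬ a * b ≤ N := by
          have : (s + 1) * (s + 1) ≤ a * b := Nat.mul_le_mul (by omega) (by omega)
          omega
        simp [ha, hb, this]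
  have e3 : ∀ (M : ℕ → ℕ), (∀ a, 1 ≤ a → M a ≤ N) → ∑ a ∈ Icc 1 N, ∑ b ∈ Icc 1 N, (if a ≤ s then (if b ≤ M a then f a b else 0) else 0) =
      ∑ a ∈ Icc 1 s, ∑ b ∈ Icc 1 (M a), f a b := by
    intro M hM
    have hs : Icc 1 s = {a ∈ Icc 1 N | a ≤ s} := by
      ext a; simp only [mem_filter, mem_Icc]; omega
    rw [hs, sum_filter]
    refine sum_congr rfl fun a ha => ?_
    split_ifs with h
    · have hs : Icc 1 (M a) = {b ∈ Icc 1 N | b ≤ M a} := by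
        have := hM a (mem_Icc.1 ha).1
        ext a; simp only [mem_filter, mem_Icc]; omega
      rw [hs, sum_filter]
    · simp
  rw [e1, sum_congr rfl e2, sum_sub_distrib, sum_add_distrib]
  have e4 := e3 (fun a => N / a) fun a _ => Nat.div_le_self N a
  have e5 := e3 (fun a => s) fun a _ => hsN
  rw [sum_product, sum_product_right, sum_product]
  simp only [] at *
  rw [e4, e5]
  ring

theorem floor_sqrt_mul_self (z : ℝ) (hz : 0 ≤ z) :
    ⌊√z⌋₊ * ⌊√z⌋₊ ≤ ⌊z⌋₊ ∧ ⌊z⌋₊ < (⌊√z⌋₊ + 1) * (⌊√z⌋₊ + 1) := by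
  have h0 := Real.sqrt_nonneg z
  have h1 := Nat.floor_le h0
  have h2 := Nat.lt_floor_add_one √z
  have h3 := Real.mul_self_sqrt hz
  constructor
  · refine Nat.le_floor ?_
    push_cast
    nlinarith
  · rw [Nat.floor_lt hz]
    push_cast
    nlinarith

open Finset in
/-- The number of `1 ≤ b ≤ y` in a residue class, in terms of the sawtooth function. -/
theorem count_residue (q β : ℕ) (hq : 0 < q) (y : ℝ) (hy : 0 ≤ y) :
    ((#{b ∈ Icc 1 ⌊y⌋₊ | b ≡ β [MOD q]} : ℕ) : ℝ) =
      y / q - saw (y / q - β / q) + saw (0 - β / q) := by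
  have h := Nat.Ioc_filter_modEq_card 0 ⌊y⌋₊ hq β
  have e : Ioc 0 ⌊y⌋₊ = Icc 1 ⌊y⌋₊ := by ext; simp only [mem_Ioc, mem_Icc]; omega
  rw [e] at h
  have h1 : ⌊(((⌊y⌋₊ : ℕ) : ℚ) - β) / (q : ℚ)⌋ = ⌊y / q - β / q⌋ := by
    rw [← sub_div, Int.floor_div_natCast, Int.floor_div_natCast, Int.floor_sub_natCast,
      Int.floor_sub_natCast, Int.floor_natCast, Int.natCast_floor_eq_floor hy]
  have h2 : ⌊(((0 : ℕ) : ℚ) - β) / (q : ℚ)⌋ = ⌊(0 : ℝ) - β / q⌋ := by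
    rw [show (0 : ℝ) - β / q = (((0 : ℕ) : ℝ) - β) / q by push_cast; ring, Int.floor_div_natCast,
      Int.floor_div_natCast, Int.floor_sub_natCast, Int.floor_sub_natCast, Int.floor_natCast,
      Int.floor_natCast]
  rw [h1, h2, max_eq_left] at h
  · have h' : ((#{b ∈ Icc 1 ⌊y⌋₊ | b ≡ β [MOD q]} : ℕ) : ℝ) =
        ((⌊y / q - β / q⌋ - ⌊(0 : ℝ) - β / q⌋ : ℤ) : ℝ) := by
      rw [← h]; push_cast; rfl
    rw [h', saw, saw]
    push_cast
    simp only [Int.fract]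
    ring
  · rw [sub_nonneg]
    gcongr
    positivity

/-! ### Reduction to divisor sums in arithmetic progressions -/

open Finset in
/-- The sum of the divisor function over `m ≤ M` in the residue class of `h` modulo `d`. -/
noncomputable def progTau (h d M : ℕ) : ℝ :=
  ∑ m ∈ Icc 1 M with m ≡ h [MOD d], (m.divisors.card : ℝ)

open Finset in
/-- The number of `1 ≤ b ≤ M` with `a b ≡ h` modulo `d`. -/
def cnt (h d a M : ℕ) : ℕ := #{b ∈ Icc 1 M | a * b ≡ h [MOD d]}

open Finset in
/-- The hyperbola method for the divisor function in a residue class. -/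
theorem progTau_eq (h d : ℕ) (z : ℝ) (hz : 0 ≤ z) :
    progTau h d ⌊z⌋₊ = 2 * ∑ a ∈ Icc 1 ⌊√z⌋₊, (cnt h d a ⌊z / a⌋₊ : ℝ) -
      ∑ a ∈ Icc 1 ⌊√z⌋₊, (cnt h d a ⌊√z⌋₊ : ℝ) := by
  obtain ⟨h1, h2⟩ := floor_sqrt_mul_self z hz
  have := hyperbola (fun a b => if a * b ≡ h [MOD d] then 1 else 0)
    (fun a b => by simp only [mul_comm]) _ _ h1 h2
  simp only [Nat.floor_div_natCast, cnt, card_eq_sum_ones, sum_filter]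
  push_cast
  rw [← this, progTau, sum_filter]
  refine sum_congr rfl fun n _ => ?_
  rw [sum_congr rfl (g := fun _ => if n ≡ h [MOD d] then (1 : ℝ) else 0)]
  · rw [sum_const, nsmul_eq_mul, mul_ite, mul_one, mul_zero, ← Nat.map_div_right_divisors, card_map]
  · intro x hx
    rw [(Nat.mem_divisorsAntidiagonal.1 hx).1]

open Finset in
theorem card_residue_le (a h v d : ℕ) (hd : 0 < d) :
    ((#{m ∈ Ioc a (a + h) | m ≡ v [MOD d]} : ℕ) : ℝ) ≤ h / d + 1 := by
  have h1 := Nat.Ioc_filter_modEq_card a (a + h) hd v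
  have hd' : (0 : ℚ) < d := by exact_mod_cast hd
  have h2 := Int.floor_le ((((a + h : ℕ) : ℚ) - v) / (d : ℚ))
  have h3 := Int.lt_floor_add_one (((a : ℚ) - v) / (d : ℚ))
  have h4 : (((a + h : ℕ) : ℚ) - v) / (d : ℚ) = ((a : ℚ) - v) / (d : ℚ) + h / d := by
    push_cast; ring
  have h5 : ((#{m ∈ Ioc a (a + h) | m ≡ v [MOD d]} : ℕ) : ℚ) ≤ h / d + 1 := by
    have e : ((#{m ∈ Ioc a (a + h) | m ≡ v [MOD d]} : ℕ) : ℚ) =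
      (((#{m ∈ Ioc a (a + h) | m ≡ v [MOD d]} : ℕ) : ℤ) : ℚ) := by push_cast; rfl
    rw [e, h1]
    push_cast
    refine max_le ?_ (by positivity)
    push_cast at h2 h4
    linarith
  have h6 := (Rat.cast_le (K := ℝ)).2 h5
  push_cast at h6
  exact h6

open Finset in
/-- The values `d * c + h` run over the residue class of `h` modulo `d` in `(h, M + h]`, up to the
end point; shifting this interval to `[1, M]` costs two intervals of length `h`. -/
theorem shifted_sum_le (h d M : ℕ) (hd : 0 < d) (Λ : ℝ)
    (hΛ : ∀ n : ℕ, 0 < n → n ≤ M + h → (n.divisors.card : ℝ) ≤ Λ) (hΛ0 : 0 ≤ Λ) :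
    |∑ c ∈ Icc 1 (M / d), ((d * c + h).divisors.card : ℝ) - progTau h d M| ≤
      2 * Λ * (h / d + 1) := by
  have hinj : Set.InjOn (fun c => d * c + h) (Icc 1 (M / d)) := by
    intro a _ b _ hab
    exact Nat.eq_of_mul_eq_mul_left hd (Nat.add_right_cancel hab)
  have hI : ∑ c ∈ Icc 1 (M / d), ((d * c + h).divisors.card : ℝ) =
      ∑ m ∈ (Icc 1 (M / d)).image (fun c => d * c + h), (m.divisors.card : ℝ) :=
    (sum_image hinj (f := fun m : ℕ => (m.divisors.card : ℝ))).symm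
  rw [hI, progTau, ← sum_sdiff_sub_sum_sdiff]
  have hsub : ∀ (S : Finset ℕ) (a : ℕ), (∀ m ∈ S, 0 < m ∧ m ≤ M + h) →
      S ⊆ {m ∈ Ioc a (a + h) | m ≡ h [MOD d]} →
      0 ≤ ∑ m ∈ S, (m.divisors.card : ℝ) ∧ ∑ m ∈ S, (m.divisors.card : ℝ) ≤ Λ * (h / d + 1) := by
    intro S a hS hSa
    refine ⟨sum_nonneg fun _ _ => Nat.cast_nonneg _, ?_⟩
    refine (sum_le_card_nsmul _ _ Λ fun m hm => hΛ m (hS m hm).1 (hS m hm).2).trans ?_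
    rw [nsmul_eq_mul, mul_comm]
    refine mul_le_mul_of_nonneg_left (le_trans ?_ (card_residue_le a h h d hd)) hΛ0
    exact_mod_cast card_le_card hSa
  have hdm : d * (M / d) ≤ M := Nat.mul_div_le M d
  have h1 := hsub ((Icc 1 (M / d)).image (fun c => d * c + h) \ {m ∈ Icc 1 M | m ≡ h [MOD d]}) M
    (fun m hm => by
      simp only [mem_sdiff, mem_image, mem_Icc] at hm
      obtain ⟨⟨c, hc, rfl⟩, -⟩ := hm
      have h3 := Nat.mul_le_mul_left d hc.2
      have h4 := Nat.mul_pos hd hc.1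
      constructor <;> omega)
    (fun m hm => by
      simp only [mem_sdiff, mem_image, mem_Icc, mem_filter, not_and, mem_Ioc] at hm ⊢
      obtain ⟨⟨c, hc, rfl⟩, h2⟩ := hm
      have h3 := Nat.mul_le_mul_left d hc.2
      have h4 := Nat.mul_pos hd hc.1
      have h5 : d * c + h ≡ h [MOD d] := by simp [Nat.ModEq]
      refine ⟨⟨?_, by omega⟩, h5⟩
      by_contra! h6
      exact h2 ⟨by omega, h6⟩ h5)
  have h2 := hsub ({m ∈ Icc 1 M | m ≡ h [MOD d]} \ (Icc 1 (M / d)).image (fun c => d * c + h)) 0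
    (fun m hm => by
      simp only [mem_sdiff, mem_Icc, mem_filter] at hm
      omega)
    (fun m hm => by
      simp only [mem_sdiff, mem_image, mem_Icc, mem_filter, not_exists, not_and, mem_Ioc] at hm ⊢
      obtain ⟨⟨hm1, hm2⟩, h3⟩ := hm
      refine ⟨⟨by omega, ?_⟩, hm2⟩
      by_contra! h4
      obtain ⟨c, hc⟩ := (Nat.modEq_iff_dvd' (by omega)).1 hm2.symm
      refine h3 c ⟨?_, ?_⟩ (by omega)
      · by_contra! h5
        have : c = 0 := by omega
        rw [this] at hc
        omega
      · rw [Nat.le_div_iff_mul_le hd, mul_comm]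
        omega)
  rw [abs_le]
  constructor <;> linarith [h1.1, h1.2, h2.1, h2.2]

open Finset in
/-- The correlation sum reduced to sums of the divisor function in arithmetic progressions. -/
theorem correlation_eq (h : ℕ) (X Λ : ℝ) (hX : 1 ≤ X) (hh : (h : ℝ) ≤ √X)
    (hΛ1 : 1 + Real.log X ≤ Λ)
    (hΛ : ∀ n : ℕ, 0 < n → (n : ℝ) ≤ 2 * X → (n.divisors.card : ℝ) ≤ Λ) :
    |∑ n ∈ Icc 1 ⌊X⌋₊, (n.divisors.card : ℝ) * ((n + h).divisors.card : ℝ) -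
      (2 * ∑ d ∈ Icc 1 ⌊√X⌋₊, progTau h d ⌊X⌋₊ -
        ∑ d ∈ Icc 1 ⌊√X⌋₊, progTau h d ⌊√X * d⌋₊)| ≤ 12 * Λ ^ 2 * √X := by
  have hX0 : 0 ≤ X := by linarith
  have hY := Real.sqrt_nonneg X
  have hYY := Real.mul_self_sqrt hX0
  have hY1 : 1 ≤ √X := Real.one_le_sqrt.2 hX
  have hYX : √X ≤ X := by nlinarith
  have hlX := Real.log_nonneg hX
  have hΛ0 : 1 ≤ Λ := by linarith
  obtain ⟨h1, h2⟩ := floor_sqrt_mul_self X hX0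
  have hD : (⌊√X⌋₊ : ℝ) ≤ √X := Nat.floor_le hY
  have hyp := hyperbola (fun a b => ((a * b + h).divisors.card : ℝ))
    (fun a b => by simp only [mul_comm]) _ _ h1 h2
  have e : ∑ n ∈ Icc 1 ⌊X⌋₊, (n.divisors.card : ℝ) * ((n + h).divisors.card : ℝ) =
      ∑ n ∈ Icc 1 ⌊X⌋₊, ∑ x ∈ n.divisorsAntidiagonal, ((x.1 * x.2 + h).divisors.card : ℝ) := by
    refine sum_congr rfl fun n _ => ?_
    rw [sum_congr rfl (g := fun _ => ((n + h).divisors.card : ℝ))]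
    · rw [sum_const, nsmul_eq_mul, ← Nat.map_div_right_divisors, card_map]
    · intro x hx
      rw [(Nat.mem_divisorsAntidiagonal.1 hx).1]
  rw [e, hyp]
  have key : ∀ M : ℕ → ℝ, (∀ d ∈ Icc 1 ⌊√X⌋₊, 0 ≤ M d ∧ M d ≤ X) →
      |∑ d ∈ Icc 1 ⌊√X⌋₊, ∑ c ∈ Icc 1 (⌊M d⌋₊ / d), ((d * c + h).divisors.card : ℝ) -
        ∑ d ∈ Icc 1 ⌊√X⌋₊, progTau h d ⌊M d⌋₊| ≤ 4 * Λ ^ 2 * √X := by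
    intro M hM
    rw [← sum_sub_distrib]
    have h3 : ∀ d ∈ Icc 1 ⌊√X⌋₊, |∑ c ∈ Icc 1 (⌊M d⌋₊ / d), ((d * c + h).divisors.card : ℝ) -
        progTau h d ⌊M d⌋₊| ≤ 2 * Λ * (h * (1 / d) + 1) := by
      intro d hd
      refine (shifted_sum_le h d _ (mem_Icc.1 hd).1 Λ ?_ (by linarith)).trans (le_of_eq (by ring))
      intro n hn0 hn
      refine hΛ n hn0 ?_
      have h4 := Nat.floor_le (hM d hd).1
      have h5 := (hM d hd).2
      have h6 : (n : ℝ) ≤ ⌊M d⌋₊ + h := by exact_mod_cast hn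
      linarith
    refine (abs_sum_le_sum_abs _ _).trans ((sum_le_sum h3).trans ?_)
    rw [← mul_sum, sum_add_distrib, ← mul_sum, sum_const, Nat.card_Icc, nsmul_eq_mul,
      Nat.add_sub_cancel, mul_one]
    have h4 : ∑ d ∈ Icc 1 ⌊√X⌋₊, 1 / (d : ℝ) ≤ Λ := by
      refine (sum_Icc_inv_le _).trans (le_trans ?_ hΛ1)
      have h5 : 0 < ⌊√X⌋₊ := Nat.floor_pos.2 hY1
      have : Real.log ⌊√X⌋₊ ≤ Real.log X :=
        Real.log_le_log (by exact_mod_cast h5) (hD.trans hYX)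
      linarith
    calc 2 * Λ * (h * ∑ d ∈ Icc 1 ⌊√X⌋₊, 1 / (d : ℝ) + ⌊√X⌋₊) ≤ 2 * Λ * (√X * Λ + √X * 1) := by
          rw [mul_one]; gcongr
      _ ≤ 2 * Λ * (√X * Λ + √X * Λ) := by gcongr
      _ = _ := by ring
  have k1 := key (fun _ => X) fun _ _ => ⟨hX0, le_rfl⟩
  have k2 := key (fun d => √X * d) fun d hd => ⟨by positivity, by
    have : (d : ℝ) ≤ ⌊√X⌋₊ := by exact_mod_cast (mem_Icc.1 hd).2
    calc √X * d ≤ √X * √X := by gcongr; linarith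
      _ = X := hYY⟩
  have e2 : ∑ d ∈ Icc 1 ⌊√X⌋₊, ∑ c ∈ Icc 1 (⌊√X * d⌋₊ / d), ((d * c + h).divisors.card : ℝ) =
      ∑ d ∈ Icc 1 ⌊√X⌋₊, ∑ c ∈ Icc 1 ⌊√X⌋₊, ((d * c + h).divisors.card : ℝ) := by
    refine sum_congr rfl fun d hd => ?_
    have : (d : ℝ) ≠ 0 := by
      have := (mem_Icc.1 hd).1
      positivity
    rw [← Nat.floor_div_natCast, mul_div_cancel_right₀ _ this]
  rw [e2] at k2
  rw [abs_le] at k1 k2 ⊢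
  constructor <;> linarith [k1.1, k1.2, k2.1, k2.2]

/-! ### Sorting by the greatest common divisor -/

open Finset in
theorem sum_Icc_multiples (D g : ℕ) (hg : 0 < g) (G : ℕ → ℝ) (hG : ∀ d, 0 < d → ¬ g ∣ d → G d = 0) :
    ∑ d ∈ Icc 1 D, G d = ∑ q ∈ Icc 1 (D / g), G (g * q) := by
  have hinj : Set.InjOn (fun q => g * q) (Icc 1 (D / g)) := fun a _ b _ hab =>
    Nat.eq_of_mul_eq_mul_left hg hab
  rw [← sum_image hinj (f := G)]
  symm
  refine sum_subset ?_ ?_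
  · intro d hd
    simp only [mem_image, mem_Icc] at hd ⊢
    obtain ⟨q, hq, rfl⟩ := hd
    exact ⟨Nat.mul_pos hg hq.1, (Nat.mul_le_mul_left g hq.2).trans (Nat.mul_div_le D g)⟩
  · intro d hd hd2
    simp only [mem_image, mem_Icc, not_exists, not_and] at hd hd2
    refine hG d hd.1 ?_
    rintro ⟨q, rfl⟩
    refine hd2 q ⟨Nat.pos_of_ne_zero ?_, ?_⟩ rfl
    · rintro rfl
      omega
    · rw [Nat.le_div_iff_mul_le hg, mul_comm]
      exact hd.2

open Finset in
/-- Sorting pairs `(d, a)` by their greatest common divisor. -/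
theorem sum_gcd_reindex (h D : ℕ) (hh : 0 < h) (A : ℕ → ℕ) (G : ℕ → ℕ → ℝ)
    (hG : ∀ d a, 0 < d → 0 < a → ¬ a.gcd d ∣ h → G d a = 0) :
    ∑ d ∈ Icc 1 D, ∑ a ∈ Icc 1 (A d), G d a =
      ∑ g ∈ h.divisors, ∑ q ∈ Icc 1 (D / g), ∑ a ∈ Icc 1 (A (g * q) / g) with a.Coprime q,
        G (g * q) (g * a) := by
  have h1 : ∀ d ∈ Icc 1 D, ∀ a ∈ Icc 1 (A d), G d a =
      ∑ g ∈ h.divisors, if a.gcd d = g then G d a else 0 := by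
    intro d hd a ha
    rw [sum_ite_eq]
    split_ifs with h2
    · rfl
    · refine hG d a (mem_Icc.1 hd).1 (mem_Icc.1 ha).1 fun h3 => h2 ?_
      exact Nat.mem_divisors.2 ⟨h3, hh.ne'⟩
  rw [sum_congr rfl fun d hd => sum_congr rfl (h1 d hd), sum_congr rfl fun d _ => sum_comm, sum_comm]
  refine sum_congr rfl fun g hg => ?_
  have hg0 : 0 < g := Nat.pos_of_mem_divisors hg
  rw [sum_Icc_multiples D g hg0]
  · refine sum_congr rfl fun q hq => ?_
    rw [sum_Icc_multiples (A (g * q)) g hg0, sum_filter]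
    · refine sum_congr rfl fun a _ => ?_
      rw [Nat.gcd_mul_left]
      refine if_congr ?_ rfl rfl
      rw [Nat.Coprime]
      exact ⟨fun h => Nat.eq_of_mul_eq_mul_left hg0 (by rw [h, mul_one]), fun h => by rw [h, mul_one]⟩
    · intro a _ hga
      refine if_neg fun h => hga ?_
      rw [← h]
      exact Nat.gcd_dvd_left _ _
  · intro d _ hgd
    refine sum_eq_zero fun a _ => if_neg fun h => hgd ?_
    rw [← h]
    exact Nat.gcd_dvd_right _ _

theorem cnt_eq_zero (h d a M : ℕ) (hg : ¬ a.gcd d ∣ h) : cnt h d a M = 0 := by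
  rw [cnt, Finset.card_eq_zero, Finset.filter_eq_empty_iff]
  intro b _ hb
  refine hg ((Nat.ModEq.dvd_iff hb (Nat.gcd_dvd_right a d)).1 ?_)
  exact (Nat.gcd_dvd_left a d).mul_right b

/-- After dividing out `g = gcd (g * a, g * q)`, the congruence reads `b ≡ l * a⁻¹` modulo `q`, and
counting gives two sawtooth values. -/
theorem cnt_eq (l g q a : ℕ) (hg : 0 < g) (hq : 0 < q) (haq : a.Coprime q) (y : ℝ) (hy : 0 ≤ y) :
    (cnt (g * l) (g * q) (g * a) ⌊y⌋₊ : ℝ) =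
      y / q - saw (y / q - (((l : ZMod q) * (a : ZMod q)⁻¹ : ZMod q).val : ℝ) / q) +
        saw (0 - (((l : ZMod q) * (a : ZMod q)⁻¹ : ZMod q).val : ℝ) / q) := by
  haveI : NeZero q := ⟨hq.ne'⟩
  rw [← count_residue q _ hq y hy, cnt]
  congr 2
  ext b
  refine Finset.mem_filter.trans (Iff.trans ?_ Finset.mem_filter.symm)
  refine and_congr_right fun _ => ?_
  rw [mul_assoc, Nat.ModEq, Nat.mul_mod_mul_left, Nat.mul_mod_mul_left,
    Nat.mul_right_inj hg.ne']
  change a * b ≡ l [MOD q] ↔ _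
  rw [← ZMod.natCast_eq_natCast_iff, ← ZMod.natCast_eq_natCast_iff, ZMod.natCast_zmod_val]
  have hu : (a : ZMod q) * (a : ZMod q)⁻¹ = 1 := ZMod.coe_mul_inv_eq_one a haq
  push_cast
  constructor
  · intro h
    rw [← h]
    linear_combination (-(b : ZMod q)) * hu
  · intro h
    rw [h]
    linear_combination (l : ZMod q) * hu

open Finset in
/-- The main term of the count of `a b ≡ h` modulo `g q` with `a b ≤ z` and `gcd (a, g q) = g`. -/
noncomputable def mainM (z : ℝ) (g q : ℕ) : ℝ :=
  ∑ a ∈ Icc 1 ⌊√z / g⌋₊ with a.Coprime q, (2 * (z / (g * a) / q) - √z / q)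

open Finset in
/-- The divisor sums in progressions modulo all `d ≤ v ^ 6`, with a cutoff `z d` that may depend on
`d`, equal their main terms up to sawtooth sums, which `saw_initial_le` bounds for each `g ∣ h`. The
hypothesis `hΛ` bounds by `Λ` every divisor function that occurs. -/
theorem progTau_sum_le (v Λ : ℝ) (hv : 1 ≤ v) (hΛ1 : 1 + 12 * Real.log v ≤ Λ)
    (hΛ : ∀ n : ℕ, 0 < n → (n : ℝ) ≤ 100 * v ^ 36 → (n.divisors.card : ℝ) ≤ Λ)
    (h : ℕ) (hh : 0 < h) (hhv : (h : ℝ) ≤ v ^ 6) (z : ℕ → ℝ)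
    (hz : ∀ d ∈ Icc 1 ⌊v ^ 6⌋₊, 0 ≤ z d ∧ z d ≤ v ^ 12) :
    |∑ d ∈ Icc 1 ⌊v ^ 6⌋₊, progTau h d ⌊z d⌋₊ -
      ∑ g ∈ h.divisors, ∑ q ∈ Icc 1 (⌊v ^ 6⌋₊ / g), mainM (z (g * q)) g q| ≤
      5600 * Λ ^ 8 * v ^ 10 := by
  have hv0 : 0 < v := by linarith
  have hv6 : 0 ≤ v ^ 6 := by positivity
  have e1 : ∑ d ∈ Icc 1 ⌊v ^ 6⌋₊, progTau h d ⌊z d⌋₊ =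
      ∑ d ∈ Icc 1 ⌊v ^ 6⌋₊, ∑ a ∈ Icc 1 ⌊√(z d)⌋₊,
        (2 * (cnt h d a ⌊z d / a⌋₊ : ℝ) - (cnt h d a ⌊√(z d)⌋₊ : ℝ)) := by
    refine sum_congr rfl fun d hd => ?_
    rw [progTau_eq h d (z d) (hz d hd).1, sum_sub_distrib, mul_sum]
  rw [e1, sum_gcd_reindex h _ hh (fun d => ⌊√(z d)⌋₊)
    (fun d a => 2 * (cnt h d a ⌊z d / a⌋₊ : ℝ) - (cnt h d a ⌊√(z d)⌋₊ : ℝ)), ← sum_sub_distrib]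
  swap
  · intro d a _ _ hga
    simp only [cnt_eq_zero h d a _ hga]
    simp
  have hcard : (h.divisors.card : ℝ) ≤ Λ := by
    refine hΛ h hh (hhv.trans ?_)
    calc v ^ 6 = 1 * v ^ 6 := (one_mul _).symm
      _ ≤ 100 * v ^ 36 := by gcongr <;> norm_num
  have hΛ0 : 0 < Λ := by
    have := Real.log_nonneg hv
    linarith
  have hB : 0 ≤ 5600 * Λ ^ 7 * v ^ 10 := by positivity
  refine (abs_sum_le_sum_abs _ _).trans ((sum_le_card_nsmul _ _ (5600 * Λ ^ 7 * v ^ 10) ?_).trans ?_)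
  swap
  · rw [nsmul_eq_mul]
    calc (h.divisors.card : ℝ) * (5600 * Λ ^ 7 * v ^ 10) ≤ Λ * (5600 * Λ ^ 7 * v ^ 10) :=
          mul_le_mul_of_nonneg_right hcard hB
      _ = _ := by ring
  intro g hg
  have hg0 : 0 < g := Nat.pos_of_mem_divisors hg
  have hg1 : (1 : ℝ) ≤ g := by exact_mod_cast hg0
  obtain ⟨l, rfl⟩ := Nat.dvd_of_mem_divisors hg
  have hl0 : 0 < l := Nat.pos_of_mul_pos_left hh
  obtain ⟨Q, hQ⟩ : ∃ Q, Q = ⌊v ^ 6⌋₊ / g := ⟨_, rfl⟩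
  rw [← hQ]
  have hQv : (Q : ℝ) ≤ v ^ 6 := by
    rw [hQ]
    refine le_trans ?_ (Nat.floor_le hv6)
    exact_mod_cast Nat.div_le_self _ _
  have hlv : (l : ℝ) ≤ v ^ 12 := by
    have h1 : (l : ℝ) ≤ (g * l : ℕ) := by exact_mod_cast Nat.le_mul_of_pos_left l hg0
    refine h1.trans (hhv.trans ?_)
    gcongr <;> norm_num
  have hzq : ∀ q ∈ Icc 1 Q, 0 ≤ z (g * q) ∧ z (g * q) ≤ v ^ 12 := by
    intro q hq
    rw [mem_Icc] at hq
    refine hz _ (mem_Icc.2 ⟨Nat.mul_pos hg0 hq.1, ?_⟩)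
    refine (Nat.mul_le_mul_left g hq.2).trans ?_
    rw [hQ]
    exact Nat.mul_div_le _ _
  have hV : ∀ q ∈ Icc 1 Q, ((⌊√(z (g * q)) / g⌋₊ : ℕ) : ℝ) ≤ 2 * v ^ 6 := by
    intro q hq
    refine (Nat.floor_le (by positivity)).trans ?_
    refine (div_le_self (Real.sqrt_nonneg _) hg1).trans ?_
    have : √(z (g * q)) ≤ v ^ 6 := Real.sqrt_le_iff.2 ⟨hv6, by
      rw [← pow_mul]; exact (hzq q hq).2⟩
    linarith
  have s0 := saw_initial_le v Λ hv hΛ1 hΛ Q l hQv hl0 hlv (fun q => ⌊√(z (g * q)) / g⌋₊)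
    (fun _ => 0) (fun _ => 0) hV (fun _ _ => le_rfl) (fun _ _ => by rw [zero_mul]; positivity)
  have s1 := saw_initial_le v Λ hv hΛ1 hΛ Q l hQv hl0 hlv (fun q => ⌊√(z (g * q)) / g⌋₊)
    (fun q => z (g * q) / (g * q)) (fun _ => 0) hV
    (fun q hq => by have := (hzq q hq).1; positivity)
    (fun q hq => by
      have h0 := hzq q hq
      have hq0 : (q : ℝ) ≠ 0 := by
        have := (mem_Icc.1 hq).1
        positivity
      rw [← div_div, div_mul_cancel₀ _ hq0]
      have := div_le_self h0.1 hg1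
      linarith)
  have s2 := saw_initial_le v Λ hv hΛ1 hΛ Q l hQv hl0 hlv (fun q => ⌊√(z (g * q)) / g⌋₊)
    (fun _ => 0) (fun q => √(z (g * q)) / q) hV (fun _ _ => le_rfl)
    (fun _ _ => by rw [zero_mul]; positivity)
  have hdiff : ∀ q ∈ Icc 1 Q,
      ∑ a ∈ Icc 1 (⌊√(z (g * q))⌋₊ / g) with a.Coprime q,
        (2 * (cnt (g * l) (g * q) (g * a) ⌊z (g * q) / ((g * a : ℕ) : ℝ)⌋₊ : ℝ) -
          (cnt (g * l) (g * q) (g * a) ⌊√(z (g * q))⌋₊ : ℝ)) - mainM (z (g * q)) g q =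
      (∑ a ∈ Icc 1 ⌊√(z (g * q)) / g⌋₊ with a.Coprime q,
        saw (0 / a + 0 - (((l : ZMod q) * (a : ZMod q)⁻¹ : ZMod q).val : ℝ) / q)) -
      2 * (∑ a ∈ Icc 1 ⌊√(z (g * q)) / g⌋₊ with a.Coprime q,
        saw (z (g * q) / (g * q) / a + 0 - (((l : ZMod q) * (a : ZMod q)⁻¹ : ZMod q).val : ℝ) / q)) +
      ∑ a ∈ Icc 1 ⌊√(z (g * q)) / g⌋₊ with a.Coprime q,
        saw (0 / a + √(z (g * q)) / q - (((l : ZMod q) * (a : ZMod q)⁻¹ : ZMod q).val : ℝ) / q) := by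
    intro q hq
    have hq0 : 0 < q := (mem_Icc.1 hq).1
    rw [mainM, ← Nat.floor_div_natCast, ← sum_sub_distrib, mul_sum, ← sum_sub_distrib,
      ← sum_add_distrib]
    refine sum_congr rfl fun a ha => ?_
    rw [mem_filter] at ha
    have hz0 := (hzq q hq).1
    rw [cnt_eq l g q a hg0 hq0 ha.2 _ (by positivity), cnt_eq l g q a hg0 hq0 ha.2 _ (by positivity)]
    have e2 : z (g * q) / ((g * a : ℕ) : ℝ) / q = z (g * q) / (g * q) / a := by
      push_cast
      rw [div_div, div_div]
      congr 1
      ring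
    rw [e2]
    have e3 : z (g * q) / (g * (a : ℝ)) / q = z (g * q) / (g * q) / a := by
      rw [div_div, div_div]
      congr 1
      ring
    rw [e3]
    simp only [zero_div, add_zero, zero_add]
    ring
  rw [← sum_sub_distrib, sum_congr rfl hdiff, sum_add_distrib, sum_sub_distrib, ← mul_sum]
  have t0 := (abs_sum_le_sum_abs _ _).trans s0
  have t1 := (abs_sum_le_sum_abs _ _).trans s1
  have t2 := (abs_sum_le_sum_abs _ _).trans s2
  rw [abs_le] at t0 t1 t2 ⊢
  constructor <;> linarith [t0.1, t0.2, t1.1, t1.2, t2.1, t2.2]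

/-! ### Combining the main terms -/

open Finset ArithmeticFunction.Moebius in
/-- Möbius inversion, written as a sum over the divisors of `q`. -/
theorem coprime_indicator (a q : ℕ) (ha : 0 < a) (hq : 0 < q) :
    (if a.Coprime q then (1 : ℝ) else 0) = ∑ e ∈ q.divisors, if e ∣ a then (μ e : ℝ) else 0 := by
  rw [← sum_filter]
  have h1 : {e ∈ q.divisors | e ∣ a} = (a.gcd q).divisors := by
    ext e
    simp only [mem_filter, Nat.mem_divisors, Nat.dvd_gcd_iff]
    have : a.gcd q ≠ 0 := (Nat.gcd_pos_of_pos_left _ ha).ne'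
    have hq' := hq.ne'
    tauto
  rw [h1]
  have h2 := DFunLike.congr_fun ArithmeticFunction.moebius_mul_coe_zeta (a.gcd q)
  rw [ArithmeticFunction.coe_mul_zeta_apply, ArithmeticFunction.one_apply] at h2
  have h3 : (∑ e ∈ (a.gcd q).divisors, (μ e : ℝ)) = if a.gcd q = 1 then 1 else 0 := by
    exact_mod_cast h2
  rw [h3]

open Finset ArithmeticFunction.Moebius in
/-- Möbius removal of the coprimality of `a` and `q`; each divisor `e` of `q` contributes an error
`O(√z / q)` from its harmonic sum and from rounding. -/
theorem mainM_bound (z : ℝ) (hz : 0 < z) (g q : ℕ) (hg : 0 < g) (hq : 0 < q) :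
    |mainM z g q - ∑ e ∈ q.divisors, (μ e : ℝ) * (√z / q * (√z / (g * e) *
      (2 * Real.log (√z / (g * e)) + (2 * Real.eulerMascheroniConstant - 1))))| ≤
      5 * √z * (q.divisors.card / q) := by
  have hs : 0 < √z := Real.sqrt_pos.2 hz
  have hg0 : (0 : ℝ) < g := by exact_mod_cast hg
  have hq0 : (0 : ℝ) < q := by exact_mod_cast hq
  have e1 : mainM z g q = ∑ e ∈ q.divisors, (μ e : ℝ) * (√z / q *
      (2 * (√z / (g * e)) * ∑ f ∈ Icc 1 ⌊√z / (g * e)⌋₊, 1 / (f : ℝ) - ⌊√z / (g * e)⌋₊)) := by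
    have e2 : mainM z g q = ∑ a ∈ Icc 1 ⌊√z / g⌋₊, ∑ e ∈ q.divisors,
        (if e ∣ a then (μ e : ℝ) * (2 * (z / (g * a) / q) - √z / q) else 0) := by
      rw [mainM, sum_filter]
      refine sum_congr rfl fun a ha => ?_
      rw [← mul_boole, coprime_indicator a q (mem_Icc.1 ha).1 hq, mul_sum]
      refine sum_congr rfl fun e _ => ?_
      split_ifs <;> ring
    rw [e2, sum_comm]
    refine sum_congr rfl fun e he => ?_
    have he0 : 0 < e := Nat.pos_of_mem_divisors he
    have he1 : (0 : ℝ) < e := by exact_mod_cast he0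
    rw [sum_Icc_multiples _ e he0 (fun a => if e ∣ a then (μ e : ℝ) * (2 * (z / (g * a) / q) - √z / q) else 0)
      (fun d _ hd => if_neg hd), ← Nat.floor_div_natCast, div_div]
    have e3 : ((⌊√z / (g * e)⌋₊ : ℕ) : ℝ) = ∑ f ∈ Icc 1 ⌊√z / ((g : ℝ) * e)⌋₊, (1 : ℝ) := by
      rw [sum_const, Nat.card_Icc, nsmul_one, Nat.add_sub_cancel]
    rw [e3, mul_sum, ← sum_sub_distrib, mul_sum, mul_sum]
    refine sum_congr rfl fun f hf => ?_
    have hf0 : (f : ℝ) ≠ 0 := by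
      have := (mem_Icc.1 hf).1
      positivity
    rw [if_pos (Dvd.intro f rfl)]
    have hzz : z = √z * √z := (Real.mul_self_sqrt hz.le).symm
    generalize √z = s at *
    rw [hzz]
    push_cast
    field_simp
  rw [e1, ← sum_sub_distrib]
  refine (abs_sum_le_sum_abs _ _).trans ((sum_le_card_nsmul _ _ (5 * √z / q) ?_).trans (le_of_eq ?_))
  swap
  · rw [nsmul_eq_mul]; ring
  intro e he
  have he0 : 0 < e := Nat.pos_of_mem_divisors he
  have he1 : (0 : ℝ) < e := by exact_mod_cast he0
  obtain ⟨w, hw⟩ : ∃ w, w = √z / (g * e) := ⟨_, rfl⟩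
  have hw0 : 0 < w := by rw [hw]; positivity
  rw [← hw]
  have hH := harmonic_real_bound w hw0
  have hn1 := Nat.floor_le hw0.le
  have hn2 := Nat.lt_floor_add_one w
  generalize ∑ f ∈ Icc 1 ⌊w⌋₊, 1 / (f : ℝ) = H at *
  generalize ((⌊w⌋₊ : ℕ) : ℝ) = n at *
  have hμ : |(μ e : ℝ)| ≤ 1 := by exact_mod_cast ArithmeticFunction.abs_moebius_le_one
  have e4 : (μ e : ℝ) * (√z / q * (2 * w * H - n)) - (μ e : ℝ) * (√z / q * (w *
      (2 * Real.log w + (2 * Real.eulerMascheroniConstant - 1)))) =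
      (μ e : ℝ) * (√z / q * (2 * w * (H - (Real.log w + Real.eulerMascheroniConstant)) + (w - n))) := by
    ring
  rw [e4, abs_mul, abs_mul, abs_of_pos (by positivity : 0 < √z / q)]
  have h5 : |2 * w * (H - (Real.log w + Real.eulerMascheroniConstant)) + (w - n)| ≤ 5 := by
    refine (abs_add_le _ _).trans ?_
    rw [abs_mul, abs_of_pos (by positivity : 0 < 2 * w), abs_of_nonneg (by linarith : 0 ≤ w - n)]
    have : 2 * w * |H - (Real.log w + Real.eulerMascheroniConstant)| ≤ 2 * w * (2 / w) := by gcongr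
    have h6 : 2 * w * (2 / w) = 4 := by field_simp; norm_num
    linarith
  calc |(μ e : ℝ)| * (√z / q * _) ≤ 1 * (√z / q * 5) := by gcongr
    _ = _ := by ring

open Finset in
theorem sum_divisors_swap (N : ℕ) (F : ℕ → ℕ → ℝ) :
    ∑ q ∈ Icc 1 N, ∑ e ∈ q.divisors, F e q = ∑ e ∈ Icc 1 N, ∑ f ∈ Icc 1 (N / e), F e (e * f) := by
  have h1 : ∀ q ∈ Icc 1 N, ∑ e ∈ q.divisors, F e q = ∑ e ∈ Icc 1 N, if e ∣ q then F e q else 0 := by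
    intro q hq
    rw [mem_Icc] at hq
    rw [← sum_filter]
    refine sum_congr ?_ fun _ _ => rfl
    ext e
    simp only [Nat.mem_divisors, mem_filter, mem_Icc]
    constructor
    · rintro ⟨h, -⟩
      exact ⟨⟨Nat.pos_of_dvd_of_pos h hq.1, (Nat.le_of_dvd hq.1 h).trans hq.2⟩, h⟩
    · rintro ⟨-, h⟩
      exact ⟨h, by omega⟩
  rw [sum_congr rfl h1, sum_comm]
  refine sum_congr rfl fun e he => ?_
  have he0 : 0 < e := (mem_Icc.1 he).1
  rw [sum_Icc_multiples N e he0 (fun q => if e ∣ q then F e q else 0) (fun d _ hd => if_neg hd)]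
  refine sum_congr rfl fun f _ => if_pos (Dvd.intro f rfl)

open Finset ArithmeticFunction.Moebius in
/-- The combined main terms attached to one divisor `g` of `h`. -/
theorem mainM_combined (g : ℕ) (hg : 0 < g) (Y Λ : ℝ) (hY : 1 ≤ Y) (N : ℕ) (hN : N = ⌊Y⌋₊ / g)
    (hΛ1 : 1 + Real.log Y ≤ Λ) (hΛ : ∀ n ∈ Icc 1 N, (n.divisors.card : ℝ) ≤ Λ) :
    |∑ q ∈ Icc 1 N, (2 * mainM (Y ^ 2) g q - mainM (Y * ((g * q : ℕ) : ℝ)) g q) -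
      Y ^ 2 * (1 / g * ∑ e ∈ Icc 1 N, (μ e : ℝ) / (e : ℝ) ^ 2 * innerI (Y / (g * e)))| ≤
      15 * Λ ^ 2 * Y := by
  have hY0 : 0 < Y := by linarith
  have hg0 : (0 : ℝ) < g := by exact_mod_cast hg
  have hlY := Real.log_nonneg hY
  have hΛ0 : 0 < Λ := by linarith
  have hNY : (N : ℝ) ≤ Y := by
    rw [hN]
    refine le_trans ?_ (Nat.floor_le hY0.le)
    exact_mod_cast Nat.div_le_self _ _
  obtain ⟨M, hM⟩ : ∃ M : ℝ → ℕ → ℕ → ℝ, M = fun (z : ℝ) (e q : ℕ) => (μ e : ℝ) * (√z / (q : ℝ) * (√z / (g * e) *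
      (2 * Real.log (√z / (g * e)) + (2 * Real.eulerMascheroniConstant - 1)))) := ⟨_, rfl⟩
  have e1 : Y ^ 2 * (1 / g * ∑ e ∈ Icc 1 N, (μ e : ℝ) / (e : ℝ) ^ 2 * innerI (Y / (g * e))) =
      ∑ q ∈ Icc 1 N, ∑ e ∈ q.divisors, (2 * M (Y ^ 2) e q - M (Y * ((g * q : ℕ) : ℝ)) e q) := by
    rw [sum_divisors_swap N (fun e q => 2 * M (Y ^ 2) e q - M (Y * ((g * q : ℕ) : ℝ)) e q), mul_sum, mul_sum]
    refine sum_congr rfl fun e he => ?_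
    have he0 : (0 : ℝ) < e := by exact_mod_cast (mem_Icc.1 he).1
    obtain ⟨U, hU⟩ : ∃ U, U = Y / (g * e) := ⟨_, rfl⟩
    have hU0 : 0 < U := by rw [hU]; positivity
    have hYU : Y = g * e * U := by rw [hU]; field_simp
    rw [hN, ← Nat.floor_div_natCast, ← Nat.floor_div_natCast, div_div, innerI, ← hU]
    simp only [mul_sum, ← sum_sub_distrib]
    refine sum_congr rfl fun f hf => ?_
    have hf0 : (0 : ℝ) < f := by exact_mod_cast (mem_Icc.1 hf).1
    have hz1 : √(Y ^ 2) = Y := Real.sqrt_sq hY0.le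
    obtain ⟨z, hz⟩ : ∃ z, z = Y * ((g * (e * f) : ℕ) : ℝ) := ⟨_, rfl⟩
    have hz0 : 0 < z := by rw [hz]; push_cast; positivity
    have hzs := Real.mul_self_sqrt hz0.le
    have hs0 : 0 < √z := Real.sqrt_pos.2 hz0
    have hlog : 2 * Real.log (√z / (g * e)) = Real.log U + Real.log f := by
      rw [← Real.log_mul hU0.ne' hf0.ne', ← Real.log_rpow (by positivity)]
      congr 1
      norm_num
      rw [div_pow, sq, hzs, hz, hU]
      push_cast
      field_simp
    simp only [hM]
    rw [hz1, ← hz, hlog, ← hU]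
    have hz' : √z / ((e * f : ℕ) : ℝ) * (√z / (g * e) * (Real.log U + Real.log f +
        (2 * Real.eulerMascheroniConstant - 1))) = Y / e * (Real.log U + Real.log f +
        (2 * Real.eulerMascheroniConstant - 1)) := by
      have : √z / ((e * f : ℕ) : ℝ) * (√z / (g * e)) = Y / e := by
        rw [div_mul_div_comm, hzs, hz]
        push_cast
        field_simp
      rw [← mul_assoc, this]
    rw [hz']
    generalize Real.log U = x
    generalize Real.log (f : ℝ) = y
    push_cast
    rw [hYU]
    field_simp
    try ring
  rw [e1, ← sum_sub_distrib]
  have h1 : ∀ q ∈ Icc 1 N, |2 * mainM (Y ^ 2) g q - mainM (Y * ((g * q : ℕ) : ℝ)) g q -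
      ∑ e ∈ q.divisors, (2 * M (Y ^ 2) e q - M (Y * ((g * q : ℕ) : ℝ)) e q)| ≤
      15 * Y * Λ * (1 / q) := by
    intro q hq
    have hq' := mem_Icc.1 hq
    have hq0 : (0 : ℝ) < q := by exact_mod_cast hq'.1
    have b1 := mainM_bound (Y ^ 2) (by positivity) g q hg hq'.1
    have b2 := mainM_bound (Y * ((g * q : ℕ) : ℝ)) (by push_cast; positivity) g q hg hq'.1
    have hz1 : √(Y ^ 2) = Y := Real.sqrt_sq hY0.le
    have hz2 : √(Y * ((g * q : ℕ) : ℝ)) ≤ Y := by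
      refine Real.sqrt_le_iff.2 ⟨hY0.le, ?_⟩
      rw [sq]
      have : ((g * q : ℕ) : ℝ) ≤ Y := by
        refine le_trans ?_ (Nat.floor_le hY0.le)
        have h3 := Nat.mul_le_mul_left g hq'.2
        rw [hN] at h3
        exact_mod_cast h3.trans (Nat.mul_div_le _ _)
      gcongr
    have hτ : (q.divisors.card : ℝ) / q ≤ Λ * (1 / q) := by
      rw [mul_one_div]
      gcongr
      exact hΛ q hq
    have hτ0 : 0 ≤ (q.divisors.card : ℝ) / q := div_nonneg (Nat.cast_nonneg _) hq0.le
    have b1' := b1.trans (mul_le_mul_of_nonneg_left hτ (by positivity))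
    have b2' := (b2.trans (mul_le_mul_of_nonneg_right (mul_le_mul_of_nonneg_left hz2
      (by norm_num)) hτ0)).trans (mul_le_mul_of_nonneg_left hτ (by positivity))
    rw [hz1] at b1'
    rw [sum_sub_distrib, ← mul_sum]
    simp only [hM]
    rw [hz1]
    rw [abs_le] at b1' b2' ⊢
    constructor <;> linarith [b1'.1, b1'.2, b2'.1, b2'.2]
  refine (abs_sum_le_sum_abs _ _).trans ((sum_le_sum h1).trans ?_)
  rw [← mul_sum]
  have h2 : ∑ q ∈ Icc 1 N, 1 / (q : ℝ) ≤ Λ := by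
    refine (sum_Icc_inv_le N).trans (le_trans ?_ hΛ1)
    rcases Nat.eq_zero_or_pos N with h0 | h0
    · rw [h0]; simp; exact hlY
    · have : Real.log N ≤ Real.log Y := Real.log_le_log (by exact_mod_cast h0) hNY
      linarith
  calc 15 * Y * Λ * ∑ q ∈ Icc 1 N, 1 / (q : ℝ) ≤ 15 * Y * Λ * Λ := by gcongr
    _ = _ := by ring

/-! ### The correlation asymptotic -/

theorem tauk_two (n : ℕ) (hn : 0 < n) : tauk 2 n = n.divisors.card := by
  rw [tauk]
  refine Finset.card_bij' (fun f _ => f 0) (fun d _ => ![d, n / d]) ?_ ?_ ?_ ?_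
  · intro f hf
    rw [Finset.mem_filter, Fintype.mem_piFinset] at hf
    exact hf.1 0
  · intro d hd
    have hd' := Nat.dvd_of_mem_divisors hd
    rw [Finset.mem_filter, Fintype.mem_piFinset, Fin.prod_univ_two, Fin.forall_fin_two]
    refine ⟨⟨hd, ?_⟩, Nat.mul_div_cancel' hd'⟩
    exact Nat.mem_divisors.2 ⟨Nat.div_dvd_of_dvd hd', hn.ne'⟩
  · intro f hf
    rw [Finset.mem_filter, Fintype.mem_piFinset, Fin.prod_univ_two] at hf
    have h0 : 0 < f 0 := Nat.pos_of_mem_divisors (hf.1 0)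
    have h1 : n / f 0 = f 1 := Nat.div_eq_of_eq_mul_right h0 hf.2.symm
    funext i
    fin_cases i
    · rfl
    · exact h1
  · intro d hd
    rfl

open Finset ArithmeticFunction.Moebius in
/-- The asymptotic at `X = v ^ 12`, with the error expressed through a bound `Λ` for `1 + log X` and
for the divisor functions involved. -/
theorem correlation_core : ∃ C : ℝ, 0 < C ∧ ∀ v Λ : ℝ, 1 ≤ v → 1 + 12 * Real.log v ≤ Λ →
    (∀ n : ℕ, 0 < n → (n : ℝ) ≤ 100 * v ^ 36 → (n.divisors.card : ℝ) ≤ Λ) →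
    ∀ h : ℕ, 0 < h → (h : ℝ) ≤ v ^ 6 →
    |(∑ n ∈ Icc 1 ⌊v ^ 12⌋₊, (n.divisors.card : ℝ) * ((n + h).divisors.card : ℝ)) -
      v ^ 12 * (c2 h * (12 * Real.log v) ^ 2 + (∑ g ∈ h.divisors, coefOne g / g) * (12 * Real.log v)
        + ∑ g ∈ h.divisors, coefZero g / g)| ≤ C * Λ ^ 8 * v ^ 10 := by
  obtain ⟨C, hC0, hC⟩ := truncated_main
  refine ⟨17000 + C, by linarith, ?_⟩
  intro v Λ hv hΛ1 hΛ h hh hhv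
  have hv0 : 0 < v := by linarith
  have hlv := Real.log_nonneg hv
  have hΛone : 1 ≤ Λ := by linarith
  have hY : (1 : ℝ) ≤ v ^ 6 := one_le_pow₀ hv
  have hX : (1 : ℝ) ≤ v ^ 12 := one_le_pow₀ hv
  have h12 : v ^ 12 = v ^ 6 * v ^ 6 := by ring
  have hsq : √(v ^ 12) = v ^ 6 := by rw [h12, Real.sqrt_mul_self (by positivity)]
  have hv12_36 : v ^ 12 ≤ v ^ 36 := pow_le_pow_right₀ hv (by norm_num)
  have hlog12 : Real.log (v ^ 12) = 12 * Real.log v := by rw [Real.log_pow]; norm_num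
  have hlog6 : Real.log (v ^ 6) = 6 * Real.log v := by rw [Real.log_pow]; norm_num
  have t1 := correlation_eq h (v ^ 12) Λ hX (by rw [hsq]; exact hhv) (by rw [hlog12]; exact hΛ1)
    (fun n hn hn2 => hΛ n hn (by linarith))
  rw [hsq] at t1
  have t2 := progTau_sum_le v Λ hv hΛ1 hΛ h hh hhv (fun _ => v ^ 12)
    (fun d _ => ⟨by positivity, le_rfl⟩)
  have t3 := progTau_sum_le v Λ hv hΛ1 hΛ h hh hhv (fun d => v ^ 6 * d) (fun d hd => by
    refine ⟨by positivity, ?_⟩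
    rw [h12]
    have : (d : ℝ) ≤ v ^ 6 := (Nat.cast_le.2 (mem_Icc.1 hd).2).trans (Nat.floor_le (by positivity))
    exact mul_le_mul_of_nonneg_left this (by positivity))
  -- the contribution of one divisor `g` of `h`
  have t4 : ∀ g ∈ h.divisors,
      |∑ q ∈ Icc 1 (⌊v ^ 6⌋₊ / g), (2 * mainM (v ^ 12) g q - mainM (v ^ 6 * ((g * q : ℕ) : ℝ)) g q) -
        v ^ 12 * (1 / g * (6 / Real.pi ^ 2 * (12 * Real.log v) ^ 2 + coefOne g * (12 * Real.log v) +
          coefZero g))| ≤ (15 + C) * Λ ^ 2 * v ^ 9 := by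
    intro g hg
    have hg0 : 0 < g := Nat.pos_of_mem_divisors hg
    have hg1 : (1 : ℝ) ≤ g := by exact_mod_cast hg0
    have m1 := mainM_combined g hg0 (v ^ 6) Λ hY _ rfl (by rw [hlog6]; linarith) (fun n hn => by
      refine hΛ n (mem_Icc.1 hn).1 ?_
      have a1 : (n : ℝ) ≤ v ^ 6 := by
        refine le_trans ?_ (Nat.floor_le (by positivity : (0 : ℝ) ≤ v ^ 6))
        exact_mod_cast (mem_Icc.1 hn).2.trans (Nat.div_le_self _ _)
      have a2 : v ^ 6 ≤ v ^ 36 := pow_le_pow_right₀ hv (by norm_num)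
      have a3 : 0 < v ^ 36 := by positivity
      linarith)
    have m2 := hC g hg0 (v ^ 6) (by positivity) (⌊v ^ 6⌋₊ / g) (Nat.floor_div_natCast _ _).symm
    have hl : 2 * Real.log (v ^ 6) = 12 * Real.log v := by rw [hlog6]; ring
    rw [hl] at m2
    have h66 : (v ^ 6) ^ 2 = v ^ 12 := by ring
    rw [h66] at m1
    have hgs : √((g : ℝ) / v ^ 6) = √g / v ^ 3 := by
      rw [Real.sqrt_div (by positivity)]
      congr 1
      rw [show v ^ 6 = v ^ 3 * v ^ 3 by ring, Real.sqrt_mul_self (by positivity)]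
    rw [hgs] at m2
    have m3 : |v ^ 12 * (1 / g * ∑ e ∈ Icc 1 (⌊v ^ 6⌋₊ / g), (μ e : ℝ) / (e : ℝ) ^ 2 *
        innerI (v ^ 6 / (g * e))) - v ^ 12 * (1 / g * (6 / Real.pi ^ 2 * (12 * Real.log v) ^ 2 +
          coefOne g * (12 * Real.log v) + coefZero g))| ≤ C * v ^ 9 := by
      rw [← mul_sub, ← mul_sub, abs_mul, abs_mul, abs_of_pos (by positivity : 0 < v ^ 12),
        abs_of_pos (by positivity : (0 : ℝ) < 1 / g)]
      calc _ ≤ v ^ 12 * (1 / g * (C * (√g / v ^ 3))) := by gcongr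
        _ = C * v ^ 9 * (√g / g) := by field_simp
        _ ≤ C * v ^ 9 * 1 := by
          gcongr
          rw [div_le_one (by positivity)]
          exact Real.sqrt_le_iff.2 ⟨by positivity, by nlinarith⟩
        _ = _ := mul_one _
    have m4 : 15 * Λ ^ 2 * v ^ 6 ≤ 15 * Λ ^ 2 * v ^ 9 := by gcongr; norm_num
    have m5 : C * v ^ 9 ≤ C * Λ ^ 2 * v ^ 9 := by
      have : 1 ≤ Λ ^ 2 := one_le_pow₀ hΛone
      have : C * 1 ≤ C * Λ ^ 2 := by gcongr
      have h9 : 0 ≤ v ^ 9 := by positivity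
      nlinarith
    refine (abs_sub_le _ _ _).trans ((add_le_add m1 m3).trans ?_)
    linarith
  have hcard : (h.divisors.card : ℝ) ≤ Λ := hΛ h hh (by
    have a2 : v ^ 6 ≤ v ^ 36 := pow_le_pow_right₀ hv (by norm_num)
    have a3 : 0 < v ^ 36 := by positivity
    linarith)
  have t5 := (abs_sum_le_sum_abs (fun g : ℕ => ∑ q ∈ Icc 1 (⌊v ^ 6⌋₊ / g),
      (2 * mainM (v ^ 12) g q - mainM (v ^ 6 * ((g * q : ℕ) : ℝ)) g q) -
        v ^ 12 * (1 / g * (6 / Real.pi ^ 2 * (12 * Real.log v) ^ 2 + coefOne g * (12 * Real.log v) +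
          coefZero g))) h.divisors).trans (sum_le_card_nsmul _ _ _ t4)
  rw [nsmul_eq_mul] at t5
  have t6 : (h.divisors.card : ℝ) * ((15 + C) * Λ ^ 2 * v ^ 9) ≤ Λ * ((15 + C) * Λ ^ 2 * v ^ 9) :=
    mul_le_mul_of_nonneg_right hcard (by positivity)
  have t7 : v ^ 12 * (c2 h * (12 * Real.log v) ^ 2 + (∑ g ∈ h.divisors, coefOne g / g) *
      (12 * Real.log v) + ∑ g ∈ h.divisors, coefZero g / g) = ∑ g ∈ h.divisors,
      v ^ 12 * (1 / g * (6 / Real.pi ^ 2 * (12 * Real.log v) ^ 2 + coefOne g * (12 * Real.log v) +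
          coefZero g)) := by
    rw [c2, mul_sum, sum_mul, sum_mul, ← sum_add_distrib, ← sum_add_distrib, mul_sum]
    refine sum_congr rfl fun g _ => ?_
    ring
  have t8 : ∑ g ∈ h.divisors, ∑ q ∈ Icc 1 (⌊v ^ 6⌋₊ / g),
      (2 * mainM (v ^ 12) g q - mainM (v ^ 6 * ((g * q : ℕ) : ℝ)) g q) =
      2 * (∑ g ∈ h.divisors, ∑ q ∈ Icc 1 (⌊v ^ 6⌋₊ / g), mainM (v ^ 12) g q) -
      ∑ g ∈ h.divisors, ∑ q ∈ Icc 1 (⌊v ^ 6⌋₊ / g), mainM (v ^ 6 * ((g * q : ℕ) : ℝ)) g q := by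
    rw [mul_sum, ← sum_sub_distrib]
    refine sum_congr rfl fun g _ => ?_
    rw [mul_sum, ← sum_sub_distrib]
  rw [sum_sub_distrib, ← t7, t8] at t5
  have t9 := t5.trans t6
  have u1 : 12 * Λ ^ 2 * v ^ 6 ≤ 12 * (Λ ^ 8 * v ^ 10) := by
    rw [mul_assoc]; gcongr <;> norm_num <;> assumption
  have u2 : Λ * ((15 + C) * Λ ^ 2 * v ^ 9) ≤ (15 + C) * (Λ ^ 8 * v ^ 10) := by
    rw [show Λ * ((15 + C) * Λ ^ 2 * v ^ 9) = (15 + C) * (Λ ^ 3 * v ^ 9) by ring]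
    gcongr <;> norm_num <;> assumption
  have hP : 0 ≤ Λ ^ 8 * v ^ 10 := by positivity
  have hfin : (17000 + C) * Λ ^ 8 * v ^ 10 = (17000 + C) * (Λ ^ 8 * v ^ 10) := by ring
  have hfin2 : 5600 * Λ ^ 8 * v ^ 10 = 5600 * (Λ ^ 8 * v ^ 10) := by ring
  rw [hfin2] at t2 t3
  rw [hfin]
  have u1' := t1.trans u1
  have t9' := t9.trans u2
  rw [add_mul] at t9' ⊢
  rw [abs_le] at u1' t2 t3 t9' ⊢
  constructor
  · linarith [u1'.1, t2.1, t3.2, t9'.1]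
  · linarith [u1'.2, t2.2, t3.1, t9'.2]

theorem tau_correlation_uniform :
    ∃ c1 c0 : ℕ → ℝ, ∀ ε : ℝ, 0 < ε → ∃ C : ℝ, 0 < C ∧ ∀ X : ℝ, 2 ≤ X →
      ∀ h : ℕ, 1 ≤ h → (h : ℝ) ≤ X ^ ((1 : ℝ) / 2) →
        |(∑ n ∈ Finset.Icc 1 ⌊X⌋₊, (tauk 2 n : ℝ) * (tauk 2 (n + h) : ℝ)) -
            X * (c2 h * (Real.log X) ^ 2 + c1 h * Real.log X + c0 h)| ≤
          C * X ^ ((5 : ℝ) / 6 + ε) := by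
  refine ⟨fun h => ∑ g ∈ h.divisors, coefOne g / g, fun h => ∑ g ∈ h.divisors, coefZero g / g, ?_⟩
  intro ε hε
  obtain ⟨C, hC0, hC⟩ := correlation_core
  obtain ⟨D, hD1, hD⟩ := divisor_bound (ε / 24) (by positivity)
  -- `Λ = K * X ^ (ε / 8)` enters to the eighth power; the divisor bound is applied up to `100 * X ^ 3`
  obtain ⟨K, hK⟩ : ∃ K : ℝ, K = D * (100 : ℝ) ^ (ε / 24) + 1 + 8 / ε := ⟨_, rfl⟩
  have hK0 : 0 < K := by rw [hK]; positivity
  refine ⟨C * K ^ 8, by positivity, ?_⟩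
  intro X hX h hh hhX
  have hX0 : 0 < X := by linarith
  have hX1 : 1 ≤ X := by linarith
  obtain ⟨v, hv⟩ : ∃ v : ℝ, v = X ^ ((1 : ℝ) / 12) := ⟨_, rfl⟩
  have hv0 : 0 < v := by rw [hv]; positivity
  have hvp : ∀ k : ℕ, v ^ k = X ^ ((k : ℝ) / 12) := by
    intro k
    rw [hv, ← Real.rpow_natCast, ← Real.rpow_mul hX0.le]
    congr 1
    ring
  have hv12 : v ^ 12 = X := by rw [hvp 12]; norm_num
  have hv1 : 1 ≤ v := by rw [hv]; exact Real.one_le_rpow hX1 (by norm_num)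
  have hlog : 12 * Real.log v = Real.log X := by rw [← hv12, Real.log_pow]; norm_num
  have hE1 : 1 ≤ X ^ (ε / 8) := Real.one_le_rpow hX1 (by positivity)
  have key := hC v (K * X ^ (ε / 8)) hv1 ?_ ?_ h hh ?_
  · rw [hv12, hlog] at key
    have e1 : ∑ n ∈ Finset.Icc 1 ⌊X⌋₊, (tauk 2 n : ℝ) * (tauk 2 (n + h) : ℝ) =
        ∑ n ∈ Finset.Icc 1 ⌊X⌋₊, (n.divisors.card : ℝ) * ((n + h).divisors.card : ℝ) := by
      refine Finset.sum_congr rfl fun n hn => ?_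
      have hn0 : 0 < n := (Finset.mem_Icc.1 hn).1
      rw [tauk_two n hn0, tauk_two (n + h) (by omega)]
    rw [e1]
    refine key.trans (le_of_eq ?_)
    rw [hvp 10, mul_pow, ← Real.rpow_natCast (X ^ (ε / 8)), ← Real.rpow_mul hX0.le, mul_assoc,
      mul_assoc (K ^ 8), ← Real.rpow_add hX0, ← mul_assoc]
    congr 2
    push_cast
    ring
  · rw [hlog]
    have h1 := Real.log_le_rpow_div hX0.le (by positivity : 0 < ε / 8)
    have h2 : X ^ (ε / 8) / (ε / 8) = 8 / ε * X ^ (ε / 8) := by field_simp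
    have h3 : 0 ≤ D * (100 : ℝ) ^ (ε / 24) * X ^ (ε / 8) := by positivity
    rw [hK, add_mul, add_mul]
    linarith
  · intro n hn hn2
    have h36 : v ^ 36 = X ^ (3 : ℝ) := by rw [hvp 36]; norm_num
    have h1 : (n : ℝ) ^ (ε / 24) ≤ (100 : ℝ) ^ (ε / 24) * X ^ (ε / 8) := by
      refine (Real.rpow_le_rpow (Nat.cast_nonneg n) hn2 (by positivity)).trans (le_of_eq ?_)
      rw [Real.mul_rpow (by norm_num) (by positivity), h36, ← Real.rpow_mul hX0.le]
      congr 2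
      ring
    refine (hD n hn).trans ((mul_le_mul_of_nonneg_left h1 (by linarith)).trans ?_)
    rw [← mul_assoc]
    refine mul_le_mul_of_nonneg_right ?_ (by positivity)
    have : 0 < 8 / ε := by positivity
    rw [hK]; linarith
  · rw [hvp 6]
    refine hhX.trans (le_of_eq ?_)
    congr 1
    norm_num
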